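/- Let n ≥ 4 and let L be a Cartan type Lie superalgebra over ℂ, i.e. one of W(n), S(n), S̃(n) (n even), or H(n) (n > 4). Then every superderivation of L is inner in the extended algebra L': Der L = ad L', where L' = L if L = W(n) or S̃(n), L' = S(n) ⊕ ℂ𝒞 if L = S(n), and L' = H̃(n) ⊕ ℂ𝒞 if L = H(n). -/

import Mathlib

open scoped BigOperators

noncomputable section

namespace CartanSuper

/-- Coordinates of the exterior algebra `Λ(n)` with respect to the monomial basis
`{x_S : S ⊆ {1,…,n}}`. -/
abbrev Lambda (n : ℕ) := Finset (Fin n) → ℂ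

/-- Endomorphism algebra of `Λ(n)`. -/
abbrev E (n : ℕ) := Module.End ℂ (Lambda n)

variable (n : ℕ)

/-- `(−1)^k`. -/
def msign (k : ℕ) : ℂ := (-1 : ℂ) ^ k

/-- The basis monomial `x_S = x_{i₁}⋯x_{i_k}` (indices in increasing order). -/
def mono (S : Finset (Fin n)) : Lambda n := fun T => if T = S then 1 else 0

/-- Number of inversions between `S` and `T`. -/
def inversions (S T : Finset (Fin n)) : ℕ := ((S ×ˢ T).filter fun p => p.2 < p.1).card

/-- The multiplication of `Λ(n)` in coordinates:
`x_S · x_T = (−1)^{inversions} x_{S ∪ T}` for disjoint `S, T` and `0` otherwise. -/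
def lmulFun (f g : Lambda n) : Lambda n :=
  fun U => ∑ S ∈ U.powerset, msign (inversions n S (U \ S)) * f S * g (U \ S)

/-- Left multiplication by an element of `Λ(n)`, as a linear map `Λ(n) →ₗ End Λ(n)`. -/
def mulOp : Lambda n →ₗ[ℂ] E n where
  toFun f :=
    { toFun := lmulFun n f
      map_add' := by
        intro g h; funext U
        simp [lmulFun, mul_add, Finset.sum_add_distrib]
      map_smul' := by
        intro c g; funext U
        simp only [lmulFun, Pi.smul_apply, smul_eq_mul, RingHom.id_apply, Finset.mul_sum]
        exact Finset.sum_congr rfl (by intros; ring) }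
  map_add' := by
    intro f g; apply LinearMap.ext; intro h; funext U
    show lmulFun n (f + g) h U = lmulFun n f h U + lmulFun n g h U
    simp only [lmulFun]
    rw [← Finset.sum_add_distrib]
    exact Finset.sum_congr rfl (by intros; simp [Pi.add_apply]; ring)
  map_smul' := by
    intro c f; apply LinearMap.ext; intro h; funext U
    show lmulFun n (c • f) h U = (c • lmulFun n f h) U
    simp only [lmulFun, Pi.smul_apply, smul_eq_mul, Finset.mul_sum]
    exact Finset.sum_congr rfl (by intros; ring)

/-- The superderivation `∂_i` of `Λ(n)`, in coordinates. -/
def pd (i : Fin n) : E n where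
  toFun f := fun S =>
    if i ∈ S then 0 else msign (S.filter (· < i)).card * f (insert i S)
  map_add' := by
    intro f g; funext S; by_cases h : i ∈ S <;> simp [h, mul_add]
  map_smul' := by
    intro c f; funext S; by_cases h : i ∈ S <;> simp [h] <;> ring

/-- The parity operator `σ` of `Λ(n)`: `σ(x_S) = (−1)^{|S|} x_S`. -/
def par : E n where
  toFun f := fun S => msign S.card * f S
  map_add' := by intro f g; funext S; simp [mul_add]
  map_smul' := by intro c f; funext S; simp; ring

/-- The super-commutator `[D,F] = D∘F − (−1)^{|D||F|} F∘D`, extended bilinearly to all of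
`End Λ(n)` using the parity operator `σ`
(for homogeneous `D`, `σ∘D∘σ = (−1)^{|D|} D`). -/
def sbFun (D F : E n) : E n :=
  D * F - (2:ℂ)⁻¹ • ((F + par n * F * par n) * D + (F - par n * F * par n) * (par n * D * par n))

/-- The super-commutator as a bilinear map. -/
def sbL : E n →ₗ[ℂ] E n →ₗ[ℂ] E n :=
  LinearMap.mk₂ ℂ (sbFun n)
    (fun D D' F => by
      simp only [sbFun, add_mul, sub_mul, mul_add, mul_sub, smul_mul_assoc, mul_smul_comm,
        smul_add, smul_sub]
      module)
    (fun c D F => by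
      simp only [sbFun, add_mul, sub_mul, mul_add, mul_sub, smul_mul_assoc, mul_smul_comm,
        smul_add, smul_sub]
      module)
    (fun D F F' => by
      simp only [sbFun, add_mul, sub_mul, mul_add, mul_sub, smul_mul_assoc, mul_smul_comm,
        smul_add, smul_sub]
      module)
    (fun c D F => by
      simp only [sbFun, add_mul, sub_mul, mul_add, mul_sub, smul_mul_assoc, mul_smul_comm,
        smul_add, smul_sub]
      module)

/-- Shorthand for the super-commutator. -/
def sb (D F : E n) : E n := sbL n D F

/-- The ℤ₂-homogeneous component of `Λ(n)` of parity `p`. -/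
def lpar (p : ZMod 2) : Submodule ℂ (Lambda n) where
  carrier := {f | ∀ S : Finset (Fin n), (S.card : ZMod 2) ≠ p → f S = 0}
  add_mem' := by intro f g hf hg S hS; simp [Pi.add_apply, hf S hS, hg S hS]
  zero_mem' := by intro S hS; rfl
  smul_mem' := by intro c f hf S hS; simp [Pi.smul_apply, hf S hS]

/-- The ℤ-homogeneous component of `Λ(n)` of degree `m` (zero unless `0 ≤ m ≤ n`). -/
def ldeg (m : ℤ) : Submodule ℂ (Lambda n) where
  carrier := {f | ∀ S : Finset (Fin n), (S.card : ℤ) ≠ m → f S = 0}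
  add_mem' := by intro f g hf hg S hS; simp [Pi.add_apply, hf S hS, hg S hS]
  zero_mem' := by intro S hS; rfl
  smul_mem' := by intro c f hf S hS; simp [Pi.smul_apply, hf S hS]

/-- Endomorphisms of `Λ(n)` that are ℤ₂-homogeneous of parity `p`. -/
def epar (p : ZMod 2) : Submodule ℂ (E n) where
  carrier := {D | ∀ (q : ZMod 2), ∀ f ∈ lpar n q, D f ∈ lpar n (q + p)}
  add_mem' := by
    intro D F hD hF q f hf
    simpa [LinearMap.add_apply] using (lpar n (q + p)).add_mem (hD q f hf) (hF q f hf)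
  zero_mem' := by intro q f hf; simpa using (lpar n (q + p)).zero_mem
  smul_mem' := by
    intro c D hD q f hf
    simpa [LinearMap.smul_apply] using (lpar n (q + p)).smul_mem c (hD q f hf)

/-- Endomorphisms of `Λ(n)` that are ℤ-homogeneous of degree `d`. -/
def edeg (d : ℤ) : Submodule ℂ (E n) where
  carrier := {D | ∀ (m : ℤ), ∀ f ∈ ldeg n m, D f ∈ ldeg n (m + d)}
  add_mem' := by
    intro D F hD hF m f hf
    simpa [LinearMap.add_apply] using (ldeg n (m + d)).add_mem (hD m f hf) (hF m f hf)
  zero_mem' := by intro m f hf; simpa using (ldeg n (m + d)).zero_mem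
  smul_mem' := by
    intro c D hD m f hf
    simpa [LinearMap.smul_apply] using (ldeg n (m + d)).smul_mem c (hD m f hf)

/-- The linear map `(f₁,…,f_n) ↦ ∑ᵢ fᵢ ∂ᵢ`. -/
def Wmap : (Fin n → Lambda n) →ₗ[ℂ] E n where
  toFun F := ∑ i, mulOp n (F i) * pd n i
  map_add' := by
    intro F G
    simp only [Pi.add_apply, map_add, add_mul, Finset.sum_add_distrib]
  map_smul' := by
    intro c F
    simp only [RingHom.id_apply, Pi.smul_apply, map_smul, smul_mul_assoc, Finset.smul_sum]

/-- The divergence `(f₁,…,f_n) ↦ ∑ᵢ ∂ᵢ(fᵢ)`. -/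
def divMap : (Fin n → Lambda n) →ₗ[ℂ] Lambda n where
  toFun F := ∑ i, pd n i (F i)
  map_add' := by
    intro F G
    simp only [Pi.add_apply, map_add, Finset.sum_add_distrib]
  map_smul' := by
    intro c F
    simp only [RingHom.id_apply, Pi.smul_apply, map_smul, Finset.smul_sum]

/-- The Witt type Lie superalgebra `W(n) = {∑ fᵢ∂ᵢ : fᵢ ∈ Λ(n)}`. -/
def Wn : Submodule ℂ (E n) := LinearMap.range (Wmap n)

/-- Divergence-free coefficient tuples. -/
def divFree : Submodule ℂ (Fin n → Lambda n) := LinearMap.ker (divMap n)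

/-- The special type Lie superalgebra `S(n) = {∑ fᵢ∂ᵢ : ∑ ∂ᵢ(fᵢ) = 0}`. -/
def Sn : Submodule ℂ (E n) := (divFree n).map (Wmap n)

/-- The top monomial `ω = x₁x₂⋯x_n`. -/
def omegaTop : Lambda n := mono n Finset.univ

/-- `1 − x₁x₂⋯x_n`. -/
def oneM : Lambda n := mono n ∅ - omegaTop n

/-- Multiplication of every coefficient by `1 − x₁⋯x_n`. -/
def oneMScale : (Fin n → Lambda n) →ₗ[ℂ] (Fin n → Lambda n) :=
  LinearMap.pi fun i => (mulOp n (oneM n)) ∘ₗ LinearMap.proj i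

/-- The Lie superalgebra `S̃(n) = {(1−x₁⋯x_n)∑ fᵢ∂ᵢ : ∑ ∂ᵢ(fᵢ) = 0}` (`n` even). -/
def Stn : Submodule ℂ (E n) := (divFree n).map (Wmap n ∘ₗ oneMScale n)

/-- The conjugate index `i'`. -/
def cidx (i : Fin n) : Fin n :=
  ⟨if i.val < n / 2 then i.val + n / 2 else if i.val < 2 * (n / 2) then i.val - n / 2 else i.val,
   by have := i.isLt; split_ifs <;> omega⟩

/-- The linear map `f ↦ D_H(f) = (−1)^{|f|} ∑ᵢ ∂ᵢ(f)∂_{i'}` (the sign is implemented by the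
parity operator `σ`, so that this is a single linear map agreeing with `D_H` on homogeneous
elements). -/
def DHmap : Lambda n →ₗ[ℂ] E n where
  toFun f := ∑ i, mulOp n (pd n i (par n f)) * pd n (cidx n i)
  map_add' := by
    intro f g
    simp only [map_add, add_mul, Finset.sum_add_distrib]
  map_smul' := by
    intro c f
    simp only [RingHom.id_apply, map_smul, smul_mul_assoc, Finset.smul_sum]

/-- Evaluation of the top coefficient. -/
def evalTop : Lambda n →ₗ[ℂ] ℂ := LinearMap.proj Finset.univ

/-- The Hamiltonian Lie superalgebra `H(n) = {D_H(f) : f ∈ ⊕_{i=0}^{n−1} Λ(n)_i}`. -/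
def Hn : Submodule ℂ (E n) := (LinearMap.ker (evalTop n)).map (DHmap n)

/-- `H̃(n) = {D_H(f) : f ∈ Λ(n)}`. -/
def HtN : Submodule ℂ (E n) := LinearMap.range (DHmap n)

/-- The degree derivation `𝒞 = ∑ᵢ xᵢ∂ᵢ`. -/
def CC : E n := ∑ i, mulOp n (mono n {i}) * pd n i

/-- The span of the diagonal elements `xᵢ∂ᵢ`. -/
def diagSpan : Submodule ℂ (E n) :=
  Submodule.span ℂ (Set.range fun i : Fin n => mulOp n (mono n {i}) * pd n i)

/-- The four families of Cartan type Lie superalgebras. -/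
inductive CT | W | S | St | H
deriving DecidableEq

/-- Validity of the parameter `n` for each family. -/
def CT.valid : CT → ℕ → Prop
  | .W, n => 4 ≤ n
  | .S, n => 4 ≤ n
  | .St, n => 4 ≤ n ∧ Even n
  | .H, n => 4 < n

/-- The Cartan type Lie superalgebra `L` itself. -/
def CT.algebra : CT → (n : ℕ) → Submodule ℂ (E n)
  | .W, n => Wn n
  | .S, n => Sn n
  | .St, n => Stn n
  | .H, n => Hn n

/-- The extended algebra `L'`: `L' = L` for `W(n)` and `S̃(n)`, `L' = S(n) ⊕ ℂ𝒞` for `S(n)`,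
and `L' = H̃(n) ⊕ ℂ𝒞` for `H(n)`. -/
def CT.prime : CT → (n : ℕ) → Submodule ℂ (E n)
  | .W, n => Wn n
  | .S, n => Sn n ⊔ Submodule.span ℂ {CC n}
  | .St, n => Stn n
  | .H, n => HtN n ⊔ Submodule.span ℂ {CC n}

/-- The top degree `ξ_L` of the ℤ-grading. -/
def CT.xi : CT → (n : ℕ) → ℤ
  | .W, n => (n : ℤ) - 1
  | .S, n => (n : ℤ) - 2
  | .St, n => (n : ℤ) - 2
  | .H, n => (n : ℤ) - 3

/-- The ℤ-grading component `L_j = L ∩ W(n)_j`; for `S̃(n)` the component of degree `−1`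
is `span{(1−x₁⋯x_n)∂ᵢ}` instead. -/
def CT.grade (t : CT) (n : ℕ) (j : ℤ) : Submodule ℂ (E n) :=
  match t with
  | .St =>
      if j = -1 then
        Submodule.span ℂ (Set.range fun i : Fin n => mulOp n (oneM n) * pd n i)
      else Stn n ⊓ edeg n j
  | t => t.algebra n ⊓ edeg n j

/-- The ℤ-grading component `L'_j` of the extended algebra `L'`. -/
def CT.grade' (t : CT) (n : ℕ) (j : ℤ) : Submodule ℂ (E n) :=
  match t with
  | .St => CT.grade .St n j
  | t => t.prime n ⊓ edeg n j

/-- The standard Cartan subalgebra `H_L` of `L`: the part of the diagonal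
`span{xᵢ∂ᵢ}` lying in `L`. -/
def CT.cartan (t : CT) (n : ℕ) : Submodule ℂ (E n) := t.algebra n ⊓ diagSpan n

/-- The weight space of `M ⊆ End Λ(n)` of weight `μ ∈ H_L^*` under the adjoint action
of the standard Cartan subalgebra of `L`. -/
def wtsp (t : CT) (n : ℕ) (M : Submodule ℂ (E n)) (μ : Module.Dual ℂ (t.cartan n)) :
    Submodule ℂ (E n) where
  carrier := {x | x ∈ M ∧ ∀ h : t.cartan n, sbL n h x = μ h • x}
  add_mem' := by
    rintro x y ⟨hx, hx'⟩ ⟨hy, hy'⟩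
    exact ⟨M.add_mem hx hy, fun h => by simp [map_add, hx' h, hy' h, smul_add]⟩
  zero_mem' := ⟨M.zero_mem, fun h => by simp⟩
  smul_mem' := by
    rintro c x ⟨hx, hx'⟩
    exact ⟨M.smul_mem c hx, fun h => by simp [map_smul, hx' h, smul_comm c]⟩

/-- The set of roots of `M` with respect to the standard Cartan subalgebra of `L`:
the nonzero weights with nonzero weight space. -/
def CT.roots (t : CT) (n : ℕ) (M : Submodule ℂ (E n)) : Set (Module.Dual ℂ (t.cartan n)) :=
  {ε | ε ≠ 0 ∧ wtsp t n M ε ≠ ⊥}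

/-- The sign `(−1)^p` for `p ∈ ℤ₂`. -/
def sgn (p : ZMod 2) : ℂ := (-1 : ℂ) ^ p.val

/-- `f` is a super-biderivation of `L` of ℤ₂-degree `pf`:
a bilinear map with `f(L_α, L_β) ⊆ L_{α+β+pf}` satisfying
`f([x,y],z) = (−1)^{|x||f|}[x,f(y,z)] + (−1)^{|y||z|}[f(x,z),y]` and
`f(x,[y,z]) = [f(x,y),z] + (−1)^{(|f|+|x|)|y|}[y,f(x,z)]` for homogeneous `x,y,z ∈ L`.
(The bilinear map is given as a bilinear map on the ambient space `End Λ(n)`;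
only its restriction to `L` is relevant.) -/
structure IsSuperBider (L : Submodule ℂ (E n)) (pf : ZMod 2)
    (f : E n →ₗ[ℂ] E n →ₗ[ℂ] E n) : Prop where
  maps : ∀ (α β : ZMod 2), ∀ x ∈ L ⊓ epar n α, ∀ y ∈ L ⊓ epar n β,
    f x y ∈ L ⊓ epar n (α + β + pf)
  eq1 : ∀ (α β γ : ZMod 2), ∀ x ∈ L ⊓ epar n α, ∀ y ∈ L ⊓ epar n β, ∀ z ∈ L ⊓ epar n γ,
    f (sbL n x y) z = sgn (α * pf) • sbL n x (f y z) + sgn (β * γ) • sbL n (f x z) y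
  eq2 : ∀ (α β γ : ZMod 2), ∀ x ∈ L ⊓ epar n α, ∀ y ∈ L ⊓ epar n β, ∀ z ∈ L ⊓ epar n γ,
    f x (sbL n y z) = sbL n (f x y) z + sgn ((pf + α) * β) • sbL n y (f x z)

/-- `D` is a superderivation of `L` of ℤ₂-degree `p`:
`D(L_α) ⊆ L_{α+p}` and `D([x,y]) = [D(x),y] + (−1)^{|D||x|}[x,D(y)]` for homogeneous
`x, y ∈ L`. (Given as a linear map on the ambient space `End Λ(n)`.) -/
structure IsSuperDer (L : Submodule ℂ (E n)) (p : ZMod 2)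
    (D : E n →ₗ[ℂ] E n) : Prop where
  maps : ∀ (α : ZMod 2), ∀ x ∈ L ⊓ epar n α, D x ∈ L ⊓ epar n (α + p)
  leib : ∀ (α β : ZMod 2), ∀ x ∈ L ⊓ epar n α, ∀ y ∈ L ⊓ epar n β,
    D (sbL n x y) = sbL n (D x) y + sgn (p * α) • sbL n x (D y)

/-- `f ∈ BDer(L)_ε`: the super-biderivation `f` has weight `ε ∈ H_L^*`, i.e.
`f(L_η, L_ζ) ⊆ L_{ε+η+ζ}` for all weights `η, ζ`. -/
def CT.HasWeight (t : CT) (n : ℕ) (f : E n →ₗ[ℂ] E n →ₗ[ℂ] E n)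
    (ε : Module.Dual ℂ (t.cartan n)) : Prop :=
  ∀ (η ζ : Module.Dual ℂ (t.cartan n)),
    ∀ x ∈ wtsp t n (t.algebra n) η, ∀ y ∈ wtsp t n (t.algebra n) ζ,
      f x y ∈ wtsp t n (t.algebra n) (ε + η + ζ)

/-- `f ∈ BDer(L)_i`: the super-biderivation `f` has ℤ-degree `i`, i.e.
`f(L_j, L_k) ⊆ L_{i+j+k}` for all `j, k ∈ ℤ`. -/
def CT.HasDeg (t : CT) (n : ℕ) (f : E n →ₗ[ℂ] E n →ₗ[ℂ] E n) (i : ℤ) : Prop :=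
  ∀ (j k : ℤ), ∀ x ∈ t.grade n j, ∀ y ∈ t.grade n k, f x y ∈ t.grade n (i + j + k)

/-!
For `W(n)`, `S(n)` and `S̃(n)`, take a diagonal element `∑ᵢ cᵢxᵢ∂ᵢ` of `L` with generic
coefficients. It acts semisimply, so after an inner correction `D` preserves its eigenspaces. Let
`ω = x₁⋯xₙ`, with `ε = 1` for `S̃(n)` and `ε = 0` otherwise. The eigenvalue `-cᵢ` occurs on `L`
with multiplicity one, on `(1 - εω)∂ᵢ`, so `D` acts on these elements by scalars, and adding a
diagonal derivation makes it send them to `νω∂ᵢ`. An eigenvector of any other eigenvalue is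
killed: bracketing with the `(1 - εω)∂ᵢ` lowers its degree, and its constant coefficients vanish.
For `ε = 1` this applies to the brackets of the `(1 - ω)∂ᵢ` with each other, whence `ν = 0`: the
diagonal derivation is trace-free and lies in `S̃(n)`. So `D` is now zero.

For `H(n)`, the Casimir operator of `𝔰𝔬ₙ = span {D_H(xᵢxⱼ)}` acts on `D_H(f)`, `f` homogeneous of
degree `k`, by `2k(n - k)`, so it is invertible on `H(n)`. Hence `D` may be taken to vanish on
`𝔰𝔬ₙ`, that is, to be equivariant. Comparing weights and Casimir eigenvalues gives
`D(D_H(xⱼ)) = c D_H(xⱼ) + d D_H(∂_{j'}ω)`, which multiples of `𝒞` and `D_H(ω)` correct to zero.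
Now let `f` be a monomial of degree `k ≥ 2` such that `D` kills the `D_H(∂ᵢf)`. Brackets with the
`D_H(xᵢ)` show that `D(D_H(f)) = D_H(g)` with `g` linear. If `k < n - 1`, the Casimir eigenvalues
give `g = 0`. If `k = n - 1`, then `D_H(f)` commutes with `D_H(h)` for every cubic monomial `h`,
hence so does `D_H(g)`, and `g = 0`.
-/

/-! ### Multiplication and derivations of the exterior algebra -/

section

/-- Left multiplication by the generator `x_i` of `Λ(n)`. -/
def mulGen (i : Fin n) : E n := mulOp n (mono n {i})

/-- The sign picked up by `x_i` or `∂_i` when it moves past the generators of `x_U` that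
precede `x_i`. -/
def koszulSign (i : Fin n) (U : Finset (Fin n)) : ℂ := msign (U.filter (· < i)).card

variable {n}

-- `neg_mul` and `mul_neg` fail to rewrite in `E n`: instance search finds the negation of linear
-- maps, which is not reducibly the one of the ring `Module.End`.
lemma end_neg_mul (A B : E n) : -A * B = -(A * B) := neg_mul A B

lemma end_mul_neg (A B : E n) : A * -B = -(A * B) := mul_neg A B

lemma msign_mul_self (k : ℕ) : msign k * msign k = 1 := by
  unfold msign; rw [← mul_pow]; norm_num

lemma msign_add (k l : ℕ) : msign (k + l) = msign k * msign l := pow_add _ _ _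

lemma msign_succ (k : ℕ) : msign (k + 1) = - msign k := by
  unfold msign; rw [pow_succ]; ring

lemma msign_ne_zero (k : ℕ) : msign k ≠ 0 := by
  unfold msign; exact pow_ne_zero _ (by norm_num)

lemma koszulSign_mul_self (i : Fin n) (U : Finset (Fin n)) :
    koszulSign n i U * koszulSign n i U = 1 := msign_mul_self _

lemma koszulSign_ne_zero (i : Fin n) (U : Finset (Fin n)) : koszulSign n i U ≠ 0 :=
  msign_ne_zero _

lemma koszulSign_insert_self (i : Fin n) (U : Finset (Fin n)) :
    koszulSign n i (insert i U) = koszulSign n i U := by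
  unfold koszulSign; congr 2; ext x; simp only [Finset.mem_filter, Finset.mem_insert]; grind

lemma koszulSign_erase_self (i : Fin n) (U : Finset (Fin n)) :
    koszulSign n i (U.erase i) = koszulSign n i U := by
  unfold koszulSign; congr 2; ext x; simp only [Finset.mem_filter, Finset.mem_erase]; grind

lemma koszulSign_insert (i j : Fin n) (U : Finset (Fin n)) (h : j ∉ U) :
    koszulSign n i (insert j U) = if j < i then - koszulSign n i U else koszulSign n i U := by
  unfold koszulSign
  rw [Finset.filter_insert]
  split_ifs with h1
  · rw [Finset.card_insert_of_notMem (by simp [h]), msign_succ]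
  · rfl

lemma koszulSign_erase (i j : Fin n) (U : Finset (Fin n)) (h : j ∈ U) :
    koszulSign n i (U.erase j) = if j < i then - koszulSign n i U else koszulSign n i U := by
  have := koszulSign_insert i j (U.erase j) (by simp)
  rw [Finset.insert_erase h] at this
  rw [this]
  split_ifs <;> simp

lemma mono_apply (S T : Finset (Fin n)) : mono n S T = if T = S then 1 else 0 := rfl

lemma eq_sum_smul_mono (f : Lambda n) : f = ∑ S, f S • mono n S := by
  funext T
  simp [mono_apply, Finset.sum_apply]

lemma end_ext_mono {A B : E n} (h : ∀ S, A (mono n S) = B (mono n S)) : A = B := by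
  apply LinearMap.ext; intro f
  rw [eq_sum_smul_mono f]; simp [h]

lemma pd_apply (i : Fin n) (f : Lambda n) (S : Finset (Fin n)) :
    pd n i f S = if i ∈ S then 0 else koszulSign n i S * f (insert i S) := rfl

lemma par_apply (f : Lambda n) (S : Finset (Fin n)) :
    par n f S = msign S.card * f S := rfl

lemma mulOp_apply (f g : Lambda n) (U : Finset (Fin n)) :
    mulOp n f g U = ∑ S ∈ U.powerset, msign (inversions n S (U \ S)) * f S * g (U \ S) := rfl

lemma mulGen_apply (i : Fin n) (f : Lambda n) (U : Finset (Fin n)) :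
    mulGen n i f U = if i ∈ U then koszulSign n i U * f (U.erase i) else 0 := by
  unfold mulGen
  rw [mulOp_apply]
  split_ifs with h
  · rw [Finset.sum_eq_single {i}]
    · rw [mono_apply, if_pos rfl, mul_one, Finset.sdiff_singleton_eq_erase,
        ← koszulSign_erase_self]
      congr 2
      unfold inversions
      rw [Finset.card_filter, Finset.sum_product, Finset.sum_singleton, ← Finset.card_filter]
    · intro S _ hS; rw [mono_apply, if_neg hS]; ring
    · intro hS; exact absurd (by simpa using h) hS
  · apply Finset.sum_eq_zero
    intro S hS
    rw [mono_apply, if_neg]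
    · ring
    · rintro rfl; exact h (by simpa using hS)

lemma mono_insert (i : Fin n) (S : Finset (Fin n)) (h : i ∉ S) :
    mono n (insert i S) = koszulSign n i S • mulGen n i (mono n S) := by
  funext U
  simp only [Pi.smul_apply, smul_eq_mul, mulGen_apply, mono_apply]
  by_cases hU : U = insert i S
  · subst hU
    simp only [if_true, Finset.mem_insert_self, koszulSign_insert_self, Finset.erase_insert h,
      mul_one, koszulSign_mul_self]
  · rw [if_neg hU]
    split_ifs with h1 h2
    · exact absurd (by rw [← h2, Finset.insert_erase h1]) hU
    · ring
    · ring

lemma mulGen_mono_of_notMem (i : Fin n) (S : Finset (Fin n)) (h : i ∉ S) :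
    mulGen n i (mono n S) = koszulSign n i S • mono n (insert i S) := by
  rw [mono_insert i S h, smul_smul, koszulSign_mul_self, one_smul]

lemma mulGen_mono_of_mem (i : Fin n) (S : Finset (Fin n)) (h : i ∈ S) :
    mulGen n i (mono n S) = 0 := by
  funext U
  simp only [mulGen_apply, mono_apply, Pi.zero_apply]
  split_ifs with h1 h2
  · exfalso; rw [← h2] at h; simp at h
  · ring
  · rfl

lemma pd_mono_of_mem (i : Fin n) (S : Finset (Fin n)) (h : i ∈ S) :
    pd n i (mono n S) = koszulSign n i S • mono n (S.erase i) := by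
  funext U
  simp only [pd_apply, mono_apply, Pi.smul_apply, smul_eq_mul]
  by_cases hU : U = S.erase i
  · subst hU
    simp [Finset.insert_erase h, koszulSign_erase_self]
  · rw [if_neg hU]
    split_ifs with h1 h2
    · ring
    · exact absurd (by rw [← h2, Finset.erase_insert h1]) hU
    · ring

lemma pd_mono_of_notMem (i : Fin n) (S : Finset (Fin n)) (h : i ∉ S) :
    pd n i (mono n S) = 0 := by
  funext U
  simp only [pd_apply, mono_apply, Pi.zero_apply]
  split_ifs with h1 h2
  · rfl
  · exfalso; rw [← h2] at h; simp at h
  · ring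

lemma par_mono (S : Finset (Fin n)) : par n (mono n S) = msign S.card • mono n S := by
  funext U
  simp only [par_apply, mono_apply, Pi.smul_apply, smul_eq_mul]
  split_ifs with h
  · rw [h]
  · ring

lemma lambda_induction {P : Lambda n → Prop} (one : P (mono n ∅))
    (add : ∀ f g, P f → P g → P (f + g)) (smul : ∀ (c : ℂ) f, P f → P (c • f))
    (gen_mul : ∀ i f, P f → P (mulGen n i f)) (f : Lambda n) : P f := by
  have mono_mem : ∀ S, P (mono n S) := by
    intro S
    induction S using Finset.induction_on with
    | empty => exact one
    | insert i S hi ih => rw [mono_insert i S hi]; exact smul _ _ (gen_mul _ _ ih)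
  rw [eq_sum_smul_mono f]
  exact Finset.sum_induction _ P add (by simpa using smul 0 _ one) fun S _ => smul _ _ (mono_mem S)

lemma mulGen_anticomm (i j : Fin n) : mulGen n i * mulGen n j = - (mulGen n j * mulGen n i) := by
  apply LinearMap.ext; intro f; funext U
  simp only [Module.End.mul_apply, LinearMap.neg_apply, Pi.neg_apply, mulGen_apply,
    Finset.mem_erase]
  rcases eq_or_ne i j with rfl | hij
  · simp
  by_cases hi : i ∈ U <;> by_cases hj : j ∈ U <;> simp only [hi, hj, hij, hij.symm, ne_eq,
    not_false_eq_true, and_true, and_false, if_true, if_false, mul_zero, neg_zero]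
  rw [koszulSign_erase i j U hj, koszulSign_erase j i U hi, Finset.erase_right_comm]
  rcases lt_or_gt_of_ne hij with h | h <;> simp only [h, not_lt_of_gt h, if_true, if_false] <;> ring

lemma pd_anticomm (i j : Fin n) : pd n i * pd n j = - (pd n j * pd n i) := by
  apply LinearMap.ext; intro f; funext U
  simp only [Module.End.mul_apply, LinearMap.neg_apply, Pi.neg_apply, pd_apply, Finset.mem_insert]
  rcases eq_or_ne i j with rfl | hij
  · simp
  by_cases hi : i ∈ U <;> by_cases hj : j ∈ U <;> simp only [hi, hj, hij, hij.symm,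
    or_true, or_false, if_true, if_false, mul_zero, neg_zero]
  rw [koszulSign_insert i j U hj, koszulSign_insert j i U hi, Finset.insert_comm]
  rcases lt_or_gt_of_ne hij with h | h <;> simp only [h, not_lt_of_gt h, if_true, if_false] <;> ring

lemma pd_mul_mulGen (i j : Fin n) :
    pd n i * mulGen n j = (if i = j then 1 else 0) - mulGen n j * pd n i := by
  apply LinearMap.ext; intro f; funext U
  simp only [Module.End.mul_apply, LinearMap.sub_apply, Pi.sub_apply, pd_apply, mulGen_apply,
    Finset.mem_insert, Finset.mem_erase]
  rcases eq_or_ne i j with rfl | hij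
  · by_cases hi : i ∈ U
    · simp [hi, Finset.insert_erase hi, koszulSign_erase_self, ← mul_assoc, koszulSign_mul_self]
    · simp [hi, Finset.erase_insert hi, koszulSign_insert_self, ← mul_assoc, koszulSign_mul_self]
  · by_cases hi : i ∈ U <;> by_cases hj : j ∈ U <;> simp only [hi, hj, hij, hij.symm, ne_eq,
      not_false_eq_true, and_true, and_false, or_true, or_false, if_true, if_false, mul_zero,
      sub_zero, zero_sub, LinearMap.zero_apply, Pi.zero_apply]
    rw [koszulSign_erase i j U hj, koszulSign_insert j i U hi, Finset.erase_insert_of_ne hij]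
    rcases lt_or_gt_of_ne hij with h | h <;>
      simp only [h, not_lt_of_gt h, if_true, if_false] <;> ring

lemma par_mul_par : par n * par n = 1 := by
  apply LinearMap.ext; intro f; funext U
  simp only [Module.End.mul_apply, par_apply, Module.End.one_apply]
  rw [← mul_assoc, msign_mul_self, one_mul]

lemma par_mul_mulGen (i : Fin n) : par n * mulGen n i = - (mulGen n i * par n) := by
  apply LinearMap.ext; intro f; funext U
  simp only [Module.End.mul_apply, LinearMap.neg_apply, Pi.neg_apply, par_apply, mulGen_apply]
  split_ifs with h
  · have := Finset.card_erase_add_one h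
    rw [← this, msign_succ]; ring
  · ring

lemma par_mul_pd (i : Fin n) : par n * pd n i = - (pd n i * par n) := by
  apply LinearMap.ext; intro f; funext U
  simp only [Module.End.mul_apply, LinearMap.neg_apply, Pi.neg_apply, par_apply, pd_apply]
  split_ifs with h
  · ring
  · rw [Finset.card_insert_of_notMem h, msign_succ]; ring

lemma pd_mono_empty (i : Fin n) : pd n i (mono n ∅) = 0 := pd_mono_of_notMem i ∅ (by simp)

lemma par_mono_empty : par n (mono n ∅) = mono n ∅ := by rw [par_mono]; simp [msign]

lemma mulOp_mono_empty : mulOp n (mono n ∅) = 1 := by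
  apply LinearMap.ext; intro f; funext U
  rw [mulOp_apply, Finset.sum_eq_single ∅]
  · simp [mono_apply, inversions, msign]
  · intro S _ hS; rw [mono_apply, if_neg hS]; ring
  · intro h; simp at h

lemma msign_inversions_insert (i : Fin n) (R V : Finset (Fin n)) (h : i ∉ R) :
    msign (inversions n (insert i R) V) = koszulSign n i V * msign (inversions n R V) := by
  unfold inversions koszulSign
  rw [← msign_add]
  congr 1
  simp only [Finset.card_filter, Finset.sum_product, Finset.sum_insert h]

lemma mulOp_mulGen (i : Fin n) (f : Lambda n) :
    mulOp n (mulGen n i f) = mulGen n i * mulOp n f := by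
  apply LinearMap.ext; intro g; funext U
  rw [Module.End.mul_apply, mulGen_apply, mulOp_apply]
  split_ifs with h
  · rw [mulOp_apply, Finset.mul_sum]
    obtain ⟨V, hV, rfl⟩ : ∃ V, i ∉ V ∧ U = insert i V :=
      ⟨U.erase i, by simp, (Finset.insert_erase h).symm⟩
    rw [Finset.sum_powerset_insert hV, Finset.erase_insert hV]
    rw [Finset.sum_eq_zero, zero_add]
    · apply Finset.sum_congr rfl
      intro R hR
      have hR' := Finset.mem_powerset.1 hR
      have hiR : i ∉ R := fun hh => hV (hR' hh)
      rw [mulGen_apply, if_pos (Finset.mem_insert_self _ _), Finset.erase_insert hiR,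
        Finset.insert_sdiff_insert, Finset.sdiff_insert_of_notMem hV,
        msign_inversions_insert _ _ _ hiR, koszulSign_insert_self, koszulSign_insert_self]
      have : koszulSign n i V = koszulSign n i (V \ R) * koszulSign n i R := by
        unfold koszulSign
        rw [← msign_add, ← Finset.card_union_of_disjoint, ← Finset.filter_union,
          Finset.sdiff_union_of_subset hR']
        exact Finset.disjoint_filter_filter Finset.sdiff_disjoint
      rw [this]; ring
    · intro R hR
      have hiR : i ∉ R := fun hh => hV (Finset.mem_powerset.1 hR hh)
      rw [mulGen_apply, if_neg hiR]; ring
  · apply Finset.sum_eq_zero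
    intro R hR
    rw [mulGen_apply, if_neg (fun hh => h (Finset.mem_powerset.1 hR hh))]; ring

lemma mulOp_mulOp (f g : Lambda n) : mulOp n (mulOp n f g) = mulOp n f * mulOp n g := by
  induction f using lambda_induction with
  | one => rw [mulOp_mono_empty]; simp
  | add f g hf hg => simp only [map_add, LinearMap.add_apply, hf, hg, add_mul]
  | smul c f hf => simp only [map_smul, LinearMap.smul_apply, hf, smul_mul_assoc]
  | gen_mul i f hf => rw [mulOp_mulGen, Module.End.mul_apply, mulOp_mulGen, hf, mul_assoc]

lemma mulOp_apply_mono_empty (f : Lambda n) : mulOp n f (mono n ∅) = f := by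
  induction f using lambda_induction with
  | one => rw [mulOp_mono_empty]; simp
  | add f g hf hg => simp only [map_add, LinearMap.add_apply, hf, hg]
  | smul c f hf => simp only [map_smul, LinearMap.smul_apply, hf]
  | gen_mul i f hf => rw [mulOp_mulGen, Module.End.mul_apply, hf]

lemma pd_mulGen_apply (i j : Fin n) (f : Lambda n) :
    pd n i (mulGen n j f) = (if i = j then f else 0) - mulGen n j (pd n i f) := by
  have := congrArg (fun A : E n => A f) (pd_mul_mulGen i j)
  simp only [Module.End.mul_apply, LinearMap.sub_apply] at this
  rw [this]; split_ifs <;> simp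

lemma par_mulGen_apply (i : Fin n) (f : Lambda n) :
    par n (mulGen n i f) = - mulGen n i (par n f) := by
  have := congrArg (fun A : E n => A f) (par_mul_mulGen i)
  simpa using this

lemma par_pd_apply (i : Fin n) (f : Lambda n) : par n (pd n i f) = - pd n i (par n f) := by
  have := congrArg (fun A : E n => A f) (par_mul_pd i)
  simpa using this

lemma par_par_apply (f : Lambda n) : par n (par n f) = f := by
  have := congrArg (fun A : E n => A f) (par_mul_par (n := n))
  simpa using this

lemma pd_mul_mulOp (i : Fin n) (f : Lambda n) :
    pd n i * mulOp n f = mulOp n (pd n i f) + mulOp n (par n f) * pd n i := by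
  induction f using lambda_induction with
  | one => rw [mulOp_mono_empty, pd_mono_empty, par_mono_empty, mulOp_mono_empty]; simp
  | add f g hf hg => simp only [map_add, mul_add, hf, hg, add_mul]; abel
  | smul c f hf => simp only [map_smul, hf, smul_mul_assoc, mul_smul_comm, smul_add]
  | gen_mul j f hf =>
    rw [mulOp_mulGen, ← mul_assoc, pd_mul_mulGen, sub_mul, mul_assoc, hf, pd_mulGen_apply,
      par_mulGen_apply, map_sub, map_neg, mulOp_mulGen, mulOp_mulGen]
    split_ifs
    · simp only [one_mul, mul_add, end_neg_mul, mul_assoc]; abel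
    · simp only [zero_mul, mul_add, end_neg_mul, mul_assoc, map_zero]; abel

lemma par_mul_mulOp (f : Lambda n) : par n * mulOp n f = mulOp n (par n f) * par n := by
  induction f using lambda_induction with
  | one => rw [mulOp_mono_empty, par_mono_empty, mulOp_mono_empty]; simp
  | add f g hf hg => simp only [map_add, mul_add, hf, hg, add_mul]
  | smul c f hf => simp only [map_smul, hf, smul_mul_assoc, mul_smul_comm]
  | gen_mul j f hf =>
    rw [mulOp_mulGen, ← mul_assoc, par_mul_mulGen, end_neg_mul, mul_assoc, hf, par_mulGen_apply,
      map_neg, mulOp_mulGen, end_neg_mul, mul_assoc]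

lemma mulOp_mul_mulGen (f : Lambda n) (i : Fin n) :
    mulOp n f * mulGen n i = mulGen n i * mulOp n (par n f) := by
  induction f using lambda_induction with
  | one => rw [par_mono_empty, mulOp_mono_empty]; simp
  | add f g hf hg => simp only [map_add, mul_add, hf, hg, add_mul]
  | smul c f hf => simp only [map_smul, hf, smul_mul_assoc, mul_smul_comm]
  | gen_mul j f hf =>
    rw [mulOp_mulGen, mul_assoc, hf, ← mul_assoc, mulGen_anticomm, par_mulGen_apply,
      map_neg, mulOp_mulGen, end_neg_mul, mul_assoc, end_mul_neg]

end

/-! ### Parity and the supercommutator -/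

section

/-- Conjugation by the parity operator, `A ↦ σAσ`: it is `1` on even and `-1` on odd
endomorphisms of `Λ(n)`. -/
def parConj : E n →ₐ[ℂ] E n :=
  AlgHom.ofLinearMap
    { toFun := fun A => par n * A * par n
      map_add' := fun A B => by rw [mul_add, add_mul]
      map_smul' := fun c A => by rw [mul_smul_comm, smul_mul_assoc, RingHom.id_apply] }
    (by simp [par_mul_par])
    (fun A B => by
      have h : par n * A * par n * (par n * B * par n)
          = par n * A * (par n * par n) * B * par n := by simp only [mul_assoc]
      simp only [LinearMap.coe_mk, AddHom.coe_mk]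
      rw [h, par_mul_par, mul_one, mul_assoc (par n) A B])

/-- The projection of `End Λ(n)` onto its component of parity `p`. -/
def parityProj (p : ZMod 2) : E n →ₗ[ℂ] E n :=
  (2 : ℂ)⁻¹ • (LinearMap.id + sgn p • (parConj n).toLinearMap)

/-- A ℤ₂-graded subalgebra of the Lie superalgebra `End Λ(n)`. -/
structure IsGradedSubalgebra (L : Submodule ℂ (E n)) : Prop where
  parConj_mem : ∀ A ∈ L, parConj n A ∈ L
  sbL_mem : ∀ A ∈ L, ∀ B ∈ L, sbL n A B ∈ L

variable {n}

lemma zmod_two_cases (p : ZMod 2) : p = 0 ∨ p = 1 := by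
  fin_cases p
  · exact Or.inl rfl
  · exact Or.inr rfl

lemma sgn_zero : sgn 0 = 1 := by simp [sgn]

lemma sgn_one : sgn 1 = -1 := by simp [sgn, ZMod.val_one]

lemma sgn_mul_self (p : ZMod 2) : sgn p * sgn p = 1 := by
  rcases zmod_two_cases p with rfl | rfl <;> norm_num [sgn_zero, sgn_one]

lemma sgn_add (p q : ZMod 2) : sgn (p + q) = sgn p * sgn q := by
  rcases zmod_two_cases p with rfl | rfl <;> rcases zmod_two_cases q with rfl | rfl
  all_goals simp only [add_zero, zero_add, sgn_zero, sgn_one, one_mul, mul_one]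
  rw [show (1 : ZMod 2) + 1 = 0 from rfl, sgn_zero]
  norm_num

lemma sgn_injective : Function.Injective sgn := by
  intro p q h
  rcases zmod_two_cases p with rfl | rfl <;> rcases zmod_two_cases q with rfl | rfl
  all_goals first | rfl | norm_num [sgn_zero, sgn_one] at h

lemma msign_eq_sgn (k : ℕ) : msign k = sgn (k : ZMod 2) := by
  induction k with
  | zero => simp [msign, sgn]
  | succ k ih => rw [msign_succ, ih, Nat.cast_succ, sgn_add, sgn_one]; ring

lemma mem_lpar_iff {q : ZMod 2} {f : Lambda n} : f ∈ lpar n q ↔ par n f = sgn q • f := by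
  constructor
  · intro h
    funext S
    rw [par_apply, Pi.smul_apply, smul_eq_mul, msign_eq_sgn]
    by_cases hS : (S.card : ZMod 2) = q
    · rw [hS]
    · rw [h S hS]; ring
  · intro h S hS
    have hfS := congrFun h S
    rw [par_apply, Pi.smul_apply, smul_eq_mul, msign_eq_sgn] at hfS
    by_contra h0
    exact hS (sgn_injective (mul_right_cancel₀ h0 hfS))

lemma mono_mem_lpar (S : Finset (Fin n)) : mono n S ∈ lpar n (S.card : ZMod 2) := by
  rw [mem_lpar_iff, par_mono, msign_eq_sgn]

lemma parConj_apply (A : E n) : parConj n A = par n * A * par n := rfl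

lemma parConj_apply_apply (A : E n) (f : Lambda n) : parConj n A f = par n (A (par n f)) := rfl

lemma parConj_parConj (A : E n) : parConj n (parConj n A) = A := by
  rw [parConj_apply, parConj_apply, mul_assoc (par n) A, ← mul_assoc (par n) (par n),
    par_mul_par, one_mul, mul_assoc, par_mul_par, mul_one]

lemma mem_epar_iff {p : ZMod 2} {A : E n} : A ∈ epar n p ↔ parConj n A = sgn p • A := by
  constructor
  · intro h
    apply end_ext_mono
    intro S
    have hS := mem_lpar_iff.1 (h _ _ (mono_mem_lpar S))
    rw [parConj_apply_apply, LinearMap.smul_apply, par_mono, map_smul, map_smul, hS, smul_smul,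
      msign_eq_sgn, sgn_add, ← mul_assoc, sgn_mul_self, one_mul]
  · intro h q f hf
    rw [mem_lpar_iff] at hf ⊢
    have h' := congrArg (fun B : E n => B (par n f)) h
    simp only [parConj_apply_apply, LinearMap.smul_apply] at h'
    rw [par_par_apply, hf, map_smul, smul_smul] at h'
    rw [h', sgn_add, mul_comm]

lemma mul_mem_epar {p q : ZMod 2} {A B : E n} (hA : A ∈ epar n p) (hB : B ∈ epar n q) :
    A * B ∈ epar n (p + q) := by
  rw [mem_epar_iff] at *
  rw [map_mul, hA, hB, sgn_add, smul_mul_assoc, mul_smul_comm, smul_smul]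

lemma one_mem_epar : (1 : E n) ∈ epar n 0 := by
  rw [mem_epar_iff, map_one, sgn_zero, one_smul]

lemma mulGen_mem_epar (i : Fin n) : mulGen n i ∈ epar n 1 := by
  rw [mem_epar_iff, parConj_apply, par_mul_mulGen, end_neg_mul, mul_assoc, par_mul_par, mul_one,
    sgn_one]
  module

lemma pd_mem_epar (i : Fin n) : pd n i ∈ epar n 1 := by
  rw [mem_epar_iff, parConj_apply, par_mul_pd, end_neg_mul, mul_assoc, par_mul_par, mul_one,
    sgn_one]
  module

lemma mulGen_mul_pd_mem_epar (i j : Fin n) : mulGen n i * pd n j ∈ epar n 0 := by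
  rw [show (0 : ZMod 2) = 1 + 1 from rfl]
  exact mul_mem_epar (mulGen_mem_epar i) (pd_mem_epar j)

lemma parConj_mulOp (f : Lambda n) : parConj n (mulOp n f) = mulOp n (par n f) := by
  rw [parConj_apply, par_mul_mulOp, mul_assoc, par_mul_par, mul_one]

lemma sbL_apply (A B : E n) : sbL n A B = A * B - (2 : ℂ)⁻¹ • ((B + parConj n B) * A
    + (B - parConj n B) * parConj n A) := by
  rw [sbL, LinearMap.mk₂_apply, sbFun, parConj_apply, parConj_apply]

lemma sbL_even_right (A : E n) {B : E n} (hB : B ∈ epar n 0) : sbL n A B = A * B - B * A := by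
  rw [mem_epar_iff, sgn_zero, one_smul] at hB
  rw [sbL_apply, hB, sub_self, zero_mul, add_zero, ← two_smul ℂ B, smul_mul_assoc, smul_smul]
  norm_num

lemma sbL_odd_right (A : E n) {B : E n} (hB : B ∈ epar n 1) :
    sbL n A B = A * B - B * parConj n A := by
  rw [mem_epar_iff, sgn_one] at hB
  rw [sbL_apply, hB, show B + (-1 : ℂ) • B = 0 by module,
    show B - (-1 : ℂ) • B = (2 : ℂ) • B by module, smul_mul_assoc, zero_mul, zero_add, smul_smul]
  norm_num

lemma sbL_even_left {A : E n} (hA : A ∈ epar n 0) (B : E n) : sbL n A B = A * B - B * A := by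
  rw [mem_epar_iff, sgn_zero, one_smul] at hA
  rw [sbL_apply, hA, ← add_mul, show B + parConj n B + (B - parConj n B) = (2 : ℂ) • B by module,
    smul_mul_assoc, smul_smul]
  norm_num

lemma sbL_odd_left {A : E n} (hA : A ∈ epar n 1) (B : E n) :
    sbL n A B = A * B - parConj n B * A := by
  rw [mem_epar_iff, sgn_one] at hA
  rw [sbL_apply, hA, mul_smul_comm, ← smul_mul_assoc, ← add_mul,
    show B + parConj n B + (-1 : ℂ) • (B - parConj n B) = (2 : ℂ) • parConj n B by module,
    smul_mul_assoc, smul_smul]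
  norm_num

lemma sbL_of_mem_epar {α β : ZMod 2} {A B : E n} (hA : A ∈ epar n α) (hB : B ∈ epar n β) :
    sbL n A B = A * B - sgn (α * β) • (B * A) := by
  rcases zmod_two_cases α with rfl | rfl
  · rw [sbL_even_left hA, zero_mul, sgn_zero, one_smul]
  · rw [sbL_odd_left hA, mem_epar_iff.1 hB, one_mul, smul_mul_assoc]

lemma sbL_mem_epar {α β : ZMod 2} {A B : E n} (hA : A ∈ epar n α) (hB : B ∈ epar n β) :
    sbL n A B ∈ epar n (α + β) := by
  rw [sbL_of_mem_epar hA hB]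
  refine Submodule.sub_mem _ (mul_mem_epar hA hB) (Submodule.smul_mem _ _ ?_)
  rw [add_comm]; exact mul_mem_epar hB hA

lemma sbL_skew {α β : ZMod 2} {A B : E n} (hA : A ∈ epar n α) (hB : B ∈ epar n β) :
    sbL n A B = - (sgn (α * β) • sbL n B A) := by
  rw [sbL_of_mem_epar hA hB, sbL_of_mem_epar hB hA, smul_sub, smul_smul, mul_comm β α,
    sgn_mul_self, one_smul]
  abel

lemma twistedCommutator_jacobi {R : Type*} [Ring R] [Algebra ℂ R] (A B C : R) (a b c : ℂ)
    (ha : a * a = 1) :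
    A * (B * C - c • (C * B)) - (a * b) • ((B * C - c • (C * B)) * A)
    = (A * B - a • (B * A)) * C - (b * c) • (C * (A * B - a • (B * A)))
      + a • (B * (A * C - b • (C * A)) - (a * c) • ((A * C - b • (C * A)) * B)) := by
  simp only [mul_sub, sub_mul, smul_sub, mul_smul_comm, smul_mul_assoc, smul_smul, mul_assoc]
  rw [← mul_assoc a a c, ← mul_assoc a a (c * b), ha, one_mul, one_mul, mul_comm c b]
  module

lemma jacobi_of_mem_epar {α β γ : ZMod 2} {A B C : E n} (hA : A ∈ epar n α) (hB : B ∈ epar n β)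
    (hC : C ∈ epar n γ) :
    sbL n A (sbL n B C) = sbL n (sbL n A B) C + sgn (α * β) • sbL n B (sbL n A C) := by
  rw [sbL_of_mem_epar hA (sbL_mem_epar hB hC), sbL_of_mem_epar (sbL_mem_epar hA hB) hC,
    sbL_of_mem_epar hB (sbL_mem_epar hA hC), sbL_of_mem_epar hA hB, sbL_of_mem_epar hB hC,
    sbL_of_mem_epar hA hC, mul_add, mul_add, add_mul, sgn_add, sgn_add, sgn_add, mul_comm β α]
  exact twistedCommutator_jacobi A B C _ _ _ (sgn_mul_self _)

lemma parityProj_apply (p : ZMod 2) (A : E n) :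
    parityProj n p A = (2 : ℂ)⁻¹ • (A + sgn p • parConj n A) := rfl

lemma parityProj_mem_epar (p : ZMod 2) (A : E n) : parityProj n p A ∈ epar n p := by
  rw [mem_epar_iff, parityProj_apply, map_smul, map_add, map_smul, parConj_parConj,
    smul_comm (sgn p) (2 : ℂ)⁻¹, smul_add (sgn p), smul_smul (sgn p) (sgn p), sgn_mul_self,
    one_smul, add_comm]

lemma parityProj_zero_add_one (A : E n) : parityProj n 0 A + parityProj n 1 A = A := by
  rw [parityProj_apply, parityProj_apply, sgn_zero, sgn_one]; module

lemma parityProj_of_mem_epar {p : ZMod 2} {A : E n} (hA : A ∈ epar n p) :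
    parityProj n p A = A := by
  rw [parityProj_apply, mem_epar_iff.1 hA, smul_smul, sgn_mul_self, one_smul]; module

lemma eq_zero_of_mem_epar_of_ne {p q : ZMod 2} (h : p ≠ q) {A : E n} (hp : A ∈ epar n p)
    (hq : A ∈ epar n q) : A = 0 := by
  rw [mem_epar_iff] at hp hq
  have hsub : (sgn p - sgn q) • A = 0 := by
    rw [show (sgn p - sgn q) • A = sgn p • A - sgn q • A by module, ← hp, ← hq, sub_self]
  exact (smul_eq_zero.1 hsub).resolve_left (sub_ne_zero.2 (sgn_injective.ne h))

lemma parityProj_of_mem_epar_of_ne {p q : ZMod 2} (h : p ≠ q) {A : E n} (hA : A ∈ epar n q) :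
    parityProj n p A = 0 := by
  refine eq_zero_of_mem_epar_of_ne h (parityProj_mem_epar p A) ?_
  rw [parityProj_apply, mem_epar_iff.1 hA, smul_smul]
  exact Submodule.smul_mem _ _ (Submodule.add_mem _ hA (Submodule.smul_mem _ _ hA))

lemma sbL_parityProj (p : ZMod 2) {β : ZMod 2} (A : E n) {B : E n} (hB : B ∈ epar n β) :
    sbL n (parityProj n p A) B = parityProj n (p + β) (sbL n A B) := by
  have hproj : ∀ q, parityProj n (p + β) (sbL n (parityProj n q A) B)
      = if q = p then sbL n (parityProj n p A) B else 0 := by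
    intro q
    have hmem := sbL_mem_epar (parityProj_mem_epar q A) hB
    split_ifs with h
    · subst h; exact parityProj_of_mem_epar hmem
    · exact parityProj_of_mem_epar_of_ne (fun h' => h (add_right_cancel h').symm) hmem
  conv_rhs => rw [← parityProj_zero_add_one A, map_add, LinearMap.add_apply, map_add, hproj, hproj]
  rcases zmod_two_cases p with rfl | rfl <;> simp

lemma parityProj_mem {M : Submodule ℂ (E n)} (hM : ∀ A ∈ M, parConj n A ∈ M) (p : ZMod 2)
    {A : E n} (hA : A ∈ M) : parityProj n p A ∈ M :=
  M.smul_mem _ (M.add_mem hA (M.smul_mem _ (hM A hA)))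

lemma sbL_mem_of_homogeneous {M L K : Submodule ℂ (E n)} (hM : ∀ A ∈ M, parConj n A ∈ M)
    (hL : ∀ A ∈ L, parConj n A ∈ L)
    (h : ∀ α β, ∀ A ∈ M, ∀ B ∈ L, A ∈ epar n α → B ∈ epar n β → sbL n A B ∈ K)
    {A B : E n} (hA : A ∈ M) (hB : B ∈ L) : sbL n A B ∈ K := by
  have hproj := fun α β => h α β _ (parityProj_mem hM α hA) _ (parityProj_mem hL β hB)
    (parityProj_mem_epar _ _) (parityProj_mem_epar _ _)
  rw [← parityProj_zero_add_one A, ← parityProj_zero_add_one B]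
  simp only [map_add, LinearMap.add_apply]
  exact K.add_mem (K.add_mem (hproj _ _) (hproj _ _)) (K.add_mem (hproj _ _) (hproj _ _))

lemma jacobi {α β : ZMod 2} {A B : E n} (hA : A ∈ epar n α) (hB : B ∈ epar n β) (C : E n) :
    sbL n A (sbL n B C) = sbL n (sbL n A B) C + sgn (α * β) • sbL n B (sbL n A C) := by
  rw [← parityProj_zero_add_one C]
  simp only [map_add, smul_add, jacobi_of_mem_epar hA hB (parityProj_mem_epar _ _)]
  abel

end

/-! ### The Witt type algebra -/

section
variable {n}

/-- The generator `x_i` as an element of `Λ(n)`. -/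
abbrev gen (i : Fin n) : Lambda n := mono n {i}

lemma mulGen_mono_empty (i : Fin n) : mulGen n i (mono n ∅) = gen i := mulOp_apply_mono_empty _

lemma pd_gen (i j : Fin n) : pd n i (gen j) = if i = j then mono n ∅ else 0 := by
  rw [← mulGen_mono_empty, pd_mulGen_apply, pd_mono_empty, map_zero, sub_zero]

lemma Wmap_apply (F : Fin n → Lambda n) : Wmap n F = ∑ i, mulOp n (F i) * pd n i := rfl

lemma Wmap_gen (F : Fin n → Lambda n) (i : Fin n) : Wmap n F (gen i) = F i := by
  rw [Wmap_apply, LinearMap.sum_apply, Finset.sum_eq_single i]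
  · rw [Module.End.mul_apply, pd_gen, if_pos rfl, mulOp_apply_mono_empty]
  · intro j _ hj; rw [Module.End.mul_apply, pd_gen, if_neg hj, map_zero]
  · intro h; exact absurd (Finset.mem_univ _) h

lemma eq_Wmap_of_mem_Wn {A : E n} (hA : A ∈ Wn n) : A = Wmap n (fun i => A (gen i)) := by
  obtain ⟨F, rfl⟩ := hA
  congr 1; funext i; rw [Wmap_gen]

lemma Wn_ext {A B : E n} (hA : A ∈ Wn n) (hB : B ∈ Wn n) (h : ∀ i, A (gen i) = B (gen i)) :
    A = B := by
  rw [eq_Wmap_of_mem_Wn hA, eq_Wmap_of_mem_Wn hB]; congr 1; funext i; exact h i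

lemma Wmap_mem_Wn (F : Fin n → Lambda n) : Wmap n F ∈ Wn n := ⟨F, rfl⟩

lemma mulOp_mul_pd_mem_Wn (f : Lambda n) (i : Fin n) : mulOp n f * pd n i ∈ Wn n := by
  refine ⟨Pi.single i f, ?_⟩
  rw [Wmap_apply, Finset.sum_eq_single i]
  · simp
  · intro j _ hj; simp [hj]
  · intro h; exact absurd (Finset.mem_univ _) h

lemma pd_mem_Wn (i : Fin n) : pd n i ∈ Wn n := by
  have h := mulOp_mul_pd_mem_Wn (mono n ∅) i
  rwa [mulOp_mono_empty, one_mul] at h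

lemma apply_mono_empty_of_mem_Wn {A : E n} (hA : A ∈ Wn n) : A (mono n ∅) = 0 := by
  rw [eq_Wmap_of_mem_Wn hA, Wmap_apply, LinearMap.sum_apply]
  exact Finset.sum_eq_zero fun i _ => by rw [Module.End.mul_apply, pd_mono_empty, map_zero]

lemma parConj_mulOp_mul_pd (f : Lambda n) (i : Fin n) :
    parConj n (mulOp n f * pd n i) = -(mulOp n (par n f) * pd n i) := by
  rw [map_mul, parConj_mulOp, mem_epar_iff.1 (pd_mem_epar i), sgn_one, mul_smul_comm]
  module

lemma parConj_mem_Wn {A : E n} (hA : A ∈ Wn n) : parConj n A ∈ Wn n := by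
  rw [eq_Wmap_of_mem_Wn hA, Wmap_apply, map_sum]
  refine Submodule.sum_mem _ fun i _ => ?_
  rw [parConj_mulOp_mul_pd]
  exact Submodule.neg_mem _ (mulOp_mul_pd_mem_Wn _ _)

lemma sbL_mulOp_mul_pd_mulGen (f : Lambda n) (i j : Fin n) :
    sbL n (mulOp n f * pd n j) (mulGen n i) = if j = i then mulOp n f else 0 := by
  rw [sbL_odd_right _ (mulGen_mem_epar i), parConj_mulOp_mul_pd, mul_assoc, pd_mul_mulGen, mul_sub,
    ← mul_assoc, mulOp_mul_mulGen, end_mul_neg, ← mul_assoc]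
  split_ifs <;> simp

lemma sbL_mulGen {A : E n} (hA : A ∈ Wn n) (i : Fin n) :
    sbL n A (mulGen n i) = mulOp n (A (gen i)) := by
  conv_lhs => rw [eq_Wmap_of_mem_Wn hA, Wmap_apply]
  simp [sbL_mulOp_mul_pd_mulGen]

lemma eq_zero_of_mul_mulGen {C : E n} (h1 : C (mono n ∅) = 0)
    (h : ∀ i, C * mulGen n i = mulGen n i * parConj n C) : C = 0 := by
  have hgen : ∀ i f, C (mulGen n i f) = mulGen n i (par n (C (par n f))) := fun i f =>
    congrArg (fun D : E n => D f) (h i)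
  have hzero : ∀ f, C f = 0 ∧ C (par n f) = 0 := by
    intro f
    induction f using lambda_induction with
    | one => rw [par_mono_empty]; exact ⟨h1, h1⟩
    | add f g hf hg => simp [map_add, hf.1, hf.2, hg.1, hg.2]
    | smul c f hf => simp [map_smul, hf.1, hf.2]
    | gen_mul i f hf =>
      refine ⟨by rw [hgen, hf.2, map_zero, map_zero], ?_⟩
      rw [par_mulGen_apply, map_neg, hgen, par_par_apply, hf.1, map_zero, map_zero, neg_zero]
  exact LinearMap.ext fun f => (hzero f).1

lemma mem_Wn_of_sbL_mulGen {A : E n} (h1 : A (mono n ∅) = 0)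
    (h : ∀ i, ∃ g, sbL n A (mulGen n i) = mulOp n g) : A ∈ Wn n := by
  set B := Wmap n (fun i => A (gen i))
  have hB : B ∈ Wn n := Wmap_mem_Wn _
  have hC1 : (A - B) (mono n ∅) = 0 := by
    rw [LinearMap.sub_apply, h1, apply_mono_empty_of_mem_Wn hB, sub_zero]
  have hCgen : ∀ i, (A - B) (gen i) = 0 := by
    intro i; rw [LinearMap.sub_apply, Wmap_gen, sub_self]
  suffices hAB : A - B = 0 by rw [sub_eq_zero.1 hAB]; exact hB
  refine eq_zero_of_mul_mulGen hC1 fun i => ?_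
  obtain ⟨g, hg⟩ := h i
  have hbr : (A - B) * mulGen n i - mulGen n i * parConj n (A - B) = mulOp n (g - B (gen i)) := by
    rw [← sbL_odd_right _ (mulGen_mem_epar i), map_sub, LinearMap.sub_apply, hg, sbL_mulGen hB,
      map_sub]
  have hval := congrArg (fun D : E n => D (mono n ∅)) hbr
  simp only [LinearMap.sub_apply, Module.End.mul_apply, parConj_apply_apply, par_mono_empty,
    mulGen_mono_empty, mulOp_apply_mono_empty] at hval
  rw [← LinearMap.sub_apply, ← LinearMap.sub_apply, hCgen, hC1, map_zero, map_zero,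
    sub_zero] at hval
  rw [← hval, map_zero] at hbr
  exact sub_eq_zero.1 hbr

lemma sbL_mulGen_mul {α : ZMod 2} {A : E n} (hA : A ∈ epar n α) (i : Fin n) (C : E n) :
    sbL n A (mulGen n i * C) = sbL n A (mulGen n i) * C + sgn α • (mulGen n i * sbL n A C) := by
  have hX := mem_epar_iff.1 (mulGen_mem_epar (n := n) i)
  rcases zmod_two_cases α with rfl | rfl
  · rw [sbL_even_left hA, sbL_even_left hA, sbL_even_left hA, sgn_zero, one_smul, sub_mul, mul_sub]
    simp only [mul_assoc]; abel
  · rw [sbL_odd_left hA, sbL_odd_left hA, sbL_odd_left hA, map_mul, hX, sgn_one, sub_mul, mul_sub]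
    simp only [mul_assoc, smul_mul_assoc]; module

lemma exists_sbL_mulOp {α : ZMod 2} {A : E n} (hA : A ∈ Wn n) (hα : A ∈ epar n α)
    (f : Lambda n) : ∃ g, sbL n A (mulOp n f) = mulOp n g := by
  induction f using lambda_induction with
  | one => exact ⟨0, by rw [mulOp_mono_empty, sbL_even_right _ one_mem_epar]; simp⟩
  | add f g hf hg =>
    obtain ⟨a, ha⟩ := hf
    obtain ⟨b, hb⟩ := hg
    exact ⟨a + b, by simp only [map_add, ha, hb]⟩
  | smul c f hf =>
    obtain ⟨a, ha⟩ := hf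
    exact ⟨c • a, by simp only [map_smul, ha]⟩
  | gen_mul i f hf =>
    obtain ⟨a, ha⟩ := hf
    refine ⟨mulOp n (A (gen i)) f + sgn α • mulGen n i a, ?_⟩
    rw [mulOp_mulGen, sbL_mulGen_mul hα, ha, sbL_mulGen hA, map_add, mulOp_mulOp, map_smul,
      mulOp_mulGen]

lemma sbL_mulOp {α : ZMod 2} {A : E n} (hA : A ∈ Wn n) (hα : A ∈ epar n α) (f : Lambda n) :
    sbL n A (mulOp n f) = mulOp n (A f) := by
  obtain ⟨g, hg⟩ := exists_sbL_mulOp hA hα f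
  have hA1 := apply_mono_empty_of_mem_Wn hA
  suffices h : sbL n A (mulOp n f) (mono n ∅) = A f by
    rw [hg, mulOp_apply_mono_empty] at h
    rw [hg, h]
  rcases zmod_two_cases α with rfl | rfl
  · rw [sbL_even_left hα]; simp [hA1, mulOp_apply_mono_empty]
  · rw [sbL_odd_left hα]; simp [hA1, mulOp_apply_mono_empty]

lemma sbL_mem_Wn {A B : E n} (hA : A ∈ Wn n) (hB : B ∈ Wn n) : sbL n A B ∈ Wn n := by
  refine sbL_mem_of_homogeneous (fun _ => parConj_mem_Wn) (fun _ => parConj_mem_Wn) ?_ hA hB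
  intro α β A hA B hB hα hβ
  apply mem_Wn_of_sbL_mulGen
  · rw [sbL_of_mem_epar hα hβ]
    simp [apply_mono_empty_of_mem_Wn hA, apply_mono_empty_of_mem_Wn hB]
  · intro i
    have hjac := jacobi hα hβ (mulGen n i)
    rw [sbL_mulGen hB, sbL_mulGen hA, sbL_mulOp hA hα, sbL_mulOp hB hβ, ← map_smul] at hjac
    exact ⟨_, by rw [map_sub]; exact (sub_eq_of_eq_add hjac).symm⟩

lemma isGradedSubalgebra_Wn : IsGradedSubalgebra n (Wn n) where
  parConj_mem _ := parConj_mem_Wn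
  sbL_mem _ hA _ hB := sbL_mem_Wn hA hB

end

/-! ### Weights of diagonal derivations -/

section

/-- The diagonal derivation `∑ᵢ cᵢ xᵢ∂ᵢ`. -/
def diag (c : Fin n → ℂ) : E n := ∑ i, c i • (mulGen n i * pd n i)

variable {n} {L : Submodule ℂ (E n)}

lemma isSuperDer_sbL {p : ZMod 2} {a : E n} (ha : a ∈ epar n p) (h : ∀ x ∈ L, sbL n a x ∈ L) :
    IsSuperDer n L p (sbL n a) where
  maps α x hx := ⟨h x hx.1, by rw [add_comm]; exact sbL_mem_epar ha hx.2⟩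
  leib _ _ _ hx _ _ := jacobi ha hx.2 _

lemma IsSuperDer.add {p : ZMod 2} {D D' : E n →ₗ[ℂ] E n} (h : IsSuperDer n L p D)
    (h' : IsSuperDer n L p D') : IsSuperDer n L p (D + D') where
  maps α x hx := Submodule.add_mem _ (h.maps α x hx) (h'.maps α x hx)
  leib α β x hx y hy := by
    simp only [LinearMap.add_apply, h.leib α β x hx y hy, h'.leib α β x hx y hy, map_add, smul_add]
    abel

lemma IsSuperDer.apply_sbL {p : ZMod 2} {D : E n →ₗ[ℂ] E n} (h : IsSuperDer n L p D)
    (hL : ∀ A ∈ L, parConj n A ∈ L) {α : ZMod 2} {x y : E n} (hx : x ∈ L) (hα : x ∈ epar n α)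
    (hy : y ∈ L) : D (sbL n x y) = sbL n (D x) y + sgn (p * α) • sbL n x (D y) := by
  have hleib := fun q => h.leib α q x ⟨hx, hα⟩ (parityProj n q y)
    ⟨parityProj_mem hL q hy, parityProj_mem_epar q y⟩
  rw [← parityProj_zero_add_one y]
  simp only [map_add, smul_add, hleib]
  abel

lemma IsSuperDer.apply_mem {p : ZMod 2} {D : E n →ₗ[ℂ] E n} (h : IsSuperDer n L p D)
    (hL : ∀ A ∈ L, parConj n A ∈ L) {x : E n} (hx : x ∈ L) : D x ∈ L := by
  rw [← parityProj_zero_add_one x, map_add]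
  exact L.add_mem (h.maps 0 _ ⟨parityProj_mem hL _ hx, parityProj_mem_epar _ _⟩).1
    (h.maps 1 _ ⟨parityProj_mem hL _ hx, parityProj_mem_epar _ _⟩).1

lemma end_ext_entries {A B : E n} (h : ∀ S T, A (mono n S) T = B (mono n S) T) : A = B :=
  end_ext_mono fun S => funext fun T => h S T

lemma mulGen_mul_pd_mono (i : Fin n) (S : Finset (Fin n)) :
    (mulGen n i * pd n i) (mono n S) = if i ∈ S then mono n S else 0 := by
  rw [Module.End.mul_apply]
  split_ifs with h
  · rw [pd_mono_of_mem _ _ h, map_smul, mulGen_mono_of_notMem _ _ (Finset.notMem_erase i S),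
      koszulSign_erase_self, smul_smul, koszulSign_mul_self, one_smul, Finset.insert_erase h]
  · rw [pd_mono_of_notMem _ _ h, map_zero]

lemma diag_mono (c : Fin n → ℂ) (S : Finset (Fin n)) :
    diag n c (mono n S) = (∑ i ∈ S, c i) • mono n S := by
  simp only [diag, LinearMap.sum_apply, LinearMap.smul_apply, mulGen_mul_pd_mono, smul_ite,
    smul_zero, Finset.sum_smul, Finset.sum_ite_mem, Finset.univ_inter]

lemma diag_gen (c : Fin n → ℂ) (i : Fin n) : diag n c (gen i) = c i • gen i := by
  rw [diag_mono, Finset.sum_singleton]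

lemma diag_apply (c : Fin n → ℂ) (f : Lambda n) (T : Finset (Fin n)) :
    diag n c f T = (∑ i ∈ T, c i) * f T := by
  conv_lhs => rw [eq_sum_smul_mono f]
  simp only [map_sum, map_smul, diag_mono, Finset.sum_apply, Pi.smul_apply, mono_apply, smul_eq_mul]
  simp [mul_comm]

lemma diag_mem_Wn (c : Fin n → ℂ) : diag n c ∈ Wn n :=
  Submodule.sum_mem _ fun _ _ => Submodule.smul_mem _ _ (mulOp_mul_pd_mem_Wn _ _)

lemma diag_mem_epar (c : Fin n → ℂ) : diag n c ∈ epar n 0 :=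
  Submodule.sum_mem _ fun i _ => Submodule.smul_mem _ _ (mulGen_mul_pd_mem_epar i i)

lemma diag_add (c d : Fin n → ℂ) : diag n (c + d) = diag n c + diag n d := by
  simp only [diag, Pi.add_apply, add_smul, Finset.sum_add_distrib]

lemma diag_smul (r : ℂ) (c : Fin n → ℂ) : diag n (r • c) = r • diag n c := by
  simp only [diag, Pi.smul_apply, smul_eq_mul, mul_smul, Finset.smul_sum]

lemma CC_eq_diag : CC n = diag n 1 := by simp [CC, diag, mulGen]

lemma sbL_diag_entry (c : Fin n → ℂ) (A : E n) (S T : Finset (Fin n)) :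
    sbL n (diag n c) A (mono n S) T = (∑ i ∈ T, c i - ∑ i ∈ S, c i) * A (mono n S) T := by
  rw [sbL_even_left (diag_mem_epar c), LinearMap.sub_apply, Module.End.mul_apply,
    Module.End.mul_apply, Pi.sub_apply, diag_apply, diag_mono, map_smul, Pi.smul_apply,
    smul_eq_mul]
  ring

lemma sbL_diag_diag (c d : Fin n → ℂ) : sbL n (diag n c) (diag n d) = 0 := by
  refine end_ext_entries fun S T => ?_
  rw [sbL_diag_entry, diag_mono, Pi.smul_apply, mono_apply, LinearMap.zero_apply, Pi.zero_apply]
  by_cases h : T = S <;> simp [h]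

lemma diag_weight_of_entry_ne_zero {c : Fin n → ℂ} {A : E n} {l : ℂ}
    (h : sbL n (diag n c) A = l • A) {S T : Finset (Fin n)} (hA : A (mono n S) T ≠ 0) :
    ∑ i ∈ T, c i - ∑ i ∈ S, c i = l := by
  have hentry := congrArg (fun B : E n => B (mono n S) T) h
  simp only [sbL_diag_entry, LinearMap.smul_apply, Pi.smul_apply, smul_eq_mul] at hentry
  exact mul_right_cancel₀ hA hentry

lemma pow_sbL_diag_sub_entry (c : Fin n → ℂ) (l : ℂ) (A : E n) (S T : Finset (Fin n)) (m : ℕ) :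
    ((sbL n (diag n c) - l • 1) ^ m) A (mono n S) T
      = ((∑ i ∈ T, c i - ∑ i ∈ S, c i) - l) ^ m * A (mono n S) T := by
  induction m with
  | zero => simp
  | succ m ih =>
    rw [pow_succ', Module.End.mul_apply, LinearMap.sub_apply, LinearMap.sub_apply, Pi.sub_apply,
      sbL_diag_entry, LinearMap.smul_apply, Module.End.one_apply, LinearMap.smul_apply,
      Pi.smul_apply, ih, smul_eq_mul]
    ring

lemma sbL_diag_eq_smul_of_pow {c : Fin n → ℂ} {l : ℂ} {A : E n} {m : ℕ}
    (h : ((sbL n (diag n c) - l • 1) ^ m) A = 0) : sbL n (diag n c) A = l • A := by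
  refine end_ext_entries fun S T => ?_
  have hentry := pow_sbL_diag_sub_entry c l A S T m
  rw [h, LinearMap.zero_apply, Pi.zero_apply] at hentry
  rw [sbL_diag_entry, LinearMap.smul_apply, Pi.smul_apply, smul_eq_mul]
  rcases mul_eq_zero.1 hentry.symm with h0 | h0
  · rw [sub_eq_zero.1 (eq_zero_of_pow_eq_zero h0)]
  · rw [h0, mul_zero, mul_zero]

lemma diag_eigenvector_induction {c : Fin n → ℂ} (hc : ∀ x ∈ L, sbL n (diag n c) x ∈ L)
    {P : E n → Prop} (zero : P 0) (add : ∀ x y, P x → P y → P (x + y))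
    (eigen : ∀ x ∈ L, ∀ l : ℂ, sbL n (diag n c) x = l • x → P x) {x : E n} (hx : x ∈ L) :
    P x := by
  have hspan := Submodule.inf_iSup_genEigenspace (f := sbL n (diag n c)) (p := L) hc ⊤
  rw [show (⨆ μ, (Module.End.genEigenspace (sbL n (diag n c)) μ) ⊤) = ⊤ from
    Module.End.iSup_maxGenEigenspace_eq_top _, inf_top_eq] at hspan
  rw [hspan] at hx
  refine Submodule.iSup_induction _ (motive := P) hx (fun l y hy => eigen y hy.1 l ?_) zero add
  obtain ⟨m, hm⟩ := (Module.End.mem_maxGenEigenspace _ _ _).1 hy.2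
  exact sbL_diag_eq_smul_of_pow hm

lemma exists_sbL_diag_add_eq_zero {c : Fin n → ℂ} (hc : ∀ x ∈ L, sbL n (diag n c) x ∈ L) {u : E n}
    (hu : u ∈ L) : ∃ a ∈ L, sbL n (diag n c) (u + sbL n (diag n c) a) = 0 := by
  refine diag_eigenvector_induction hc
    (P := fun u => ∃ a ∈ L, sbL n (diag n c) (u + sbL n (diag n c) a) = 0) ?_ ?_ ?_ hu
  · exact ⟨0, L.zero_mem, by simp only [map_zero, add_zero]⟩
  · rintro x y ⟨a, ha, hxa⟩ ⟨b, hb, hyb⟩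
    refine ⟨a + b, L.add_mem ha hb, ?_⟩
    rw [map_add _ a, add_add_add_comm, map_add, hxa, hyb, add_zero]
  · intro x hx l hl
    rcases eq_or_ne l 0 with rfl | h
    · exact ⟨0, L.zero_mem, by rw [map_zero, add_zero, hl, zero_smul]⟩
    · refine ⟨-(l⁻¹ • x), L.neg_mem (L.smul_mem _ hx), ?_⟩
      rw [map_neg, map_smul, hl, smul_smul, inv_mul_cancel₀ h, one_smul, add_neg_cancel, map_zero]

lemma IsSuperDer.sbL_diag_apply {p : ZMod 2} {D : E n →ₗ[ℂ] E n} (h : IsSuperDer n L p D)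
    (hL : ∀ A ∈ L, parConj n A ∈ L) {c : Fin n → ℂ} (hc : diag n c ∈ L)
    (h0 : sbL n (diag n c) (D (diag n c)) = 0) {x : E n} (hx : x ∈ L) {l : ℂ}
    (hl : sbL n (diag n c) x = l • x) : sbL n (diag n c) (D x) = l • D x := by
  have hleib := h.apply_sbL hL hc (diag_mem_epar c) hx
  rw [hl, map_smul, mul_zero, sgn_zero, one_smul] at hleib
  have hcomm := jacobi (diag_mem_epar c) (h.maps 0 _ ⟨hc, diag_mem_epar c⟩).2 x
  rw [h0, map_zero, LinearMap.zero_apply, zero_add, zero_mul, sgn_zero, one_smul, hl,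
    map_smul] at hcomm
  have hdiff : sbL n (diag n c) (D x) - l • D x = - sbL n (D (diag n c)) x := by
    rw [hleib]; abel
  apply sbL_diag_eq_smul_of_pow (m := 2)
  rw [pow_two, Module.End.mul_apply, LinearMap.sub_apply, LinearMap.sub_apply]
  simp only [LinearMap.smul_apply, Module.End.one_apply]
  rw [hdiff, map_neg, hcomm]
  module

lemma IsSuperDer.exists_add_sbL_preserves_weights {p : ZMod 2} {D : E n →ₗ[ℂ] E n}
    (h : IsSuperDer n L p D) (hL : IsGradedSubalgebra n L) {c : Fin n → ℂ} (hc : diag n c ∈ L) :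
    ∃ a ∈ L ⊓ epar n p, IsSuperDer n L p (D + sbL n a) ∧ ∀ x ∈ L, ∀ l : ℂ,
      sbL n (diag n c) x = l • x → sbL n (diag n c) ((D + sbL n a) x) = l • (D + sbL n a) x := by
  have hstable : ∀ x ∈ L ⊓ epar n p, sbL n (diag n c) x ∈ L ⊓ epar n p := fun x hx =>
    ⟨hL.sbL_mem _ hc _ hx.1, zero_add p ▸ sbL_mem_epar (diag_mem_epar c) hx.2⟩
  obtain ⟨b, hb, hfix⟩ := exists_sbL_diag_add_eq_zero hstable
    (zero_add p ▸ h.maps 0 _ ⟨hc, diag_mem_epar c⟩)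
  have ha : -b ∈ L ⊓ epar n p := Submodule.neg_mem _ hb
  have hder := h.add (isSuperDer_sbL ha.2 fun x hx => hL.sbL_mem _ ha.1 _ hx)
  refine ⟨-b, ha, hder, fun x hx l hl => hder.sbL_diag_apply hL.parConj_mem hc ?_ hx hl⟩
  rw [LinearMap.add_apply, sbL_skew ha.2 (diag_mem_epar c), mul_zero, sgn_zero, one_smul, map_neg,
    neg_neg]
  exact hfix

end

/-! ### The derivations `(1 − εω)∂ᵢ` -/

section

/-- The derivation `(1 − εx₁⋯x_n)∂ᵢ`; for `ε = 0` it is `∂ᵢ`, and for `ε = 1` it spans, as `i`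
varies, the degree `−1` component of `S̃(n)`. -/
def deformedPd (ε : ℂ) (i : Fin n) : E n :=
  mulOp n (mono n ∅ - ε • omegaTop n) * pd n i

/-- The endomorphisms of `Λ(n)` with values in `ℂ x₁⋯x_n`. -/
def topValued : Submodule ℂ (E n) where
  carrier := {A | ∀ f, ∀ T ≠ Finset.univ, A f T = 0}
  add_mem' {A B} hA hB f T hT := by
    rw [LinearMap.add_apply, Pi.add_apply, hA f T hT, hB f T hT, add_zero]
  zero_mem' _ _ _ := rfl
  smul_mem' c A hA f T hT := by
    rw [LinearMap.smul_apply, Pi.smul_apply, hA f T hT, smul_zero]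

/-- A graded subalgebra of `W(n)` which contains the `(1 − εx₁⋯x_n)∂ᵢ` and a diagonal derivation
`∑ᵢ cᵢ xᵢ∂ᵢ` so regular that its eigenvalue `−cᵢ` on `L` has multiplicity one. -/
structure HasRegularDiag (ε : ℂ) (c : Fin n → ℂ) (L : Submodule ℂ (E n)) : Prop where
  isGradedSubalgebra : IsGradedSubalgebra n L
  le_Wn : L ≤ Wn n
  diag_mem : diag n c ∈ L
  deformedPd_mem : ∀ i, deformedPd n ε i ∈ L
  parity : ε = 0 ∨ Even n
  trace : ε = 0 ∨ ∑ i, c i = 0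
  multiplicity_one : ∀ i, ∀ x ∈ L, sbL n (diag n c) x = -c i • x → ∃ r : ℂ, x = r • deformedPd n ε i

variable {n} {ε : ℂ} {c : Fin n → ℂ} {L : Submodule ℂ (E n)}

lemma mulOp_omegaTop (f : Lambda n) : mulOp n (omegaTop n) f = f ∅ • omegaTop n := by
  induction f using lambda_induction with
  | one => rw [mulOp_apply_mono_empty, mono_apply, if_pos rfl, one_smul]
  | add f g hf hg => rw [map_add, hf, hg, Pi.add_apply, add_smul]
  | smul c f hf => rw [map_smul, hf, Pi.smul_apply, smul_smul, smul_eq_mul]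
  | gen_mul i f hf =>
    have hcomm := congrArg (fun A : E n => A f) (mulOp_mul_mulGen (omegaTop n) i)
    simp only [Module.End.mul_apply] at hcomm
    have htop : mulGen n i (omegaTop n) = 0 := mulGen_mono_of_mem _ _ (Finset.mem_univ i)
    rw [hcomm, omegaTop, par_mono, map_smul, LinearMap.smul_apply, ← omegaTop, hf, map_smul,
      map_smul, htop, mulGen_apply, if_neg (Finset.notMem_empty i), zero_smul, smul_zero, smul_zero]

lemma mulOp_mem_epar {p : ZMod 2} {f : Lambda n} (hf : f ∈ lpar n p) : mulOp n f ∈ epar n p := by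
  rw [mem_epar_iff, parConj_mulOp, mem_lpar_iff.1 hf, map_smul]

lemma mulOp_omegaTop_mul_mem_topValued (A : E n) : mulOp n (omegaTop n) * A ∈ topValued n := by
  intro f T hT
  rw [Module.End.mul_apply, mulOp_omegaTop, Pi.smul_apply, omegaTop, mono_apply, if_neg hT,
    smul_zero]

lemma mul_mem_topValued {A : E n} (hA : A ∈ topValued n) (B : E n) : A * B ∈ topValued n :=
  fun f => hA (B f)

lemma apply_eq_smul_omegaTop_of_mem_topValued {A : E n} (hA : A ∈ topValued n) (f : Lambda n) :
    A f = A f Finset.univ • omegaTop n := by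
  funext T
  rw [Pi.smul_apply, omegaTop, mono_apply]
  split_ifs with h
  · rw [h, smul_eq_mul, mul_one]
  · rw [smul_zero, hA f T h]

lemma parConj_mem_topValued {A : E n} (hA : A ∈ topValued n) : parConj n A ∈ topValued n := by
  intro f T hT
  rw [parConj_apply_apply, par_apply, hA _ T hT, mul_zero]

lemma apply_omegaTop_of_ne_univ {A : E n} (hA : A ∈ Wn n) (h0 : ∀ i, A (gen i) ∅ = 0)
    {T : Finset (Fin n)} (hT : T ≠ Finset.univ) : A (omegaTop n) T = 0 := by
  rw [eq_Wmap_of_mem_Wn hA, Wmap_apply, LinearMap.sum_apply, Finset.sum_apply]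
  refine Finset.sum_eq_zero fun i _ => ?_
  rw [Module.End.mul_apply, omegaTop, pd_mono_of_mem _ _ (Finset.mem_univ i), map_smul,
    Pi.smul_apply, mulOp_apply, Finset.sum_eq_zero, smul_zero]
  intro S hS
  rw [mono_apply]
  split_ifs with hU
  · rcases S.eq_empty_or_nonempty with rfl | ⟨j, hj⟩
    · rw [h0, mul_zero, zero_mul]
    · refine absurd (Finset.eq_univ_iff_forall.2 fun k => ?_) hT
      have herase : ∀ k ≠ i, k ∈ T \ S := fun k hk =>
        hU ▸ Finset.mem_erase.2 ⟨hk, Finset.mem_univ k⟩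
      obtain rfl : j = i := by
        by_contra hji
        exact (Finset.mem_sdiff.1 (herase j hji)).2 hj
      rcases eq_or_ne k j with rfl | hk
      · exact Finset.mem_powerset.1 hS hj
      · exact (Finset.mem_sdiff.1 (herase k hk)).1
  · rw [mul_zero]

lemma mul_mem_topValued_of_mem_Wn {A B : E n} (hA : A ∈ Wn n) (h0 : ∀ i, A (gen i) ∅ = 0)
    (hB : B ∈ topValued n) : A * B ∈ topValued n := by
  intro f T hT
  rw [Module.End.mul_apply, apply_eq_smul_omegaTop_of_mem_topValued hB f, map_smul, Pi.smul_apply,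
    apply_omegaTop_of_ne_univ hA h0 hT, smul_zero]

lemma parConj_apply_gen_empty {A : E n} (h0 : ∀ i, A (gen i) ∅ = 0) (i : Fin n) :
    parConj n A (gen i) ∅ = 0 := by
  rw [parConj_apply_apply, par_mono, par_apply, map_smul, Pi.smul_apply, h0, smul_zero, mul_zero]

lemma sbL_mem_topValued {A B : E n} (hA : A ∈ topValued n) (hB : B ∈ Wn n)
    (h0 : ∀ i, B (gen i) ∅ = 0) : sbL n A B ∈ topValued n := by
  have hB' := parConj_mem_Wn hB
  have h0' := parConj_apply_gen_empty h0
  rw [sbL_apply, add_mul, sub_mul]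
  refine Submodule.sub_mem _ (mul_mem_topValued hA B) (Submodule.smul_mem _ _
    (Submodule.add_mem _ (Submodule.add_mem _ ?_ ?_) (Submodule.sub_mem _ ?_ ?_)))
  · exact mul_mem_topValued_of_mem_Wn hB h0 hA
  · exact mul_mem_topValued_of_mem_Wn hB' h0' hA
  · exact mul_mem_topValued_of_mem_Wn hB h0 (parConj_mem_topValued hA)
  · exact mul_mem_topValued_of_mem_Wn hB' h0' (parConj_mem_topValued hA)

lemma pd_apply_univ (i : Fin n) (f : Lambda n) : pd n i f Finset.univ = 0 := by
  rw [pd_apply, if_pos (Finset.mem_univ _)]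

lemma deformedPd_apply (ε : ℂ) (i : Fin n) (f : Lambda n) :
    deformedPd n ε i f = pd n i f - (ε * pd n i f ∅) • omegaTop n := by
  rw [deformedPd, Module.End.mul_apply, map_sub, LinearMap.sub_apply, mulOp_mono_empty, map_smul,
    LinearMap.smul_apply, mulOp_omegaTop, smul_smul, Module.End.one_apply]

lemma deformedPd_gen (ε : ℂ) (i j : Fin n) :
    deformedPd n ε i (gen j) = if i = j then mono n ∅ - ε • omegaTop n else 0 := by
  rw [deformedPd_apply, pd_gen]
  split_ifs <;> simp [mono_apply]

lemma deformedPd_mem_Wn (ε : ℂ) (i : Fin n) : deformedPd n ε i ∈ Wn n := mulOp_mul_pd_mem_Wn _ _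

lemma deformedPd_mem_epar (hε : ε = 0 ∨ Even n) (i : Fin n) : deformedPd n ε i ∈ epar n 1 := by
  have heven : mono n ∅ - ε • omegaTop n ∈ lpar n 0 := by
    refine Submodule.sub_mem _ (by simpa using mono_mem_lpar (n := n) ∅) ?_
    rcases hε with rfl | hn
    · rw [zero_smul]; exact Submodule.zero_mem _
    · have htop := mono_mem_lpar (n := n) Finset.univ
      rw [Finset.card_univ, Fintype.card_fin, (ZMod.natCast_eq_zero_iff_even).2 hn] at htop
      exact Submodule.smul_mem _ _ htop
  have hmul := mul_mem_epar (mulOp_mem_epar heven) (pd_mem_epar i)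
  rwa [zero_add] at hmul

lemma sbL_diag_gen (c : Fin n → ℂ) (A : E n) (i : Fin n) :
    sbL n (diag n c) A (gen i) = diag n c (A (gen i)) - c i • A (gen i) := by
  rw [sbL_even_left (diag_mem_epar c), LinearMap.sub_apply, Module.End.mul_apply,
    Module.End.mul_apply, diag_gen, map_smul]

lemma sbL_diag_deformedPd (c : Fin n → ℂ) (ε : ℂ) (i : Fin n) :
    sbL n (diag n c) (deformedPd n ε i)
      = -c i • deformedPd n ε i - (ε * ∑ j, c j) • (mulOp n (omegaTop n) * pd n i) := by
  have hω : diag n c (omegaTop n) = (∑ j, c j) • omegaTop n := diag_mono c _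
  have h1 : diag n c (mono n ∅) = 0 := by rw [diag_mono, Finset.sum_empty, zero_smul]
  refine Wn_ext (sbL_mem_Wn (diag_mem_Wn c) (deformedPd_mem_Wn ε i)) (Submodule.sub_mem _
    (Submodule.smul_mem _ _ (deformedPd_mem_Wn ε i))
    (Submodule.smul_mem _ _ (mulOp_mul_pd_mem_Wn _ i))) fun j => ?_
  rw [sbL_diag_gen, deformedPd_gen, LinearMap.sub_apply, LinearMap.smul_apply, LinearMap.smul_apply,
    deformedPd_gen, Module.End.mul_apply, pd_gen]
  split_ifs with h
  · subst h
    rw [mulOp_apply_mono_empty, map_sub, map_smul, hω, h1]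
    module
  · simp only [map_zero, smul_zero, sub_zero]

lemma sbL_deformedPd_gen_apply (hε : ε = 0 ∨ Even n) {x : E n} (hx : x ∈ Wn n)
    (h0 : ∀ i, x (gen i) ∅ = 0) (i j : Fin n) {T : Finset (Fin n)}
    (hT : ε = 0 ∨ T ≠ Finset.univ) :
    sbL n (deformedPd n ε i) x (gen j) T = pd n i (x (gen j)) T := by
  have h1x := apply_mono_empty_of_mem_Wn (parConj_mem_Wn hx)
  have hωx : ε * parConj n x (omegaTop n) T = 0 := by
    rcases hT with rfl | hT
    · exact zero_mul _
    · rw [apply_omegaTop_of_ne_univ (parConj_mem_Wn hx) (parConj_apply_gen_empty h0) hT, mul_zero]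
  have hωT : ε * pd n i (x (gen j)) ∅ * omegaTop n T = 0 := by
    rcases hT with rfl | hT
    · rw [zero_mul, zero_mul]
    · rw [omegaTop, mono_apply, if_neg hT, mul_zero]
  rw [sbL_odd_left (deformedPd_mem_epar hε i), LinearMap.sub_apply, Module.End.mul_apply,
    Module.End.mul_apply, deformedPd_apply, deformedPd_gen, Pi.sub_apply, Pi.sub_apply,
    Pi.smul_apply, smul_eq_mul, hωT, sub_zero, sub_eq_self]
  split_ifs
  · rw [map_sub, map_smul, h1x, Pi.sub_apply, Pi.smul_apply, smul_eq_mul, hωx, Pi.zero_apply,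
      sub_zero]
  · rw [map_zero, Pi.zero_apply]

lemma eq_zero_of_pd_eq_zero {f : Lambda n} (h0 : f ∅ = 0) (h : ∀ i, pd n i f = 0) : f = 0 := by
  funext S
  rcases S.eq_empty_or_nonempty with rfl | ⟨i, hi⟩
  · exact h0
  · have hpd := congrFun (h i) (S.erase i)
    rw [pd_apply, if_neg (Finset.notMem_erase i S), Finset.insert_erase hi] at hpd
    exact (mul_eq_zero.1 hpd).resolve_left (koszulSign_ne_zero _ _)

lemma eq_zero_of_sbL_deformedPd_mem_topValued (hε : ε = 0 ∨ Even n) {x : E n} (hx : x ∈ Wn n)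
    (h0 : ∀ i, x (gen i) ∅ = 0) (h : ∀ i, sbL n (deformedPd n ε i) x ∈ topValued n) : x = 0 := by
  refine Wn_ext hx (Submodule.zero_mem _) fun j => eq_zero_of_pd_eq_zero (h0 j) fun i => ?_
  funext T
  by_cases hT : T = Finset.univ
  · rw [hT, pd_apply_univ, Pi.zero_apply]
  · rw [← sbL_deformedPd_gen_apply hε hx h0 i j (Or.inr hT), h i _ T hT, Pi.zero_apply]

end

/-! ### Superderivations preserving the weight spaces -/

section

/-- A map obeying the Leibniz rule with sign `s` against the `(1 − εx₁⋯x_n)∂ᵢ`, which preserves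
the eigenspaces of the diagonal derivation `∑ᵢ cᵢ xᵢ∂ᵢ` on `L` and sends `(1 − εx₁⋯x_n)∂ᵢ` to
`νx₁⋯x_n∂ᵢ`. Every superderivation takes this form after subtracting an inner derivation and a
diagonal one. -/
structure IsReducedDer (ε : ℂ) (c : Fin n → ℂ) (L : Submodule ℂ (E n)) (s ν : ℂ)
    (D : E n →ₗ[ℂ] E n) : Prop where
  mem_Wn : ∀ x ∈ L, D x ∈ Wn n
  weight : ∀ x ∈ L, ∀ l : ℂ, sbL n (diag n c) x = l • x → sbL n (diag n c) (D x) = l • D x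
  leibniz : ∀ i, ∀ x ∈ L, D (sbL n (deformedPd n ε i) x)
    = sbL n (D (deformedPd n ε i)) x + s • sbL n (deformedPd n ε i) (D x)
  apply_deformedPd : ∀ i, D (deformedPd n ε i) = ν • (mulOp n (omegaTop n) * pd n i)

variable {n} {ε : ℂ} {c : Fin n → ℂ} {L : Submodule ℂ (E n)} {s ν : ℂ} {D : E n →ₗ[ℂ] E n}

lemma apply_gen_empty_of_weight_ne {l : ℂ} {x : E n} (hl : sbL n (diag n c) x = l • x) {i : Fin n}
    (hne : l ≠ -c i) : x (gen i) ∅ = 0 := by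
  by_contra h
  apply hne
  rw [← diag_weight_of_entry_ne_zero hl h, Finset.sum_empty, Finset.sum_singleton, zero_sub]

lemma sbL_diag_sbL {a : Fin n → ℂ} {l k : ℂ} {α : ZMod 2} {A B : E n} (hα : A ∈ epar n α)
    (hA : sbL n (diag n a) A = l • A) (hB : sbL n (diag n a) B = k • B) :
    sbL n (diag n a) (sbL n A B) = (l + k) • sbL n A B := by
  rw [jacobi (diag_mem_epar a) hα, hA, hB, zero_mul, sgn_zero, one_smul, map_smul, map_smul,
    LinearMap.smul_apply, add_smul]

lemma HasRegularDiag.sbL_diag_deformedPd_eq_smul (h : HasRegularDiag n ε c L) (i : Fin n) :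
    sbL n (diag n c) (deformedPd n ε i) = -c i • deformedPd n ε i := by
  rw [sbL_diag_deformedPd, sub_eq_self]
  rcases h.trace with hε | hc
  · rw [hε, zero_mul, zero_smul]
  · rw [hc, mul_zero, zero_smul]

lemma HasRegularDiag.sbL_deformedPd_mem (h : HasRegularDiag n ε c L) (i : Fin n) {x : E n}
    (hx : x ∈ L) : sbL n (deformedPd n ε i) x ∈ L :=
  h.isGradedSubalgebra.sbL_mem _ (h.deformedPd_mem i) _ hx

lemma HasRegularDiag.sbL_diag_sbL_deformedPd (h : HasRegularDiag n ε c L) (i : Fin n)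
    {x : E n} {l : ℂ} (hl : sbL n (diag n c) x = l • x) :
    sbL n (diag n c) (sbL n (deformedPd n ε i) x) = (-c i + l) • sbL n (deformedPd n ε i) x :=
  sbL_diag_sbL (deformedPd_mem_epar h.parity i) (h.sbL_diag_deformedPd_eq_smul i) hl

lemma IsReducedDer.apply_mem_topValued_of_weight_eq (hD : IsReducedDer n ε c L s ν D)
    (h : HasRegularDiag n ε c L) {x : E n} (hx : x ∈ L) {i : Fin n}
    (hl : sbL n (diag n c) x = -c i • x) : D x ∈ topValued n := by
  obtain ⟨r, rfl⟩ := h.multiplicity_one i x hx hl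
  rw [map_smul, hD.apply_deformedPd]
  exact Submodule.smul_mem _ _ (Submodule.smul_mem _ _ (mulOp_omegaTop_mul_mem_topValued _))

lemma HasRegularDiag.card_lt_of_sbL_deformedPd_entry (h : HasRegularDiag n ε c L) {x : E n}
    (hx : x ∈ L) {l : ℂ} (hl : sbL n (diag n c) x = l • x) (hne : ∀ i, l ≠ -c i) {k : ℕ}
    (hk : ∀ m T, x (gen m) T ≠ 0 → T.card < k + 1) (i : Fin n) (hne' : ∀ j, -c i + l ≠ -c j)
    (m : Fin n) (T : Finset (Fin n)) (hT : sbL n (deformedPd n ε i) x (gen m) T ≠ 0) :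
    T.card < k := by
  have hTu : ε = 0 ∨ T ≠ Finset.univ := by
    refine h.trace.imp_right fun hc hTu => hne' m ?_
    have hw := diag_weight_of_entry_ne_zero (h.sbL_diag_sbL_deformedPd i hl) hT
    rw [← hw, hTu, hc, Finset.sum_singleton, zero_sub]
  rw [sbL_deformedPd_gen_apply h.parity (h.le_Wn hx)
    (fun j => apply_gen_empty_of_weight_ne hl (hne j)) i m hTu, pd_apply] at hT
  have hiT : i ∉ T := fun hi => hT (if_pos hi)
  rw [if_neg hiT] at hT
  have hcard := hk m _ (right_ne_zero_of_mul hT)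
  rw [Finset.card_insert_of_notMem hiT] at hcard
  omega

lemma IsReducedDer.apply_eq_zero_of_card_lt (hD : IsReducedDer n ε c L s ν D)
    (h : HasRegularDiag n ε c L) (hs : s ≠ 0) (k : ℕ) :
    ∀ x ∈ L, ∀ l : ℂ, sbL n (diag n c) x = l • x → (∀ i, l ≠ -c i) →
      (∀ m T, x (gen m) T ≠ 0 → T.card < k) → D x = 0 := by
  induction k with
  | zero =>
    intro x hx l _ _ hk
    have hx0 : x = 0 := by
      refine Wn_ext (h.le_Wn hx) (Submodule.zero_mem _) fun m => funext fun T => ?_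
      by_contra hT
      exact (hk m T hT).not_ge (Nat.zero_le _)
    rw [hx0, map_zero]
  | succ k ih =>
    intro x hx l hl hne hk
    have hx0 := fun j => apply_gen_empty_of_weight_ne hl (hne j)
    refine eq_zero_of_sbL_deformedPd_mem_topValued h.parity (hD.mem_Wn x hx)
      (fun j => apply_gen_empty_of_weight_ne (hD.weight x hx l hl) (hne j)) fun i => ?_
    have hz := h.sbL_deformedPd_mem i hx
    have hDz : D (sbL n (deformedPd n ε i) x) ∈ topValued n := by
      by_cases hne' : ∀ j, -c i + l ≠ -c j
      · rw [ih _ hz _ (h.sbL_diag_sbL_deformedPd i hl) hne'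
          (h.card_lt_of_sbL_deformedPd_entry hx hl hne hk i hne')]
        exact Submodule.zero_mem _
      · push Not at hne'
        obtain ⟨j, hj⟩ := hne'
        exact hD.apply_mem_topValued_of_weight_eq h hz (hj ▸ h.sbL_diag_sbL_deformedPd i hl)
    have hDv : sbL n (D (deformedPd n ε i)) x ∈ topValued n := by
      refine sbL_mem_topValued ?_ (h.le_Wn hx) hx0
      rw [hD.apply_deformedPd]
      exact Submodule.smul_mem _ _ (mulOp_omegaTop_mul_mem_topValued _)
    rw [hD.leibniz i x hx] at hDz
    exact (Submodule.smul_mem_iff _ hs).1 ((Submodule.add_mem_iff_right _ hDv).1 hDz)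

lemma IsReducedDer.apply_eq_zero (hD : IsReducedDer n ε c L s ν D)
    (h : HasRegularDiag n ε c L) (hs : s ≠ 0) {x : E n} (hx : x ∈ L) {l : ℂ}
    (hl : sbL n (diag n c) x = l • x) (hne : ∀ i, l ≠ -c i) : D x = 0 :=
  hD.apply_eq_zero_of_card_lt h hs (n + 1) x hx l hl hne fun _ T _ =>
    Nat.lt_succ_of_le (card_finset_fin_le T)

lemma pd_omegaTop_erase_ne_zero (i : Fin n) : pd n i (omegaTop n) (Finset.univ.erase i) ≠ 0 := by
  rw [pd_apply, if_neg (Finset.notMem_erase _ _), Finset.insert_erase (Finset.mem_univ i), omegaTop,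
    mono_apply, if_pos rfl, mul_one]
  exact koszulSign_ne_zero _ _

lemma pd_omegaTop_empty {i j : Fin n} (hij : i ≠ j) : pd n i (omegaTop n) ∅ = 0 := by
  rw [pd_apply, if_neg (Finset.notMem_empty i), omegaTop, mono_apply, if_neg, mul_zero]
  intro h
  exact hij (Finset.mem_singleton.1 (h ▸ Finset.mem_univ j : j ∈ insert i ∅)).symm

lemma sbL_deformedPd_deformedPd_gen (hε : ε = 0 ∨ Even n) {i j : Fin n} (hij : i ≠ j) :
    sbL n (deformedPd n ε i) (deformedPd n ε j) (gen j) = -ε • pd n i (omegaTop n) := by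
  have hj : deformedPd n ε i (gen j) = 0 := by rw [deformedPd_gen, if_neg hij]
  rw [sbL_odd_left (deformedPd_mem_epar hε i), LinearMap.sub_apply, Module.End.mul_apply,
    Module.End.mul_apply, hj, map_zero, sub_zero, deformedPd_gen, if_pos rfl, map_sub, map_smul,
    deformedPd_apply, deformedPd_apply, pd_mono_empty, pd_omegaTop_empty hij]
  simp

lemma sbL_mulOp_omegaTop_mul_pd_deformedPd_gen (hε : ε = 0 ∨ Even n) {i j : Fin n} (hij : i ≠ j) :
    sbL n (mulOp n (omegaTop n) * pd n i) (deformedPd n ε j) (gen j) = 0 := by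
  rw [sbL_odd_right _ (deformedPd_mem_epar hε j), LinearMap.sub_apply, Module.End.mul_apply,
    parConj_mulOp_mul_pd, end_mul_neg, LinearMap.neg_apply,
    Module.End.mul_apply, Module.End.mul_apply, Module.End.mul_apply, pd_gen, if_neg hij,
    deformedPd_gen, if_pos rfl, map_sub, map_smul, pd_mono_empty, mulOp_omegaTop]
  simp [pd_omegaTop_empty hij]

lemma sbL_deformedPd_mulOp_omegaTop_mul_pd_gen (hε : ε = 0 ∨ Even n) {i j : Fin n} (hij : i ≠ j) :
    sbL n (deformedPd n ε i) (mulOp n (omegaTop n) * pd n j) (gen j) = pd n i (omegaTop n) := by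
  have hj : deformedPd n ε i (gen j) = 0 := by rw [deformedPd_gen, if_neg hij]
  rw [sbL_odd_left (deformedPd_mem_epar hε i), LinearMap.sub_apply, Module.End.mul_apply,
    Module.End.mul_apply, Module.End.mul_apply, hj, map_zero, sub_zero, pd_gen, if_pos rfl,
    mulOp_apply_mono_empty, deformedPd_apply, pd_omegaTop_empty hij, mul_zero, zero_smul, sub_zero]

lemma sbL_deformedPd_deformedPd_ne_smul (hε : ε = 0 ∨ Even n) (hε0 : ε ≠ 0) {i j : Fin n}
    (hij : i ≠ j) (m : Fin n) (r : ℂ) :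
    sbL n (deformedPd n ε i) (deformedPd n ε j) ≠ r • deformedPd n ε m := by
  intro h
  have hentry := congrArg (fun A : E n => A (gen j) (Finset.univ.erase i)) h
  have h0 : deformedPd n ε m (gen j) (Finset.univ.erase i) = 0 := by
    have hempty : Finset.univ.erase i ≠ (∅ : Finset (Fin n)) :=
      Finset.ne_empty_of_mem (Finset.mem_erase.2 ⟨hij.symm, Finset.mem_univ j⟩)
    have huniv : Finset.univ.erase i ≠ (Finset.univ : Finset (Fin n)) :=
      (Finset.erase_ssubset (Finset.mem_univ i)).ne
    rw [deformedPd_gen]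
    split_ifs <;> simp [mono_apply, omegaTop, hempty, huniv]
  simp only [sbL_deformedPd_deformedPd_gen hε hij, LinearMap.smul_apply, Pi.smul_apply, h0,
    smul_eq_mul, neg_mul, mul_zero, neg_eq_zero] at hentry
  exact mul_ne_zero hε0 (pd_omegaTop_erase_ne_zero i) hentry

lemma IsReducedDer.topCoeff_eq_zero (hD : IsReducedDer n ε c L s ν D) (h : HasRegularDiag n ε c L)
    (hs : s ≠ 0) (hε : ε ≠ 0) {i j : Fin n} (hij : i ≠ j) : ν = 0 := by
  have hDu : D (sbL n (deformedPd n ε i) (deformedPd n ε j)) = 0 := by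
    have hu := h.sbL_deformedPd_mem i (h.deformedPd_mem j)
    have hw := h.sbL_diag_sbL_deformedPd i (h.sbL_diag_deformedPd_eq_smul j)
    refine hD.apply_eq_zero h hs hu hw fun m hm => ?_
    obtain ⟨r, hr⟩ := h.multiplicity_one m _ hu (hm ▸ hw)
    exact sbL_deformedPd_deformedPd_ne_smul h.parity hε hij m r hr
  rw [hD.leibniz i _ (h.deformedPd_mem j), hD.apply_deformedPd, hD.apply_deformedPd, map_smul,
    map_smul, LinearMap.smul_apply] at hDu
  have hgen := congrArg (fun A : E n => A (gen j)) hDu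
  simp only [LinearMap.add_apply, LinearMap.smul_apply, LinearMap.zero_apply,
    sbL_mulOp_omegaTop_mul_pd_deformedPd_gen h.parity hij,
    sbL_deformedPd_mulOp_omegaTop_mul_pd_gen h.parity hij, smul_zero, zero_add] at hgen
  have hentry := congrFun hgen (Finset.univ.erase i)
  simpa [hs, pd_omegaTop_erase_ne_zero i] using hentry

lemma IsSuperDer.exists_apply_deformedPd_eq_smul {p : ZMod 2} (hD : IsSuperDer n L p D)
    (h : HasRegularDiag n ε c L)
    (hw : ∀ x ∈ L, ∀ l : ℂ, sbL n (diag n c) x = l • x → sbL n (diag n c) (D x) = l • D x) :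
    ∃ μ : Fin n → ℂ, diag n μ ∈ epar n p ∧
      ∀ i, D (deformedPd n ε i) = μ i • deformedPd n ε i := by
  have hmem := fun i => hD.apply_mem h.isGradedSubalgebra.parConj_mem (h.deformedPd_mem i)
  choose μ hμ using fun i => h.multiplicity_one i _ (hmem i)
    (hw _ (h.deformedPd_mem i) _ (h.sbL_diag_deformedPd_eq_smul i))
  rcases zmod_two_cases p with rfl | rfl
  · exact ⟨μ, diag_mem_epar μ, hμ⟩
  · refine ⟨0, by simp [diag], fun i => ?_⟩
    rw [Pi.zero_apply, zero_smul]
    have hodd := deformedPd_mem_epar h.parity i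
    refine eq_zero_of_mem_epar_of_ne (q := 1) (by decide)
      (hD.maps 1 _ ⟨h.deformedPd_mem i, hodd⟩).2 ?_
    rw [hμ i]
    exact Submodule.smul_mem _ _ hodd

lemma IsSuperDer.isReducedDer_add_sbL_diag {p : ZMod 2} (hD : IsSuperDer n L p D)
    (h : HasRegularDiag n ε c L)
    (hw : ∀ x ∈ L, ∀ l : ℂ, sbL n (diag n c) x = l • x → sbL n (diag n c) (D x) = l • D x)
    {μ : Fin n → ℂ} (hp : diag n μ ∈ epar n p)
    (hμ : ∀ i, D (deformedPd n ε i) = μ i • deformedPd n ε i) :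
    IsReducedDer n ε c L (sgn p) (-(ε * ∑ i, μ i)) (D + sbL n (diag n μ)) where
  mem_Wn x hx := Submodule.add_mem _
    (h.le_Wn (hD.apply_mem h.isGradedSubalgebra.parConj_mem hx))
    (sbL_mem_Wn (diag_mem_Wn μ) (h.le_Wn hx))
  weight x hx l hl := by
    have hμl := sbL_diag_sbL (a := c) (l := 0) (diag_mem_epar μ)
      (by rw [sbL_diag_diag, zero_smul]) hl
    rw [LinearMap.add_apply, map_add, hw x hx l hl, hμl, zero_add, smul_add]
  leibniz i x hx := by
    have hodd := deformedPd_mem_epar h.parity i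
    have hleib := hD.apply_sbL h.isGradedSubalgebra.parConj_mem (h.deformedPd_mem i) hodd hx
    rw [mul_one] at hleib
    simp only [LinearMap.add_apply, hleib, jacobi hp hodd x, mul_one, map_add, smul_add]
    abel
  apply_deformedPd i := by
    rw [LinearMap.add_apply, hμ, sbL_diag_deformedPd]
    module

theorem IsSuperDer.exists_eq_sbL_of_hasRegularDiag {p : ZMod 2} (hD : IsSuperDer n L p D)
    (h : HasRegularDiag n ε c L) {i j : Fin n} (hij : i ≠ j) :
    ∃ a ∈ L, ∃ μ : Fin n → ℂ, (ε = 0 ∨ ∑ k, μ k = 0) ∧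
      ∀ x ∈ L, D x = sbL n (a + diag n μ) x := by
  obtain ⟨a, ha, hDa, hw⟩ := hD.exists_add_sbL_preserves_weights h.isGradedSubalgebra h.diag_mem
  obtain ⟨μ, hp, hμ⟩ := hDa.exists_apply_deformedPd_eq_smul h hw
  have hR := hDa.isReducedDer_add_sbL_diag h hw hp hμ
  have hs : sgn p ≠ 0 := left_ne_zero_of_mul_eq_one (sgn_mul_self p)
  have htrace : ε = 0 ∨ ∑ k, μ k = 0 := by
    rw [← mul_eq_zero, ← neg_eq_zero]
    by_cases hε : ε = 0
    · rw [hε, zero_mul, neg_zero]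
    · exact hR.topCoeff_eq_zero h hs hε hij
  rw [show -(ε * ∑ k, μ k) = 0 by rwa [neg_eq_zero, mul_eq_zero]] at hR
  have hzero : ∀ x ∈ L, (D + sbL n a + sbL n (diag n μ)) x = 0 := by
    intro x hx
    refine diag_eigenvector_induction (P := fun x => (D + sbL n a + sbL n (diag n μ)) x = 0)
      (fun y hy => h.isGradedSubalgebra.sbL_mem _ h.diag_mem _ hy) (map_zero _)
      (fun x y hx hy => by rw [map_add, hx, hy, add_zero]) (fun x hx l hl => ?_) hx
    by_cases hne : ∀ k, l ≠ -c k
    · exact hR.apply_eq_zero h hs hx hl hne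
    · push Not at hne
      obtain ⟨k, rfl⟩ := hne
      obtain ⟨r, rfl⟩ := h.multiplicity_one k x hx hl
      rw [map_smul, hR.apply_deformedPd, zero_smul, smul_zero]
  refine ⟨-a, L.neg_mem ha.1, -μ, by simpa using htrace, fun x hx => ?_⟩
  have hx0 := hzero x hx
  rw [LinearMap.add_apply, LinearMap.add_apply, add_assoc, ← LinearMap.add_apply, ← map_add] at hx0
  rw [eq_neg_of_add_eq_zero_left hx0, show -a + diag n (-μ) = -(a + diag n μ) by
    rw [← neg_one_smul ℂ μ, diag_smul]; module, map_neg, LinearMap.neg_apply]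

end

/-! ### `W(n)`, `S(n)` and `S̃(n)` -/

section

/-- The derivations in `W(n)` along which the functional `f ↦ f_{x₁⋯x_n} + ε f_1` on `Λ(n)` is
invariant: this is `S(n)` for `ε = 0` and `S̃(n)` for `ε = 1`. -/
def deformedSpecial (ε : ℂ) : Submodule ℂ (E n) where
  carrier := {A | A ∈ Wn n ∧ ∀ f, A f Finset.univ + ε * A f ∅ = 0}
  add_mem' := by
    rintro A B ⟨hA, hA'⟩ ⟨hB, hB'⟩
    refine ⟨Submodule.add_mem _ hA hB, fun f => ?_⟩
    rw [LinearMap.add_apply, Pi.add_apply, Pi.add_apply]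
    linear_combination hA' f + hB' f
  zero_mem' := ⟨Submodule.zero_mem _, fun f => by simp⟩
  smul_mem' := by
    rintro c A ⟨hA, hA'⟩
    refine ⟨Submodule.smul_mem _ _ hA, fun f => ?_⟩
    rw [LinearMap.smul_apply, Pi.smul_apply, Pi.smul_apply, smul_eq_mul, smul_eq_mul]
    linear_combination c * hA' f

/-- Weights `c` whose only integer relations are multiples of `∑ᵢ cᵢ = 0`. -/
def IsGeneric (c : Fin n → ℂ) : Prop :=
  ∀ m : Fin n → ℤ, ∑ i, (m i : ℂ) * c i = 0 → ∀ i j, m i = m j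

variable {n} {ε : ℂ} {c : Fin n → ℂ} {L : Submodule ℂ (E n)}

lemma isGradedSubalgebra_deformedSpecial (hε : ε = 0 ∨ Even n) :
    IsGradedSubalgebra n (deformedSpecial n ε) := by
  have hconj : ∀ A ∈ deformedSpecial n ε, parConj n A ∈ deformedSpecial n ε := by
    refine fun A hA => ⟨parConj_mem_Wn hA.1, fun f => ?_⟩
    have hf := hA.2 (par n f)
    rw [parConj_apply_apply, par_apply, par_apply, Finset.card_univ, Fintype.card_fin,
      Finset.card_empty]
    rcases hε with rfl | h
    · rw [zero_mul, add_zero] at hf ⊢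
      rw [hf, mul_zero]
    · rw [msign, h.neg_one_pow, msign, pow_zero, one_mul, one_mul, hf]
  refine ⟨hconj, fun A hA B hB => ⟨sbL_mem_Wn hA.1 hB.1, fun f => ?_⟩⟩
  have h1 := (Submodule.add_mem _ hB (hconj B hB)).2 (A f)
  have h2 := (Submodule.sub_mem _ hB (hconj B hB)).2 (parConj n A f)
  rw [sbL_apply]
  simp only [LinearMap.sub_apply, LinearMap.smul_apply, LinearMap.add_apply, Module.End.mul_apply,
    Pi.sub_apply, Pi.add_apply, Pi.smul_apply, smul_eq_mul] at h1 h2 ⊢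
  linear_combination hA.2 (B f) - (2 : ℂ)⁻¹ * h1 - (2 : ℂ)⁻¹ * h2

lemma mulOp_pd_apply_univ (f g : Lambda n) (i : Fin n) :
    mulOp n f (pd n i g) Finset.univ = mulOp n (par n (pd n i f)) g Finset.univ := by
  have h := congrArg (fun A : E n => A g Finset.univ) (pd_mul_mulOp i (par n f))
  simp only [Module.End.mul_apply, LinearMap.add_apply, Pi.add_apply, pd_apply_univ,
    par_par_apply] at h
  rw [par_pd_apply, map_neg, LinearMap.neg_apply, Pi.neg_apply]
  linear_combination -h

lemma Wmap_apply_univ (F : Fin n → Lambda n) (f : Lambda n) :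
    Wmap n F f Finset.univ = mulOp n (par n (divMap n F)) f Finset.univ := by
  rw [show divMap n F = ∑ i, pd n i (F i) from rfl, Wmap_apply]
  simp only [LinearMap.sum_apply, Module.End.mul_apply, Finset.sum_apply, map_sum,
    mulOp_pd_apply_univ]

lemma eq_zero_of_mulOp_apply_univ {g : Lambda n} (h : ∀ f, mulOp n g f Finset.univ = 0) :
    g = 0 := by
  funext S
  have hS := h (mono n Sᶜ)
  rw [mulOp_apply, Finset.sum_eq_single S] at hS
  · rw [← Finset.compl_eq_univ_sdiff, mono_apply, if_pos rfl, mul_one] at hS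
    exact (mul_eq_zero.1 hS).resolve_left (msign_ne_zero _)
  · intro T _ hTS
    rw [← Finset.compl_eq_univ_sdiff, mono_apply, if_neg (compl_injective.ne hTS), mul_zero]
  · exact fun h => absurd (Finset.mem_powerset.2 (Finset.subset_univ S)) h

lemma Sn_eq_deformedSpecial : Sn n = deformedSpecial n 0 := by
  apply le_antisymm
  · rintro _ ⟨F, hF, rfl⟩
    refine ⟨Wmap_mem_Wn F, fun f => ?_⟩
    rw [Wmap_apply_univ, LinearMap.mem_ker.1 hF]; simp
  · rintro A ⟨⟨F, rfl⟩, hA⟩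
    refine ⟨F, LinearMap.mem_ker.2 ?_, rfl⟩
    have hpar : par n (divMap n F) = 0 := eq_zero_of_mulOp_apply_univ fun f => by
      rw [← Wmap_apply_univ]; simpa using hA f
    rw [← par_par_apply (divMap n F), hpar, map_zero]

lemma mulOp_mul_Wmap (f : Lambda n) (F : Fin n → Lambda n) :
    mulOp n f * Wmap n F = Wmap n fun i => mulOp n f (F i) := by
  rw [Wmap_apply, Wmap_apply, Finset.mul_sum]
  exact Finset.sum_congr rfl fun i _ => by rw [← mul_assoc, ← mulOp_mulOp]

lemma mulOp_mul_mem_Wn (f : Lambda n) {A : E n} (hA : A ∈ Wn n) : mulOp n f * A ∈ Wn n := by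
  rw [eq_Wmap_of_mem_Wn hA, mulOp_mul_Wmap]
  exact Wmap_mem_Wn _

lemma mulOp_one_add_smul_omegaTop_apply (r : ℂ) (f : Lambda n) :
    mulOp n (mono n ∅ + r • omegaTop n) f = f + (r * f ∅) • omegaTop n := by
  rw [map_add, LinearMap.add_apply, mulOp_mono_empty, map_smul, LinearMap.smul_apply,
    mulOp_omegaTop, smul_smul, Module.End.one_apply]

lemma oneM_eq : oneM n = mono n ∅ + (-1 : ℂ) • omegaTop n := by rw [oneM]; module

lemma empty_ne_univ [Nonempty (Fin n)] : (∅ : Finset (Fin n)) ≠ Finset.univ :=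
  Finset.univ_nonempty.ne_empty.symm

lemma mulOp_one_add_smul_omegaTop_mul_mem [Nonempty (Fin n)] {r : ℂ} {A : E n}
    (hA : A ∈ deformedSpecial n ε) :
    mulOp n (mono n ∅ + r • omegaTop n) * A ∈ deformedSpecial n (ε - r) := by
  refine ⟨mulOp_mul_mem_Wn _ hA.1, fun f => ?_⟩
  rw [Module.End.mul_apply, mulOp_one_add_smul_omegaTop_apply]
  simp only [Pi.add_apply, Pi.smul_apply, omegaTop, mono_apply, if_neg empty_ne_univ, smul_eq_mul,
    if_true]
  linear_combination hA.2 f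

lemma Stn_eq_deformedSpecial [Nonempty (Fin n)] : Stn n = deformedSpecial n 1 := by
  apply le_antisymm
  · rintro _ ⟨F, hF, rfl⟩
    have hA : Wmap n F ∈ deformedSpecial n 0 := Sn_eq_deformedSpecial ▸ ⟨F, hF, rfl⟩
    have hmem := mulOp_one_add_smul_omegaTop_mul_mem (r := -1) hA
    rwa [sub_neg_eq_add, zero_add, ← oneM_eq, mulOp_mul_Wmap] at hmem
  · intro A hA
    have hB := mulOp_one_add_smul_omegaTop_mul_mem (r := 1) hA
    rw [sub_self, ← Sn_eq_deformedSpecial] at hB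
    obtain ⟨F, hF, hFB⟩ := hB
    refine ⟨F, hF, ?_⟩
    rw [LinearMap.comp_apply, show oneMScale n F = fun i => mulOp n (oneM n) (F i) from rfl,
      ← mulOp_mul_Wmap, hFB]
    refine LinearMap.ext fun f => ?_
    rw [Module.End.mul_apply, Module.End.mul_apply, oneM_eq, mulOp_one_add_smul_omegaTop_apply,
      mulOp_one_add_smul_omegaTop_apply]
    simp [omegaTop, mono_apply, empty_ne_univ]

lemma deformedPd_mem_deformedSpecial [Nonempty (Fin n)] (ε : ℂ) (i : Fin n) :
    deformedPd n ε i ∈ deformedSpecial n ε := by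
  refine ⟨deformedPd_mem_Wn ε i, fun f => ?_⟩
  rw [deformedPd_apply]
  simp [pd_apply_univ, omegaTop, mono_apply, empty_ne_univ]

lemma diag_mem_deformedSpecial (hc : ∑ i, c i = 0) : diag n c ∈ deformedSpecial n ε :=
  ⟨diag_mem_Wn c, fun f => by rw [diag_apply, diag_apply, hc]; simp⟩

lemma isGeneric_of_linearIndependent (hc : LinearIndependent ℚ c) : IsGeneric n c := by
  intro m hm
  have hzero := Fintype.linearIndependent_iff.1 hc (fun i => (m i : ℚ))
    (by simpa [Rat.smul_def] using hm)
  intro i j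
  exact_mod_cast (hzero i).trans (hzero j).symm

lemma exists_linearIndependent_rat (n : ℕ) : ∃ c : Fin n → ℂ, LinearIndependent ℚ c :=
  (Module.le_rank_iff (R := ℚ) (M := ℂ)).1 (by
    rw [Complex.rank_rat_complex]
    exact Cardinal.natCast_lt_aleph0.le.trans Cardinal.aleph0_le_continuum)

lemma isGeneric_traceFree (hc : LinearIndependent ℚ c) :
    IsGeneric n fun i => n * c i - ∑ j, c j := by
  intro m hm i j
  have hzero : ∀ i, (n : ℚ) * m i - ∑ j, (m j : ℚ) = 0 := by
    apply Fintype.linearIndependent_iff.1 hc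
    rw [← hm]
    simp only [Rat.smul_def, mul_sub, Finset.sum_sub_distrib, ← Finset.sum_mul]
    push_cast
    simp only [sub_mul, Finset.sum_sub_distrib, ← Finset.mul_sum, mul_left_comm, mul_assoc]
  have hn : (n : ℚ) ≠ 0 := Nat.cast_ne_zero.2 (Fin.pos i).ne'
  exact_mod_cast mul_left_cancel₀ hn (sub_left_injective ((hzero i).trans (hzero j).symm))

lemma IsGeneric.eq_of_sum_sub_eq (hc : IsGeneric n c) {i m : Fin n} {T : Finset (Fin n)}
    (h : ∑ j ∈ T, c j - c m = -c i) : i = m ∧ (T = ∅ ∨ T = Finset.univ) := by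
  have hconst := hc
    (fun j => (if j ∈ T then 1 else 0) - (if j = m then 1 else 0) + (if j = i then 1 else 0)) (by
      push_cast
      simp only [add_mul, sub_mul, Finset.sum_add_distrib, Finset.sum_sub_distrib, ite_mul, one_mul,
        zero_mul, Finset.sum_ite_mem, Finset.univ_inter, Finset.sum_ite_eq', Finset.mem_univ,
        if_true, h, neg_add_cancel])
  have him : i = m := by
    by_contra hne
    have hmi := hconst m i
    simp only [if_true, if_neg hne, if_neg (Ne.symm hne)] at hmi
    split_ifs at hmi <;> omega
  subst him
  simp only [sub_add_cancel] at hconst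
  refine ⟨rfl, ?_⟩
  rcases T.eq_empty_or_nonempty with hT | ⟨k, hk⟩
  · exact Or.inl hT
  · refine Or.inr (Finset.eq_univ_iff_forall.2 fun j => ?_)
    by_contra hj
    simpa [hk, hj] using hconst j k

lemma IsGeneric.eq_smul_deformedPd (hc : IsGeneric n c) {x : E n} (hx : x ∈ Wn n) {i : Fin n}
    (hw : sbL n (diag n c) x = -c i • x)
    (htop : x (gen i) Finset.univ = -(ε * x (gen i) ∅)) :
    x = x (gen i) ∅ • deformedPd n ε i := by
  have hentry : ∀ m T, ¬(i = m ∧ (T = ∅ ∨ T = Finset.univ)) → x (gen m) T = 0 := by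
    intro m T hmT
    by_contra hT
    exact hmT (hc.eq_of_sum_sub_eq (by simpa using diag_weight_of_entry_ne_zero hw hT))
  have hne : (Finset.univ : Finset (Fin n)) ≠ ∅ := Finset.ne_empty_of_mem (Finset.mem_univ i)
  refine Wn_ext hx (Submodule.smul_mem _ _ (deformedPd_mem_Wn ε i)) fun m => funext fun T => ?_
  rw [LinearMap.smul_apply, deformedPd_gen]
  by_cases him : i = m
  · subst him
    by_cases hT : T = ∅
    · simp [hT, mono_apply, omegaTop, hne.symm]
    by_cases hT' : T = Finset.univ
    · simp [hT', mono_apply, omegaTop, hne, htop, mul_comm]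
    · rw [hentry i T (by tauto)]
      simp [hT, hT', mono_apply, omegaTop]
  · rw [hentry m T (by tauto), if_neg him, smul_zero, Pi.zero_apply]

lemma IsGeneric.hasRegularDiag_deformedSpecial [Nonempty (Fin n)] (hc : IsGeneric n c)
    (hc0 : ∑ i, c i = 0) (hε : ε = 0 ∨ Even n) :
    HasRegularDiag n ε c (deformedSpecial n ε) where
  isGradedSubalgebra := isGradedSubalgebra_deformedSpecial hε
  le_Wn _ hx := hx.1
  diag_mem := diag_mem_deformedSpecial hc0
  deformedPd_mem := deformedPd_mem_deformedSpecial ε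
  parity := hε
  trace := Or.inr hc0
  multiplicity_one _ _ hx hw :=
    ⟨_, hc.eq_smul_deformedPd hx.1 hw (eq_neg_of_add_eq_zero_left (hx.2 _))⟩

lemma IsGeneric.hasRegularDiag_Wn (hc : IsGeneric n c) (hc0 : ∑ i, c i ≠ 0) :
    HasRegularDiag n 0 c (Wn n) where
  isGradedSubalgebra := isGradedSubalgebra_Wn
  le_Wn := le_rfl
  diag_mem := diag_mem_Wn c
  deformedPd_mem := deformedPd_mem_Wn 0
  parity := Or.inl rfl
  trace := Or.inl rfl
  multiplicity_one _ x hx hw := by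
    refine ⟨_, hc.eq_smul_deformedPd hx hw ?_⟩
    rw [zero_mul, neg_zero]
    by_contra htop
    have hsum := diag_weight_of_entry_ne_zero hw htop
    rw [Finset.sum_singleton, sub_eq_neg_self] at hsum
    exact hc0 hsum

theorem IsSuperDer.exists_eq_sbL_Wn [Nontrivial (Fin n)] {p : ZMod 2} {D : E n →ₗ[ℂ] E n}
    (hD : IsSuperDer n (Wn n) p D) : ∃ a ∈ Wn n, ∀ x ∈ Wn n, D x = sbL n a x := by
  obtain ⟨c, hc⟩ := exists_linearIndependent_rat n
  have hc0 : ∑ i, c i ≠ 0 := by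
    intro h
    obtain ⟨i⟩ := (inferInstance : Nonempty (Fin n))
    exact one_ne_zero (Fintype.linearIndependent_iff.1 hc 1 (by simpa using h) i)
  obtain ⟨i, j, hij⟩ := exists_pair_ne (Fin n)
  obtain ⟨a, ha, μ, -, hDa⟩ := hD.exists_eq_sbL_of_hasRegularDiag
    ((isGeneric_of_linearIndependent hc).hasRegularDiag_Wn hc0) hij
  exact ⟨_, Submodule.add_mem _ ha (diag_mem_Wn μ), hDa⟩

theorem IsSuperDer.exists_eq_sbL_deformedSpecial [Nontrivial (Fin n)] (hε : ε = 0 ∨ Even n)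
    {p : ZMod 2} {D : E n →ₗ[ℂ] E n} (hD : IsSuperDer n (deformedSpecial n ε) p D) :
    ∃ a ∈ deformedSpecial n ε, ∃ μ : Fin n → ℂ, (ε = 0 ∨ ∑ i, μ i = 0) ∧
      ∀ x ∈ deformedSpecial n ε, D x = sbL n (a + diag n μ) x := by
  obtain ⟨c, hc⟩ := exists_linearIndependent_rat n
  obtain ⟨i, j, hij⟩ := exists_pair_ne (Fin n)
  exact hD.exists_eq_sbL_of_hasRegularDiag ((isGeneric_traceFree hc).hasRegularDiag_deformedSpecial
    (by simp [Finset.sum_sub_distrib, ← Finset.mul_sum]) hε) hij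

theorem IsSuperDer.exists_eq_sbL_Sn [Nontrivial (Fin n)] {p : ZMod 2} {D : E n →ₗ[ℂ] E n}
    (hD : IsSuperDer n (Sn n) p D) :
    ∃ a ∈ Sn n ⊔ Submodule.span ℂ {CC n}, ∀ x ∈ Sn n, D x = sbL n a x := by
  rw [Sn_eq_deformedSpecial] at hD ⊢
  obtain ⟨a, ha, μ, -, hDa⟩ := hD.exists_eq_sbL_deformedSpecial (Or.inl rfl)
  refine ⟨_, ?_, hDa⟩
  set r : ℂ := (∑ i, μ i) / n with hr
  have hn : (n : ℂ) ≠ 0 := Nat.cast_ne_zero.2 (Fin.pos (Classical.arbitrary (Fin n))).ne'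
  have htrace : ∑ i, (μ - r • 1) i = 0 := by
    simp [Finset.sum_sub_distrib, hr, mul_div_cancel₀ _ hn]
  have hμ : diag n μ = diag n (μ - r • 1) + r • CC n := by
    rw [CC_eq_diag, ← diag_smul, ← diag_add, sub_add_cancel]
  rw [hμ, ← add_assoc]
  exact Submodule.add_mem_sup (Submodule.add_mem _ ha (diag_mem_deformedSpecial htrace))
    (Submodule.smul_mem _ _ (Submodule.mem_span_singleton_self _))

theorem IsSuperDer.exists_eq_sbL_Stn [Nontrivial (Fin n)] (hn : Even n) {p : ZMod 2}
    {D : E n →ₗ[ℂ] E n} (hD : IsSuperDer n (Stn n) p D) :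
    ∃ a ∈ Stn n, ∀ x ∈ Stn n, D x = sbL n a x := by
  rw [Stn_eq_deformedSpecial] at hD ⊢
  obtain ⟨a, ha, μ, hμ, hDa⟩ := hD.exists_eq_sbL_deformedSpecial (Or.inr hn)
  exact ⟨_, Submodule.add_mem _ ha (diag_mem_deformedSpecial (hμ.resolve_left one_ne_zero)), hDa⟩

lemma sbL_CC_mem_Sn {x : E n} (hx : x ∈ Sn n) : sbL n (CC n) x ∈ Sn n := by
  rw [Sn_eq_deformedSpecial] at hx ⊢
  rw [CC_eq_diag]
  refine ⟨sbL_mem_Wn (diag_mem_Wn 1) hx.1, fun f => ?_⟩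
  have h0 : ∀ f, x f Finset.univ = 0 := fun f => by simpa using hx.2 f
  rw [sbL_even_left (diag_mem_epar 1), LinearMap.sub_apply, Module.End.mul_apply,
    Module.End.mul_apply, Pi.sub_apply, diag_apply, h0, h0]
  simp

end

/-! ### Hamiltonian vector fields -/

section

/-- The quadratic Hamiltonian vector field `D_H(xᵢxⱼ)`. These span the subalgebra `𝔰𝔬ₙ` of
`H(n)`, the degree `0` component. -/
def quadHam (i j : Fin n) : E n := DHmap n (mulGen n i (gen j))

variable {n}

lemma cidx_cidx (i : Fin n) : cidx n (cidx n i) = i := by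
  ext
  simp only [cidx]
  split_ifs <;> omega

lemma cidx_inj {i j : Fin n} : cidx n i = cidx n j ↔ i = j :=
  (Function.LeftInverse.injective cidx_cidx).eq_iff

lemma cidx_eq_comm {i j : Fin n} : cidx n i = j ↔ i = cidx n j := by
  rw [← cidx_inj, cidx_cidx]

lemma sum_cidx {M : Type*} [AddCommMonoid M] (f : Fin n → M) :
    ∑ i, f (cidx n i) = ∑ i, f i :=
  Equiv.sum_comp (Function.Involutive.toPerm (cidx n) cidx_cidx) f

lemma pd_pd_apply (i j : Fin n) (f : Lambda n) : pd n i (pd n j f) = -pd n j (pd n i f) :=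
  LinearMap.congr_fun (pd_anticomm i j) f

lemma mulGen_mulGen_apply (i j : Fin n) (f : Lambda n) :
    mulGen n i (mulGen n j f) = -mulGen n j (mulGen n i f) :=
  LinearMap.congr_fun (mulGen_anticomm i j) f

lemma sum_pd_cidx_pd (f : Lambda n) : ∑ i, pd n (cidx n i) (pd n i f) = 0 := by
  rw [← self_eq_neg, ← Finset.sum_neg_distrib, ← sum_cidx]
  exact Finset.sum_congr rfl fun i _ => by rw [cidx_cidx, pd_pd_apply]

lemma mulOp_apply_of_par_eq_self {f : Lambda n} (hf : par n f = f) (g : Lambda n) :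
    mulOp n f g = mulOp n g f := by
  induction g using lambda_induction with
  | one => rw [mulOp_apply_mono_empty, mulOp_mono_empty, Module.End.one_apply]
  | add g h hg hh => rw [map_add, map_add, hg, hh, LinearMap.add_apply]
  | smul c g hg => rw [map_smul, map_smul, hg, LinearMap.smul_apply]
  | gen_mul i g hg =>
    rw [← Module.End.mul_apply, mulOp_mul_mulGen, hf, Module.End.mul_apply, hg, mulOp_mulGen,
      Module.End.mul_apply]

lemma mulOp_apply_of_par_eq_neg {f : Lambda n} (hf : par n f = -f) (g : Lambda n) :
    mulOp n f g = mulOp n (par n g) f := by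
  induction g using lambda_induction with
  | one => rw [mulOp_apply_mono_empty, par_mono_empty, mulOp_mono_empty, Module.End.one_apply]
  | add g h hg hh => rw [map_add, map_add, map_add, hg, hh, LinearMap.add_apply]
  | smul c g hg => rw [map_smul, map_smul, map_smul, hg, LinearMap.smul_apply]
  | gen_mul i g hg =>
    rw [← Module.End.mul_apply, mulOp_mul_mulGen, hf, map_neg, Module.End.mul_apply,
      LinearMap.neg_apply, hg, par_mulGen_apply, map_neg, map_neg (mulOp n), mulOp_mulGen,
      LinearMap.neg_apply, Module.End.mul_apply]

lemma mulOp_supercomm {a b : ZMod 2} {f g : Lambda n} (hf : f ∈ lpar n a) (hg : g ∈ lpar n b) :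
    mulOp n f g = sgn (a * b) • mulOp n g f := by
  rw [mem_lpar_iff] at hf hg
  rcases zmod_two_cases a with rfl | rfl
  · rw [sgn_zero, one_smul] at hf
    rw [mulOp_apply_of_par_eq_self hf, zero_mul, sgn_zero, one_smul]
  · rw [sgn_one, neg_one_smul] at hf
    rw [mulOp_apply_of_par_eq_neg hf, hg, one_mul, map_smul, LinearMap.smul_apply]

lemma pd_mem_lpar {a : ZMod 2} {f : Lambda n} (hf : f ∈ lpar n a) (i : Fin n) :
    pd n i f ∈ lpar n (a + 1) :=
  pd_mem_epar i a f hf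

lemma par_mem_lpar {a : ZMod 2} {f : Lambda n} (hf : f ∈ lpar n a) : par n f ∈ lpar n a := by
  rw [mem_lpar_iff.1 hf]
  exact Submodule.smul_mem _ _ hf

lemma lpar_induction {P : Lambda n → Prop} (zero : P 0) (add : ∀ f g, P f → P g → P (f + g))
    (hom : ∀ (q : ZMod 2) f, f ∈ lpar n q → P f) (f : Lambda n) : P f := by
  rw [eq_sum_smul_mono f]
  exact Finset.sum_induction _ P add zero fun S _ =>
    hom _ _ (Submodule.smul_mem _ _ (mono_mem_lpar S))

lemma DHmap_apply (f g : Lambda n) :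
    DHmap n f g = ∑ i, mulOp n (pd n i (par n f)) (pd n (cidx n i) g) := by
  simp [DHmap]

lemma DHmap_eq_Wmap (f : Lambda n) : DHmap n f = Wmap n fun i => pd n (cidx n i) (par n f) := by
  rw [Wmap_apply, ← sum_cidx]
  simp only [cidx_cidx]
  rfl

lemma DHmap_mem_Wn (f : Lambda n) : DHmap n f ∈ Wn n := DHmap_eq_Wmap f ▸ Wmap_mem_Wn _

lemma DHmap_apply_gen (f : Lambda n) (i : Fin n) :
    DHmap n f (gen i) = pd n (cidx n i) (par n f) := by
  rw [DHmap_eq_Wmap, Wmap_gen]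

lemma DHmap_gen (i : Fin n) : DHmap n (gen i) = -pd n (cidx n i) := by
  refine Wn_ext (DHmap_mem_Wn _) (Submodule.neg_mem _ (pd_mem_Wn _)) fun j => ?_
  rw [DHmap_apply_gen, par_mono, Finset.card_singleton, map_smul, LinearMap.neg_apply, pd_gen,
    pd_gen]
  simp only [cidx_eq_comm (i := i), eq_comm (a := i), msign, pow_one, neg_one_smul]

lemma parConj_DHmap (f : Lambda n) : parConj n (DHmap n f) = DHmap n (par n f) := by
  simp only [DHmap_eq_Wmap, Wmap_apply, map_sum, parConj_mulOp_mul_pd, par_pd_apply, map_neg,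
    end_neg_mul, neg_neg]

lemma DHmap_mem_epar {p : ZMod 2} {f : Lambda n} (hf : f ∈ lpar n p) : DHmap n f ∈ epar n p := by
  rw [mem_epar_iff, parConj_DHmap, mem_lpar_iff.1 hf, map_smul]

lemma gen_mem_lpar (i : Fin n) : gen i ∈ lpar n 1 := by
  simpa using mono_mem_lpar ({i} : Finset (Fin n))

lemma DHmap_gen_mem_epar (i : Fin n) : DHmap n (gen i) ∈ epar n 1 :=
  DHmap_mem_epar (gen_mem_lpar i)

lemma pd_DHmap_apply (i : Fin n) (f g : Lambda n) :
    pd n i (DHmap n f g) = DHmap n (pd n i f) g + DHmap n (par n f) (pd n i g) := by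
  simp only [DHmap_apply, map_sum, ← Finset.sum_add_distrib]
  refine Finset.sum_congr rfl fun j _ => ?_
  rw [← Module.End.mul_apply, pd_mul_mulOp, LinearMap.add_apply, Module.End.mul_apply,
    pd_pd_apply i j, pd_pd_apply i (cidx n j), par_pd_apply i f, par_pd_apply j (par n f)]
  simp only [map_neg, LinearMap.neg_apply, neg_neg]

lemma DHmap_skew {a b : ZMod 2} {f g : Lambda n} (hf : f ∈ lpar n a) (hg : g ∈ lpar n b) :
    DHmap n f g = -(sgn (a * b) • DHmap n g f) := by
  have hsgn : sgn a * sgn ((a + 1) * (b + 1)) = -(sgn (a * b) * sgn b) := by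
    rw [show (a + 1) * (b + 1) = a * b + a + b + 1 by ring]
    simp only [sgn_add, sgn_one]
    linear_combination -(sgn (a * b) * sgn b) * sgn_mul_self a
  rw [DHmap_apply, DHmap_apply,
    ← sum_cidx fun i => mulOp n (pd n i (par n g)) (pd n (cidx n i) f), Finset.smul_sum,
    ← Finset.sum_neg_distrib]
  refine Finset.sum_congr rfl fun i _ => ?_
  rw [cidx_cidx, mem_lpar_iff.1 hf, mem_lpar_iff.1 hg]
  simp only [map_smul, LinearMap.smul_apply]
  rw [mulOp_supercomm (pd_mem_lpar hf i) (pd_mem_lpar hg _), smul_smul, smul_smul, hsgn, neg_smul]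

lemma sbL_DHmap_of_mem_lpar {a b : ZMod 2} {f g : Lambda n} (hf : f ∈ lpar n a)
    (hg : g ∈ lpar n b) : sbL n (DHmap n f) (DHmap n g) = DHmap n (DHmap n f g) := by
  refine Wn_ext (sbL_mem_Wn (DHmap_mem_Wn _) (DHmap_mem_Wn _)) (DHmap_mem_Wn _) fun j => ?_
  have hpar : par n (DHmap n f g) = DHmap n (par n f) (par n g) := by
    rw [← parConj_DHmap, parConj_apply_apply, par_par_apply]
  have hsgn : sgn b * sgn ((a + 1) * b) = sgn (a * b) := by
    rw [add_mul, sgn_add, one_mul]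
    linear_combination sgn (a * b) * sgn_mul_self b
  rw [DHmap_apply_gen, sbL_of_mem_epar (DHmap_mem_epar hf) (DHmap_mem_epar hg),
    LinearMap.sub_apply, LinearMap.smul_apply, Module.End.mul_apply, Module.End.mul_apply,
    DHmap_apply_gen, DHmap_apply_gen, hpar, pd_DHmap_apply, par_par_apply, mem_lpar_iff.1 hg]
  simp only [map_smul]
  rw [DHmap_skew (pd_mem_lpar (par_mem_lpar hf) _) hg, smul_neg, smul_smul, hsgn]
  abel

lemma sbL_DHmap (f g : Lambda n) : sbL n (DHmap n f) (DHmap n g) = DHmap n (DHmap n f g) := by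
  induction f using lpar_induction with
  | zero => simp
  | add f f' h h' => simp only [map_add, LinearMap.add_apply, h, h']
  | hom a f hf =>
    induction g using lpar_induction with
    | zero => simp
    | add g g' h h' => simp only [map_add, h, h']
    | hom b g hg => exact sbL_DHmap_of_mem_lpar hf hg

lemma DHmap_apply_univ (f g : Lambda n) : DHmap n f g Finset.univ = 0 := by
  have hdiv : divMap n (fun i => pd n (cidx n i) (par n f)) = 0 := by
    rw [← sum_pd_cidx_pd (par n f), ← sum_cidx]
    simp only [divMap, LinearMap.coe_mk, AddHom.coe_mk, cidx_cidx]
  rw [DHmap_eq_Wmap, Wmap_apply_univ, hdiv]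
  simp

lemma DHmap_mem_Hn {f : Lambda n} (hf : f Finset.univ = 0) : DHmap n f ∈ Hn n := ⟨f, hf, rfl⟩

lemma exists_eq_DHmap_of_mem_Hn {A : E n} (hA : A ∈ Hn n) :
    ∃ f : Lambda n, f Finset.univ = 0 ∧ A = DHmap n f := by
  obtain ⟨f, hf, rfl⟩ := hA
  exact ⟨f, hf, rfl⟩

lemma DHmap_mono_mem_Hn {S : Finset (Fin n)} (hS : S ≠ Finset.univ) :
    DHmap n (mono n S) ∈ Hn n :=
  DHmap_mem_Hn (if_neg hS.symm)

lemma CC_apply (f : Lambda n) (S : Finset (Fin n)) : CC n f S = S.card * f S := by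
  simp [CC_eq_diag, diag_apply]

lemma CC_mono (S : Finset (Fin n)) : CC n (mono n S) = (S.card : ℂ) • mono n S := by
  simp [CC_eq_diag, diag_mono]

lemma CC_mem_epar : CC n ∈ epar n 0 := CC_eq_diag (n := n) ▸ diag_mem_epar 1

lemma CC_apply_eq_sum (f : Lambda n) : CC n f = ∑ i, mulGen n i (pd n i f) := by
  simp [CC, mulGen]

lemma CC_pd (i : Fin n) (f : Lambda n) : CC n (pd n i f) = pd n i (CC n f) - pd n i f := by
  funext S
  rw [Pi.sub_apply, CC_apply, pd_apply, pd_apply, CC_apply]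
  split_ifs with h
  · simp
  · rw [Finset.card_insert_of_notMem h]
    push_cast
    ring

lemma CC_par (f : Lambda n) : CC n (par n f) = par n (CC n f) := by
  funext S
  rw [CC_apply, par_apply, par_apply, CC_apply]
  ring

lemma sbL_CC_DHmap (f : Lambda n) : sbL n (CC n) (DHmap n f) = DHmap n (CC n f - (2 : ℂ) • f) := by
  have hC : CC n ∈ Wn n := CC_eq_diag (n := n) ▸ diag_mem_Wn 1
  refine Wn_ext (sbL_mem_Wn hC (DHmap_mem_Wn _)) (DHmap_mem_Wn _) fun j => ?_
  rw [DHmap_apply_gen, CC_eq_diag, sbL_diag_gen, ← CC_eq_diag, DHmap_apply_gen, CC_pd, CC_par]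
  simp only [map_sub, map_smul, Pi.one_apply]
  module

lemma sbL_mem_Hn {a x : E n} (ha : a ∈ HtN n ⊔ Submodule.span ℂ {CC n}) (hx : x ∈ Hn n) :
    sbL n a x ∈ Hn n := by
  obtain ⟨_, ⟨f, rfl⟩, t, ht, rfl⟩ := Submodule.mem_sup.1 ha
  obtain ⟨c, rfl⟩ := Submodule.mem_span_singleton.1 ht
  obtain ⟨g, hg, rfl⟩ := exists_eq_DHmap_of_mem_Hn hx
  rw [map_add, LinearMap.add_apply, map_smul, LinearMap.smul_apply, sbL_DHmap, sbL_CC_DHmap]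
  refine Submodule.add_mem _ (DHmap_mem_Hn (DHmap_apply_univ _ _))
    (Submodule.smul_mem _ _ (DHmap_mem_Hn ?_))
  simp [CC_apply, hg]

lemma Hn_le_HtN_sup_span_CC : Hn n ≤ HtN n ⊔ Submodule.span ℂ {CC n} :=
  (LinearMap.map_le_range).trans le_sup_left

lemma isGradedSubalgebra_Hn : IsGradedSubalgebra n (Hn n) where
  parConj_mem _ hA := by
    obtain ⟨f, hf, rfl⟩ := exists_eq_DHmap_of_mem_Hn hA
    rw [parConj_DHmap]
    exact DHmap_mem_Hn (by rw [par_apply, hf, mul_zero])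
  sbL_mem _ hA _ hB := sbL_mem_Hn (Hn_le_HtN_sup_span_CC hA) hB

lemma parConj_mem_HtN_sup_span_CC {A : E n} (hA : A ∈ HtN n ⊔ Submodule.span ℂ {CC n}) :
    parConj n A ∈ HtN n ⊔ Submodule.span ℂ {CC n} := by
  obtain ⟨_, ⟨f, rfl⟩, t, ht, rfl⟩ := Submodule.mem_sup.1 hA
  obtain ⟨c, rfl⟩ := Submodule.mem_span_singleton.1 ht
  rw [map_add, map_smul, parConj_DHmap, mem_epar_iff.1 CC_mem_epar, sgn_zero, one_smul]
  exact Submodule.add_mem_sup ⟨_, rfl⟩ ht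

lemma apply_eq_zero_of_DHmap_eq_zero {f : Lambda n} (h : DHmap n f = 0) {S : Finset (Fin n)}
    (hS : S ≠ ∅) : f S = 0 := by
  obtain ⟨i, hi⟩ := Finset.nonempty_iff_ne_empty.2 hS
  have hpd : pd n i (par n f) (S.erase i) = 0 := by
    rw [← cidx_cidx i, ← DHmap_apply_gen, h, LinearMap.zero_apply, Pi.zero_apply]
  rw [pd_apply, if_neg (by simp), Finset.insert_erase hi, par_apply] at hpd
  simpa [koszulSign_ne_zero, msign_ne_zero] using hpd

lemma DHmap_eq_zero {f : Lambda n} (h : ∀ S, S ≠ ∅ → f S = 0) : DHmap n f = 0 := by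
  refine Wn_ext (DHmap_mem_Wn _) (Submodule.zero_mem _) fun j => funext fun S => ?_
  rw [DHmap_apply_gen, pd_apply, par_apply, h _ (Finset.insert_ne_empty _ _)]
  simp

lemma mulGen_gen_mem_lpar (i j : Fin n) : mulGen n i (gen j) ∈ lpar n 0 :=
  mulGen_mem_epar i 1 _ (gen_mem_lpar j)

lemma quadHam_mem_epar (i j : Fin n) : quadHam n i j ∈ epar n 0 :=
  DHmap_mem_epar (mulGen_gen_mem_lpar i j)

lemma quadHam_eq (i j : Fin n) :
    quadHam n i j = mulGen n j * pd n (cidx n i) - mulGen n i * pd n (cidx n j) := by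
  refine Wn_ext (DHmap_mem_Wn _) (Submodule.sub_mem _ (mulOp_mul_pd_mem_Wn _ _)
    (mulOp_mul_pd_mem_Wn _ _)) fun m => ?_
  have hpar : par n (mulGen n i (gen j)) = mulGen n i (gen j) := by
    rw [mem_lpar_iff.1 (mulGen_gen_mem_lpar i j), sgn_zero, one_smul]
  rw [quadHam, DHmap_apply_gen, hpar, pd_mulGen_apply, pd_gen, LinearMap.sub_apply,
    Module.End.mul_apply, Module.End.mul_apply, pd_gen, pd_gen]
  simp only [cidx_eq_comm (i := i), cidx_eq_comm (i := j), eq_comm (a := cidx n m)]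
  simp only [apply_ite (mulGen n _), mulGen_mono_empty, map_zero]

lemma quadHam_apply (i j : Fin n) (f : Lambda n) :
    quadHam n i j f = mulGen n j (pd n (cidx n i) f) - mulGen n i (pd n (cidx n j) f) := by
  rw [quadHam_eq]; rfl

lemma quadHam_gen (i j m : Fin n) : quadHam n i j (gen m) =
    (if cidx n i = m then gen j else 0) - (if cidx n j = m then gen i else 0) := by
  simp only [quadHam_apply, pd_gen, apply_ite (mulGen n _), mulGen_mono_empty, map_zero]

lemma quadHam_mem_Hn (hn : 2 < n) (i j : Fin n) : quadHam n i j ∈ Hn n := by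
  refine DHmap_mem_Hn ?_
  rw [mulGen_apply, if_pos (Finset.mem_univ _), gen, mono_apply, if_neg, mul_zero]
  intro h
  have := congrArg Finset.card h
  rw [Finset.card_erase_of_mem (Finset.mem_univ _), Finset.card_fin, Finset.card_singleton] at this
  omega

lemma sbL_quadHam_DHmap (i j : Fin n) (f : Lambda n) :
    sbL n (quadHam n i j) (DHmap n f) = DHmap n (quadHam n i j f) :=
  sbL_DHmap _ _

lemma sbL_quadHam_skew (i j : Fin n) (A : E n) :
    sbL n A (quadHam n i j) = -sbL n (quadHam n i j) A := by
  rw [sbL_even_left (quadHam_mem_epar i j), sbL_even_right _ (quadHam_mem_epar i j)]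
  abel

lemma sbL_quadHam_quadHam (k l i j : Fin n) : sbL n (quadHam n k l) (quadHam n i j) =
    ((if cidx n k = i then quadHam n l j else 0) - (if cidx n l = i then quadHam n k j else 0))
    + ((if cidx n k = j then quadHam n i l else 0)
      - (if cidx n l = j then quadHam n i k else 0)) := by
  have hquad : quadHam n k l (mulGen n i (gen j)) =
      ((if cidx n k = i then mulGen n l (gen j) else 0)
        - (if cidx n l = i then mulGen n k (gen j) else 0))
      + ((if cidx n k = j then mulGen n i (gen l) else 0)
        - (if cidx n l = j then mulGen n i (gen k) else 0)) := by
    rw [quadHam_apply, pd_mulGen_apply, pd_mulGen_apply, map_sub, map_sub, mulGen_mulGen_apply l i,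
      mulGen_mulGen_apply k i, pd_gen, pd_gen]
    simp only [apply_ite (mulGen n _), mulGen_mono_empty, map_zero]
    abel
  rw [quadHam, quadHam, sbL_DHmap]
  rw [← quadHam, hquad]
  simp only [map_add, map_sub, apply_ite (DHmap n), map_zero, quadHam]

end

/-! ### The Casimir operator of `𝔰𝔬ₙ` -/

section

/-- The adjoint action of the quadratic Casimir element `∑ᵢⱼ q(i, j) q(j', i')` of
`𝔰𝔬ₙ = span {q(i, j)}`, where `q(i, j) = D_H(xᵢxⱼ)`. -/
def casimir : E n →ₗ[ℂ] E n :=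
  ∑ i, ∑ j, sbL n (quadHam n i j) ∘ₗ sbL n (quadHam n (cidx n j) (cidx n i))

variable {n}

lemma sum_sbL_quadHam_eq_zero (B : E n →ₗ[ℂ] E n →ₗ[ℂ] E n) (k l : Fin n) :
    ∑ i, ∑ j,
      (B (sbL n (quadHam n k l) (quadHam n i j)) (quadHam n (cidx n j) (cidx n i))
        + B (quadHam n i j) (sbL n (quadHam n k l) (quadHam n (cidx n j) (cidx n i)))) = 0 := by
  have ite_zero_apply (P : Prop) [Decidable P] (F : E n →ₗ[ℂ] E n) (x : E n) :
      (if P then F else 0) x = if P then F x else 0 := by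
    split_ifs <;> rfl
  have sum_ite_left (a : Fin n) (F : Fin n → Fin n → E n) :
      ∑ i, ∑ j, (if a = i then F i j else 0) = ∑ j, F a j := by
    rw [Finset.sum_comm]
    simp only [Finset.sum_ite_eq, Finset.mem_univ, if_true]
  have sum_ite_right (a : Fin n) (F : Fin n → Fin n → E n) :
      ∑ i, ∑ j, (if a = j then F i j else 0) = ∑ i, F i a := by
    simp only [Finset.sum_ite_eq, Finset.mem_univ, if_true]
  simp only [sbL_quadHam_quadHam, cidx_inj, map_add, map_sub, LinearMap.add_apply,
    LinearMap.sub_apply, Finset.sum_add_distrib, Finset.sum_sub_distrib,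
    apply_ite (fun A : E n => B A), apply_ite (B (quadHam _ _ _)), map_zero,
    ite_zero_apply, sum_ite_left, sum_ite_right, cidx_cidx]
  abel

lemma sum_mulGen_pd_mulGen_pd (f : Lambda n) :
    ∑ j, ∑ i, mulGen n j (pd n (cidx n i) (mulGen n (cidx n i) (pd n j f)))
      = (n : ℂ) • CC n f - CC n (CC n f) + CC n f := by
  have hinner (j : Fin n) :
      ∑ i, mulGen n j (pd n (cidx n i) (mulGen n (cidx n i) (pd n j f)))
        = (n : ℂ) • mulGen n j (pd n j f) - mulGen n j (pd n j (CC n f))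
          + mulGen n j (pd n j f) := by
    rw [sum_cidx fun i => mulGen n j (pd n i (mulGen n i (pd n j f))), ← map_sum]
    simp only [pd_mulGen_apply, if_true, Finset.sum_sub_distrib]
    rw [← CC_apply_eq_sum, CC_pd, Finset.sum_const, Finset.card_univ, Fintype.card_fin,
      ← Nat.cast_smul_eq_nsmul ℂ]
    simp only [map_sub, map_smul]
    abel
  simp only [hinner, Finset.sum_add_distrib, Finset.sum_sub_distrib, ← Finset.smul_sum,
    ← CC_apply_eq_sum]

lemma sum_mulGen_pd_cidx_mulGen_pd (f : Lambda n) :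
    ∑ j, ∑ i, mulGen n j (pd n (cidx n i) (mulGen n (cidx n j) (pd n i f))) = CC n f := by
  have hinner (j : Fin n) :
      ∑ i, mulGen n j (pd n (cidx n i) (mulGen n (cidx n j) (pd n i f)))
        = mulGen n j (pd n j f) := by
    simp only [pd_mulGen_apply, cidx_inj, map_sub, Finset.sum_sub_distrib, ← map_sum,
      sum_pd_cidx_pd, map_zero, sub_zero, Finset.sum_ite_eq', Finset.mem_univ, if_true]
  simp only [hinner, ← CC_apply_eq_sum]

lemma sum_quadHam_quadHam_apply (f : Lambda n) :
    ∑ i, ∑ j, quadHam n i j (quadHam n (cidx n j) (cidx n i) f)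
      = (2 : ℂ) • ((n : ℂ) • CC n f - CC n (CC n f)) := by
  have hdiag := sum_mulGen_pd_mulGen_pd f
  have hcross := sum_mulGen_pd_cidx_mulGen_pd f
  have hdiag' := hdiag
  have hcross' := hcross
  rw [Finset.sum_comm] at hdiag' hcross'
  simp only [quadHam_apply, cidx_cidx, map_sub, Finset.sum_sub_distrib, hdiag, hdiag', hcross,
    hcross']
  module

lemma casimir_apply (A : E n) : casimir n A =
    ∑ i, ∑ j, sbL n (quadHam n i j) (sbL n (quadHam n (cidx n j) (cidx n i)) A) := by
  simp only [casimir, LinearMap.sum_apply, LinearMap.comp_apply]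

lemma casimir_DHmap (f : Lambda n) :
    casimir n (DHmap n f) = DHmap n ((2 : ℂ) • ((n : ℂ) • CC n f - CC n (CC n f))) := by
  simp only [casimir_apply, sbL_quadHam_DHmap, ← map_sum, sum_quadHam_quadHam_apply]

lemma two_smul_CC_sub_CC_CC_apply (f : Lambda n) (S : Finset (Fin n)) :
    ((2 : ℂ) • ((n : ℂ) • CC n f - CC n (CC n f))) S = 2 * S.card * (n - S.card) * f S := by
  simp only [Pi.smul_apply, Pi.sub_apply, CC_apply, smul_eq_mul]
  ring

lemma eq_zero_of_casimir_eq_zero {A : E n} (hA : A ∈ Hn n) (h : casimir n A = 0) : A = 0 := by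
  obtain ⟨f, hf, rfl⟩ := exists_eq_DHmap_of_mem_Hn hA
  refine DHmap_eq_zero fun S hS => ?_
  by_cases hu : S = Finset.univ
  · rw [hu, hf]
  have hcoeff := apply_eq_zero_of_DHmap_eq_zero (casimir_DHmap f ▸ h) hS
  have hcard : (n : ℂ) - S.card ≠ 0 := fun h0 => hu <| by
    rw [← Finset.card_eq_iff_eq_univ, Fintype.card_fin]
    exact_mod_cast (sub_eq_zero.1 h0).symm
  rw [two_smul_CC_sub_CC_CC_apply] at hcoeff
  simpa [hcard, hS] using hcoeff

lemma sbL_quadHam_mem (hn : 2 < n) {p : ZMod 2} (i j : Fin n) {A : E n}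
    (hA : A ∈ Hn n ⊓ epar n p) : sbL n (quadHam n i j) A ∈ Hn n ⊓ epar n p :=
  ⟨isGradedSubalgebra_Hn.sbL_mem _ (quadHam_mem_Hn hn i j) _ hA.1,
    zero_add p ▸ sbL_mem_epar (quadHam_mem_epar i j) hA.2⟩

lemma casimir_mem (hn : 2 < n) {p : ZMod 2} {A : E n} (hA : A ∈ Hn n ⊓ epar n p) :
    casimir n A ∈ Hn n ⊓ epar n p := by
  rw [casimir_apply]
  exact Submodule.sum_mem _ fun i _ => Submodule.sum_mem _ fun j _ =>
    sbL_quadHam_mem hn _ _ (sbL_quadHam_mem hn _ _ hA)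

lemma exists_casimir_eq (hn : 2 < n) {p : ZMod 2} {u : E n} (hu : u ∈ Hn n ⊓ epar n p) :
    ∃ a ∈ Hn n ⊓ epar n p, casimir n a = u := by
  have hinj : Set.InjOn (casimir n) (Hn n ⊓ epar n p : Submodule ℂ (E n)) := fun x hx y hy hxy =>
    sub_eq_zero.1 <| eq_zero_of_casimir_eq_zero (Submodule.sub_mem _ hx.1 hy.1) <| by
      rw [map_sub, sub_eq_zero, hxy]
  exact (LinearMap.injOn_iff_surjOn fun _ => casimir_mem hn).1 hinj hu

lemma sbL_quadHam_sbL (k l i j : Fin n) (A : E n) :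
    sbL n (quadHam n k l) (sbL n (quadHam n i j) A) =
      sbL n (sbL n (quadHam n k l) (quadHam n i j)) A
        + sbL n (quadHam n i j) (sbL n (quadHam n k l) A) := by
  rw [jacobi (quadHam_mem_epar k l) (quadHam_mem_epar i j), zero_mul, sgn_zero, one_smul]

lemma sbL_quadHam_casimir (k l : Fin n) (A : E n) :
    sbL n (quadHam n k l) (casimir n A) = casimir n (sbL n (quadHam n k l) A) := by
  have hinv := sum_sbL_quadHam_eq_zero ((sbL n).compl₂ ((sbL n).flip A)) k l
  simp only [LinearMap.compl₂_apply, LinearMap.flip_apply] at hinv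
  rw [← sub_eq_zero, ← hinv]
  simp only [casimir_apply, map_sum, ← Finset.sum_sub_distrib]
  refine Finset.sum_congr rfl fun i _ => Finset.sum_congr rfl fun j _ => ?_
  simp only [sbL_quadHam_sbL k l, map_add]
  abel

/-- The vanishing of `H¹(𝔰𝔬ₙ, H(n))`: the invariance of the Casimir element turns
`u = ∑ᵢⱼ [q(i, j), D(q(j', i'))]` into a primitive of `D`, up to the Casimir operator. -/
lemma exists_add_sbL_quadHam_eq_zero (hn : 2 < n) {p : ZMod 2} {D : E n →ₗ[ℂ] E n}
    (hD : IsSuperDer n (Hn n) p D) :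
    ∃ a ∈ Hn n ⊓ epar n p, ∀ k l, (D + sbL n a) (quadHam n k l) = 0 := by
  have hmem (i j : Fin n) : D (quadHam n i j) ∈ Hn n ⊓ epar n p :=
    zero_add p ▸ hD.maps 0 _ ⟨quadHam_mem_Hn hn i j, quadHam_mem_epar i j⟩
  obtain ⟨a, ha, hau⟩ := exists_casimir_eq hn <| Submodule.sum_mem _ fun i (_ : i ∈ Finset.univ) =>
    Submodule.sum_mem _ fun j (_ : j ∈ Finset.univ) =>
      sbL_quadHam_mem hn i j (hmem (cidx n j) (cidx n i))
  refine ⟨a, ha, fun k l => ?_⟩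
  have hcas : sbL n (quadHam n k l) (casimir n a) = casimir n (D (quadHam n k l)) := by
    have hinv := sum_sbL_quadHam_eq_zero ((sbL n).compl₂ D) k l
    simp only [LinearMap.compl₂_apply] at hinv
    rw [hau, ← sub_eq_zero, ← hinv]
    simp only [casimir_apply, map_sum, ← Finset.sum_sub_distrib]
    refine Finset.sum_congr rfl fun i _ => Finset.sum_congr rfl fun j _ => ?_
    rw [sbL_quadHam_sbL, hD.apply_sbL isGradedSubalgebra_Hn.parConj_mem (quadHam_mem_Hn hn k l)
      (quadHam_mem_epar k l) (quadHam_mem_Hn hn _ _), mul_zero, sgn_zero, one_smul,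
      sbL_quadHam_skew (cidx n j), map_add, map_neg]
    abel
  have hzero : sbL n (quadHam n k l) a - D (quadHam n k l) = 0 :=
    eq_zero_of_casimir_eq_zero
      (Submodule.sub_mem _ (sbL_quadHam_mem hn k l ha).1 (hmem k l).1)
      (by rw [map_sub, ← sbL_quadHam_casimir, hcas, sub_self])
  rw [LinearMap.add_apply, sbL_quadHam_skew, sub_eq_zero.1 hzero, add_neg_cancel]

end

/-! ### `𝔰𝔬ₙ`-equivariant superderivations of `H(n)` -/

section

/-- A superderivation of `H(n)` which vanishes on `𝔰𝔬ₙ = span {D_H(xᵢxⱼ)}`, hence commutes with the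
adjoint action of `𝔰𝔬ₙ`. -/
structure IsEquivariantDer (p : ZMod 2) (D : E n →ₗ[ℂ] E n) : Prop
    extends IsSuperDer n (Hn n) p D where
  quadHam_eq_zero : ∀ k l, D (quadHam n k l) = 0

variable {n} {p : ZMod 2} {D : E n →ₗ[ℂ] E n}

lemma IsEquivariantDer.apply_sbL_quadHam (hD : IsEquivariantDer n p D) (hn : 2 < n) (k l : Fin n)
    {x : E n} (hx : x ∈ Hn n) :
    D (sbL n (quadHam n k l) x) = sbL n (quadHam n k l) (D x) := by
  rw [hD.apply_sbL isGradedSubalgebra_Hn.parConj_mem (quadHam_mem_Hn hn k l)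
    (quadHam_mem_epar k l) hx, hD.quadHam_eq_zero, map_zero, LinearMap.zero_apply, zero_add,
    mul_zero, sgn_zero, one_smul]

lemma IsEquivariantDer.apply_casimir (hD : IsEquivariantDer n p D) (hn : 2 < n) {x : E n}
    (hx : x ∈ Hn n) : D (casimir n x) = casimir n (D x) := by
  have hmem (i j : Fin n) : sbL n (quadHam n i j) x ∈ Hn n :=
    isGradedSubalgebra_Hn.sbL_mem _ (quadHam_mem_Hn hn i j) _ hx
  simp only [casimir_apply, map_sum, hD.apply_sbL_quadHam hn _ _ (hmem _ _),
    hD.apply_sbL_quadHam hn _ _ hx]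

lemma IsEquivariantDer.card_eq_or_card_add_eq (hD : IsEquivariantDer n p D) (hn : 2 < n)
    {S : Finset (Fin n)} (hS : S ≠ Finset.univ) {g : Lambda n}
    (hg : D (DHmap n (mono n S)) = DHmap n g) {U : Finset (Fin n)} (hU : U ≠ ∅) (hgU : g U ≠ 0) :
    U.card = S.card ∨ U.card + S.card = n := by
  have hcas := hD.apply_casimir hn (DHmap_mono_mem_Hn hS)
  have hmono : (2 : ℂ) • ((n : ℂ) • CC n (mono n S) - CC n (CC n (mono n S)))
      = (2 * S.card * (n - S.card) : ℂ) • mono n S := by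
    rw [CC_mono, map_smul, CC_mono]
    module
  rw [hg, casimir_DHmap, casimir_DHmap, hmono, map_smul, map_smul, hg, ← map_smul, ← sub_eq_zero,
    ← map_sub] at hcas
  have hcoeff := apply_eq_zero_of_DHmap_eq_zero hcas hU
  rw [Pi.sub_apply, two_smul_CC_sub_CC_CC_apply, Pi.smul_apply, smul_eq_mul] at hcoeff
  have hprod : ((U.card : ℂ) - S.card) * ((U.card : ℂ) + S.card - n) = 0 :=
    mul_right_cancel₀ hgU (by linear_combination hcoeff / 2)
  exact (mul_eq_zero.1 hprod).imp (fun h => by exact_mod_cast sub_eq_zero.1 h)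
    (fun h => by exact_mod_cast sub_eq_zero.1 h)

lemma mulGen_pd_apply (i : Fin n) (f : Lambda n) (U : Finset (Fin n)) :
    mulGen n i (pd n i f) U = if i ∈ U then f U else 0 := by
  rw [mulGen_apply]
  split_ifs with h
  · rw [pd_apply, if_neg (Finset.notMem_erase i U), Finset.insert_erase h, ← mul_assoc,
      koszulSign_erase_self, koszulSign_mul_self, one_mul]
  · rfl

lemma singleton_ne_univ (hn : 1 < n) (i : Fin n) : ({i} : Finset (Fin n)) ≠ Finset.univ := by
  intro h
  have hcard := congrArg Finset.card h
  rw [Finset.card_singleton, Finset.card_fin] at hcard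
  omega

lemma DHmap_gen_mem_Hn (hn : 1 < n) (i : Fin n) : DHmap n (gen i) ∈ Hn n :=
  DHmap_mono_mem_Hn (singleton_ne_univ hn i)

lemma card_univ_erase (i : Fin n) : (Finset.univ.erase i).card = n - 1 := by
  rw [Finset.card_erase_of_mem (Finset.mem_univ _), Finset.card_fin]

lemma eq_univ_erase_of_notMem {S : Finset (Fin n)} {i : Fin n} (hi : i ∉ S) (hS : n - 1 ≤ S.card) :
    S = Finset.univ.erase i :=
  Finset.eq_of_subset_of_card_le
    (fun _ hx => Finset.mem_erase.2 ⟨fun h => hi (h ▸ hx), Finset.mem_univ _⟩)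
    (by rwa [card_univ_erase])

/-- `x_j` has weight `-1` under `D_H(x_j x_{j'})`, which acts on monomials diagonally. -/
lemma IsEquivariantDer.mem_and_cidx_notMem (hD : IsEquivariantDer n p D) (hn : 2 < n) {j : Fin n}
    (hj : cidx n j ≠ j) {g : Lambda n} (hg : D (DHmap n (gen j)) = DHmap n g)
    {U : Finset (Fin n)} (hU : U ≠ ∅) (hgU : g U ≠ 0) : j ∈ U ∧ cidx n j ∉ U := by
  have hweight := hD.apply_sbL_quadHam hn j (cidx n j) (DHmap_gen_mem_Hn (by omega) j)
  rw [sbL_quadHam_DHmap, hg, sbL_quadHam_DHmap, quadHam_gen, if_neg hj, cidx_cidx, if_pos rfl,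
    zero_sub, map_neg, map_neg, hg, ← sub_eq_zero, ← map_neg, ← map_sub] at hweight
  have hcoeff := apply_eq_zero_of_DHmap_eq_zero hweight hU
  rw [Pi.sub_apply, Pi.neg_apply, quadHam_apply, cidx_cidx, Pi.sub_apply, mulGen_pd_apply,
    mulGen_pd_apply] at hcoeff
  by_cases hjU : j ∈ U <;> by_cases hjU' : cidx n j ∈ U
  · rw [if_pos hjU, if_pos hjU'] at hcoeff
    exact absurd (by linear_combination -hcoeff) hgU
  · exact ⟨hjU, hjU'⟩
  · rw [if_neg hjU, if_pos hjU'] at hcoeff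
    exact absurd (by linear_combination -hcoeff / 2) hgU
  · rw [if_neg hjU, if_neg hjU'] at hcoeff
    exact absurd (by linear_combination -hcoeff) hgU

lemma DHmap_eq_of_support {S T : Finset (Fin n)} (hST : S ≠ T) {g : Lambda n}
    (hg : ∀ U, U ≠ ∅ → g U ≠ 0 → U = S ∨ U = T) :
    DHmap n g = g S • DHmap n (mono n S) + g T • DHmap n (mono n T) := by
  rw [← sub_eq_zero, ← map_smul, ← map_smul, ← map_add, ← map_sub]
  refine DHmap_eq_zero fun U hU => ?_
  rw [Pi.sub_apply, Pi.add_apply, Pi.smul_apply, Pi.smul_apply, mono_apply, mono_apply]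
  by_cases hgU : g U = 0
  · split_ifs with h h' h' <;> simp_all
  · rcases hg U hU hgU with rfl | rfl
    · simp [hST]
    · simp [hST.symm]

lemma IsEquivariantDer.exists_apply_DHmap_gen (hD : IsEquivariantDer n p D) (hn : 2 < n)
    {j : Fin n} (hj : cidx n j ≠ j) : ∃ c d : ℂ, D (DHmap n (gen j))
      = c • DHmap n (gen j) + d • DHmap n (mono n (Finset.univ.erase (cidx n j))) := by
  have hjH := DHmap_gen_mem_Hn (by omega) j
  obtain ⟨g, -, hg⟩ := exists_eq_DHmap_of_mem_Hn
    (hD.apply_mem isGradedSubalgebra_Hn.parConj_mem hjH)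
  have hne : ({j} : Finset (Fin n)) ≠ Finset.univ.erase (cidx n j) := by
    intro h
    have hcard := congrArg Finset.card h
    rw [Finset.card_singleton, card_univ_erase] at hcard
    omega
  refine ⟨_, _, hg.trans (DHmap_eq_of_support hne fun U hU hgU => ?_)⟩
  obtain ⟨hjU, hjU'⟩ := hD.mem_and_cidx_notMem hn hj hg hU hgU
  refine (hD.card_eq_or_card_add_eq hn (singleton_ne_univ (by omega) j) hg hU hgU).imp
    (fun hcard => ?_) (fun hcard => ?_)
  · exact (Finset.eq_of_subset_of_card_le (Finset.singleton_subset_iff.2 hjU) hcard.le).symm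
  · rw [Finset.card_singleton] at hcard
    exact eq_univ_erase_of_notMem hjU' (by omega)

lemma CC_quadratic (i j : Fin n) : CC n (mulGen n i (gen j)) = (2 : ℂ) • mulGen n i (gen j) := by
  by_cases h : i = j
  · rw [h, mulGen_mono_of_mem _ _ (Finset.mem_singleton_self j), map_zero, smul_zero]
  · have hmem : i ∉ ({j} : Finset (Fin n)) := mt Finset.mem_singleton.1 h
    rw [mulGen_mono_of_notMem _ _ hmem, map_smul, CC_mono, Finset.card_insert_of_notMem hmem,
      Finset.card_singleton, smul_comm]
    norm_num

lemma sbL_CC_quadHam (i j : Fin n) : sbL n (CC n) (quadHam n i j) = 0 := by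
  rw [quadHam, sbL_CC_DHmap, CC_quadratic, sub_self, map_zero]

lemma quadHam_omegaTop (i j : Fin n) : quadHam n i j (omegaTop n) = 0 := by
  have hself (a : Fin n) : mulGen n a (pd n a (omegaTop n)) = omegaTop n := by
    funext U
    rw [mulGen_pd_apply, omegaTop, mono_apply]
    split_ifs with ha hU hU <;> simp_all
  have hne {a b : Fin n} (h : a ≠ b) : mulGen n a (pd n b (omegaTop n)) = 0 := by
    rw [omegaTop, pd_mono_of_mem _ _ (Finset.mem_univ _), map_smul,
      mulGen_mono_of_mem _ _ (Finset.mem_erase.2 ⟨h, Finset.mem_univ a⟩), smul_zero]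
  rw [quadHam_apply]
  by_cases h : j = cidx n i
  · rw [h, cidx_cidx, hself, hself, sub_self]
  · rw [hne h, hne fun h' => h (cidx_eq_comm.1 h'.symm), sub_self]

lemma sbL_DHmap_omegaTop_quadHam (i j : Fin n) :
    sbL n (DHmap n (omegaTop n)) (quadHam n i j) = 0 := by
  rw [sbL_quadHam_skew, sbL_quadHam_DHmap, quadHam_omegaTop, map_zero, neg_zero]

lemma sbL_CC_DHmap_gen (j : Fin n) : sbL n (CC n) (DHmap n (gen j)) = -DHmap n (gen j) := by
  rw [sbL_CC_DHmap, CC_mono, Finset.card_singleton, ← map_neg]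
  congr 1
  module

lemma exists_sbL_DHmap_omegaTop_gen (j : Fin n) : ∃ s : ℂ, s ≠ 0 ∧
    sbL n (DHmap n (omegaTop n)) (DHmap n (gen j))
      = s • DHmap n (mono n (Finset.univ.erase (cidx n j))) := by
  refine ⟨_, mul_ne_zero (msign_ne_zero n) (koszulSign_ne_zero (cidx n j) Finset.univ), ?_⟩
  rw [sbL_DHmap, DHmap_apply_gen, omegaTop, par_mono, map_smul, Finset.card_fin,
    pd_mono_of_mem _ _ (Finset.mem_univ _), smul_smul, map_smul]

lemma IsEquivariantDer.exists_add_sbL_DHmap_gen_eq_zero (hD : IsEquivariantDer n p D)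
    (hn : 2 < n) {j : Fin n} (hj : cidx n j ≠ j) :
    ∃ b ∈ HtN n ⊔ Submodule.span ℂ {CC n}, b ∈ epar n p ∧ IsEquivariantDer n p (D + sbL n b) ∧
      (D + sbL n b) (DHmap n (gen j)) = 0 := by
  obtain ⟨c, d, hcd⟩ := hD.exists_apply_DHmap_gen hn hj
  obtain ⟨s, hs0, hs⟩ := exists_sbL_DHmap_omegaTop_gen j
  set b : E n := c • CC n + (-d / s) • DHmap n (omegaTop n) with hb
  have hbmem : b ∈ HtN n ⊔ Submodule.span ℂ {CC n} :=
    Submodule.add_mem _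
      (Submodule.smul_mem _ _ (Submodule.mem_sup_right (Submodule.mem_span_singleton_self _)))
      (Submodule.smul_mem _ _ (Submodule.mem_sup_left ⟨_, rfl⟩))
  have hquad (k l : Fin n) : sbL n b (quadHam n k l) = 0 := by
    simp only [hb, map_add, map_smul, LinearMap.add_apply, LinearMap.smul_apply, sbL_CC_quadHam,
      sbL_DHmap_omegaTop_quadHam, smul_zero, add_zero]
  have hgen : sbL n b (DHmap n (gen j)) = -D (DHmap n (gen j)) := by
    simp only [hb, map_add, map_smul, LinearMap.add_apply, LinearMap.smul_apply, sbL_CC_DHmap_gen,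
      hs, smul_smul, div_mul_cancel₀ _ hs0, hcd]
    module
  have hpmem := parityProj_mem (fun _ => parConj_mem_HtN_sup_span_CC) p hbmem
  have hDmem : D (DHmap n (gen j)) ∈ epar n (p + 1) :=
    add_comm 1 p ▸ (hD.maps 1 _ ⟨DHmap_gen_mem_Hn (by omega) j, DHmap_gen_mem_epar j⟩).2
  refine ⟨parityProj n p b, hpmem, parityProj_mem_epar p b,
    ⟨hD.add (isSuperDer_sbL (parityProj_mem_epar p b) fun _ => sbL_mem_Hn hpmem),
      fun k l => ?_⟩, ?_⟩
  · rw [LinearMap.add_apply, hD.quadHam_eq_zero, sbL_parityProj _ _ (quadHam_mem_epar k l), hquad,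
      map_zero, add_zero]
  · rw [LinearMap.add_apply, sbL_parityProj _ _ (DHmap_gen_mem_epar j), hgen, map_neg,
      parityProj_of_mem_epar hDmem, add_neg_cancel]

lemma IsEquivariantDer.apply_DHmap_quadHam (hD : IsEquivariantDer n p D) (hn : 2 < n)
    {k : Fin n} (hk : D (DHmap n (gen k)) = 0) (a b : Fin n) :
    D (DHmap n (quadHam n a b (gen k))) = 0 := by
  rw [← sbL_quadHam_DHmap, hD.apply_sbL_quadHam hn a b (DHmap_gen_mem_Hn (by omega) k), hk,
    map_zero]

/-- The vectors `x_i` span an irreducible `𝔰𝔬ₙ`-module. -/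
lemma IsEquivariantDer.apply_DHmap_gen_eq_zero (hD : IsEquivariantDer n p D) (hn : 2 < n)
    {j : Fin n} (hj : D (DHmap n (gen j)) = 0) (i : Fin n) : D (DHmap n (gen i)) = 0 := by
  have hne {i : Fin n} (hi : i ≠ cidx n j) : D (DHmap n (gen i)) = 0 := by
    have h := hD.apply_DHmap_quadHam hn hj (cidx n j) i
    rwa [quadHam_gen, cidx_cidx, if_pos rfl, if_neg fun h => hi (cidx_eq_comm.1 h), sub_zero] at h
  rcases ne_or_eq i (cidx n j) with hi | rfl
  · exact hne hi
  obtain ⟨m, hm⟩ : ∃ m, m ∉ ({j, cidx n j} : Finset (Fin n)) := by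
    by_contra! h
    have hcard := Finset.card_le_card (Finset.eq_univ_iff_forall.2 h).ge
    rw [Finset.card_fin] at hcard
    exact absurd (hcard.trans Finset.card_le_two) (by omega)
  rw [Finset.mem_insert, Finset.mem_singleton, not_or] at hm
  have h := hD.apply_DHmap_quadHam hn (hne hm.2) (cidx n m) (cidx n j)
  rwa [quadHam_gen, cidx_cidx, if_pos rfl, cidx_cidx, if_neg (Ne.symm hm.1), sub_zero] at h

lemma apply_eq_zero_of_DHmap_pd_eq_zero {g : Lambda n} (hg : ∀ s, DHmap n (pd n s g) = 0)
    {U : Finset (Fin n)} (hU : 2 ≤ U.card) : g U = 0 := by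
  obtain ⟨s, hs⟩ := Finset.card_pos.1 (by omega : 0 < U.card)
  have hne : U.erase s ≠ ∅ := by
    rw [← Finset.nonempty_iff_ne_empty, ← Finset.card_pos, Finset.card_erase_of_mem hs]
    omega
  have hcoeff := apply_eq_zero_of_DHmap_eq_zero (hg s) hne
  rw [pd_apply, if_neg (Finset.notMem_erase s U), Finset.insert_erase hs] at hcoeff
  exact (mul_eq_zero.1 hcoeff).resolve_left (koszulSign_ne_zero _ _)

lemma IsSuperDer.sbL_apply_eq_zero {L : Submodule ℂ (E n)} (hD : IsSuperDer n L p D)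
    (hL : ∀ A ∈ L, parConj n A ∈ L) {α : ZMod 2} {x y : E n} (hx : x ∈ L) (hα : x ∈ epar n α)
    (hy : y ∈ L) (hDx : D x = 0) (hDxy : D (sbL n x y) = 0) : sbL n x (D y) = 0 := by
  have h := hD.apply_sbL hL hx hα hy
  rw [hDxy, hDx, map_zero, LinearMap.zero_apply, zero_add] at h
  have h' := congrArg (sgn (p * α) • ·) h
  simpa only [smul_smul, sgn_mul_self, one_smul, smul_zero] using h'.symm

lemma sbL_DHmap_gen_cidx (s : Fin n) (f : Lambda n) :
    sbL n (DHmap n (gen (cidx n s))) (DHmap n f) = -DHmap n (pd n s f) := by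
  rw [sbL_DHmap, DHmap_gen, cidx_cidx, LinearMap.neg_apply, map_neg]

/-- Bracketing with `D_H(x_{s'})` differentiates Hamiltonians up to sign, so every `D_H(∂ₛg)`
vanishes. -/
lemma IsSuperDer.apply_eq_zero_of_two_le_card (hD : IsSuperDer n (Hn n) p D) (hn : 1 < n)
    (hgen : ∀ i, D (DHmap n (gen i)) = 0) {f g : Lambda n} (hf : DHmap n f ∈ Hn n)
    (hpd : ∀ s, D (DHmap n (pd n s f)) = 0) (hg : D (DHmap n f) = DHmap n g)
    {U : Finset (Fin n)} (hU : 2 ≤ U.card) : g U = 0 := by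
  refine apply_eq_zero_of_DHmap_pd_eq_zero (fun s => ?_) hU
  have h := hD.sbL_apply_eq_zero isGradedSubalgebra_Hn.parConj_mem (DHmap_gen_mem_Hn hn (cidx n s))
    (DHmap_gen_mem_epar _) hf (hgen _) (by rw [sbL_DHmap_gen_cidx, map_neg, hpd, neg_zero])
  rwa [hg, sbL_DHmap_gen_cidx, neg_eq_zero] at h

lemma DHmap_mono_empty : DHmap n (mono n ∅) = 0 :=
  DHmap_eq_zero fun _ hS => if_neg hS

lemma apply_DHmap_pd_mono_eq_zero {S : Finset (Fin n)}
    (h : ∀ s ∈ S, D (DHmap n (mono n (S.erase s))) = 0) (s : Fin n) :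
    D (DHmap n (pd n s (mono n S))) = 0 := by
  by_cases hs : s ∈ S
  · rw [pd_mono_of_mem _ _ hs, map_smul, map_smul, h s hs, smul_zero]
  · rw [pd_mono_of_notMem _ _ hs, map_zero, map_zero]

lemma ne_univ_of_card_lt {S : Finset (Fin n)} (h : S.card < n) : S ≠ Finset.univ := by
  rintro rfl
  rw [Finset.card_fin] at h
  exact lt_irrefl _ h

lemma IsEquivariantDer.apply_DHmap_mono_eq_zero_of_lt (hD : IsEquivariantDer n p D) (hn : 2 < n)
    (hgen : ∀ i, D (DHmap n (gen i)) = 0) (S : Finset (Fin n)) (hS : S.card < n - 1) :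
    D (DHmap n (mono n S)) = 0 := by
  induction S using Finset.strongInduction with
  | H S ih =>
    rcases Nat.lt_or_ge S.card 2 with hlt | hge
    · interval_cases hcard : S.card
      · rw [Finset.card_eq_zero.1 hcard, DHmap_mono_empty, map_zero]
      · obtain ⟨i, rfl⟩ := Finset.card_eq_one.1 hcard
        exact hgen i
    have hSu : S ≠ Finset.univ := ne_univ_of_card_lt (by omega)
    obtain ⟨g, -, hg⟩ := exists_eq_DHmap_of_mem_Hn
      (hD.apply_mem isGradedSubalgebra_Hn.parConj_mem (DHmap_mono_mem_Hn hSu))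
    have hpd := apply_DHmap_pd_mono_eq_zero fun s hs => ih _ (Finset.erase_ssubset hs)
      ((Finset.card_erase_le).trans_lt hS)
    rw [hg]
    refine DHmap_eq_zero fun U hU => ?_
    by_contra hgU
    have hlt : U.card < 2 := lt_of_not_ge fun h => hgU <|
      hD.apply_eq_zero_of_two_le_card (by omega) hgen (DHmap_mono_mem_Hn hSu) hpd hg h
    have hpos := Finset.card_pos.2 (Finset.nonempty_iff_ne_empty.2 hU)
    rcases hD.card_eq_or_card_add_eq hn hSu hg hU hgU with h | h <;> omega

lemma DHmap_mono_apply_mono_eq_zero {S T : Finset (Fin n)} (h : T.card + S.card = n + 2) :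
    DHmap n (mono n T) (mono n S) = 0 := by
  have heuler : CC n (DHmap n (mono n T) (mono n S)) = (n : ℂ) • DHmap n (mono n T) (mono n S) := by
    have hbr := congrArg (fun A : E n => A (mono n S)) (sbL_CC_DHmap (mono n T))
    rw [sbL_even_left CC_mem_epar] at hbr
    simp only [LinearMap.sub_apply, Module.End.mul_apply, CC_mono, map_sub, map_smul,
      LinearMap.smul_apply, sub_eq_iff_eq_add] at hbr
    have hcard : (T.card : ℂ) + S.card = n + 2 := by exact_mod_cast h
    rw [hbr, ← sub_smul, ← add_smul]
    congr 1
    linear_combination hcard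
  funext U
  by_cases hU : U = Finset.univ
  · rw [hU, DHmap_apply_univ, Pi.zero_apply]
  · have hcoeff := congrFun heuler U
    rw [CC_apply, Pi.smul_apply, smul_eq_mul] at hcoeff
    refine (mul_eq_mul_right_iff.1 hcoeff).resolve_left fun hcard => hU ?_
    rw [← Finset.card_eq_iff_eq_univ, Fintype.card_fin]
    exact_mod_cast hcard

lemma pd_eq_smul_of_two_le_card {g : Lambda n} (hg : ∀ U : Finset (Fin n), 2 ≤ U.card → g U = 0)
    (i : Fin n) : pd n i g = g {i} • mono n ∅ := by
  funext U
  rw [pd_apply, Pi.smul_apply, mono_apply]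
  rcases U.eq_empty_or_nonempty with rfl | hU
  · simp [koszulSign, msign]
  · rw [if_neg hU.ne_empty, smul_zero]
    split_ifs with hi
    · rfl
    · rw [hg _ (by rw [Finset.card_insert_of_notMem hi]; have := hU.card_pos; omega), mul_zero]

lemma apply_singleton_eq_zero_of_DHmap {g : Lambda n} (hn : 2 < n)
    (hg : ∀ U : Finset (Fin n), 2 ≤ U.card → g U = 0)
    (hcubic : ∀ T : Finset (Fin n), T.card = 3 → DHmap n (DHmap n (mono n T) g) = 0)
    (a : Fin n) : g {a} = 0 := by
  obtain ⟨V, hV, hcard⟩ := Finset.exists_subset_card_eq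
    (s := Finset.univ.erase (cidx n a)) (n := 2) (by rw [card_univ_erase]; omega)
  have haV : cidx n a ∉ V := fun h => Finset.notMem_erase _ _ (hV h)
  have hVne : V ≠ ∅ := by rintro rfl; simp at hcard
  have hT : (insert (cidx n a) V).card = 3 := by rw [Finset.card_insert_of_notMem haV, hcard]
  have hcoeff := apply_eq_zero_of_DHmap_eq_zero (hcubic _ hT) hVne
  rw [DHmap_apply, Finset.sum_apply, Finset.sum_eq_single (cidx n a)] at hcoeff
  · rw [cidx_cidx, pd_eq_smul_of_two_le_card hg, map_smul, mulOp_apply_mono_empty, Pi.smul_apply,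
      par_mono, map_smul, Pi.smul_apply, pd_mono_of_mem _ _ (Finset.mem_insert_self _ _),
      Finset.erase_insert haV, Pi.smul_apply, mono_apply, if_pos rfl] at hcoeff
    simpa [msign_ne_zero, koszulSign_ne_zero] using hcoeff
  · intro i _ hi
    rw [pd_eq_smul_of_two_le_card hg, map_smul, mulOp_apply_mono_empty, Pi.smul_apply, pd_apply,
      par_mono, Pi.smul_apply, mono_apply]
    split_ifs with hiV h
    · rw [smul_zero]
    · have : i ∈ insert (cidx n a) V := h ▸ Finset.mem_insert_self i V
      exact absurd ((Finset.mem_insert.1 this).resolve_right hiV) hi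
    · rw [smul_zero, mul_zero, smul_zero]
  · exact fun h => absurd (Finset.mem_univ _) h

lemma IsEquivariantDer.apply_DHmap_mono_eq_zero (hD : IsEquivariantDer n p D) (hn : 4 < n)
    (hgen : ∀ i, D (DHmap n (gen i)) = 0) {S : Finset (Fin n)} (hS : S ≠ Finset.univ) :
    D (DHmap n (mono n S)) = 0 := by
  have hlow := hD.apply_DHmap_mono_eq_zero_of_lt (by omega) hgen
  have hSlt : S.card < n := by
    simpa using Finset.card_lt_card (Finset.ssubset_univ_iff.2 hS)
  by_cases hlt : S.card < n - 1
  · exact hlow S hlt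
  obtain ⟨g, -, hg⟩ := exists_eq_DHmap_of_mem_Hn
    (hD.apply_mem isGradedSubalgebra_Hn.parConj_mem (DHmap_mono_mem_Hn hS))
  have hpd := apply_DHmap_pd_mono_eq_zero (D := D) fun s (hs : s ∈ S) => hlow (S.erase s)
    (by rw [Finset.card_erase_of_mem hs]; omega)
  have hg2 (U : Finset (Fin n)) : 2 ≤ U.card → g U = 0 :=
    hD.apply_eq_zero_of_two_le_card (by omega) hgen (DHmap_mono_mem_Hn hS) hpd hg
  have hcubic (T : Finset (Fin n)) (hT : T.card = 3) : DHmap n (DHmap n (mono n T) g) = 0 := by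
    rw [← sbL_DHmap, ← hg]
    refine hD.sbL_apply_eq_zero isGradedSubalgebra_Hn.parConj_mem
      (DHmap_mono_mem_Hn (ne_univ_of_card_lt (by omega))) (DHmap_mem_epar (mono_mem_lpar T))
      (DHmap_mono_mem_Hn hS) (hlow T (by omega)) ?_
    rw [sbL_DHmap, DHmap_mono_apply_mono_eq_zero (by omega), map_zero, map_zero]
  rw [hg]
  refine DHmap_eq_zero fun U hU => ?_
  rcases Nat.lt_or_ge U.card 2 with hlt | hge
  · obtain ⟨a, rfl⟩ := Finset.card_eq_one.1
      (le_antisymm (by omega) (Finset.card_pos.2 (Finset.nonempty_iff_ne_empty.2 hU)))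
    exact apply_singleton_eq_zero_of_DHmap (by omega) hg2 hcubic a
  · exact hg2 U hge

lemma IsEquivariantDer.eq_zero_on_Hn (hD : IsEquivariantDer n p D) (hn : 4 < n)
    (hgen : ∀ i, D (DHmap n (gen i)) = 0) {x : E n} (hx : x ∈ Hn n) : D x = 0 := by
  obtain ⟨f, hf, rfl⟩ := exists_eq_DHmap_of_mem_Hn hx
  rw [eq_sum_smul_mono f, map_sum, map_sum]
  refine Finset.sum_eq_zero fun S _ => ?_
  rw [map_smul, map_smul]
  by_cases hS : S = Finset.univ
  · rw [hS, hf, zero_smul]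
  · rw [hD.apply_DHmap_mono_eq_zero hn hgen hS, smul_zero]

lemma exists_cidx_ne (hn : 1 < n) : ∃ j : Fin n, cidx n j ≠ j := by
  refine ⟨⟨0, by omega⟩, fun h => ?_⟩
  have hval := congrArg Fin.val h
  simp only [cidx] at hval
  split_ifs at hval <;> omega

theorem IsSuperDer.exists_eq_sbL_Hn (hn : 4 < n) (hD : IsSuperDer n (Hn n) p D) :
    ∃ a ∈ HtN n ⊔ Submodule.span ℂ {CC n}, ∀ x ∈ Hn n, D x = sbL n a x := by
  obtain ⟨a, ha, hquad⟩ := exists_add_sbL_quadHam_eq_zero (by omega) hD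
  have hDa : IsEquivariantDer n p (D + sbL n a) :=
    ⟨hD.add (isSuperDer_sbL ha.2 (isGradedSubalgebra_Hn.sbL_mem a ha.1)), hquad⟩
  obtain ⟨j, hj⟩ := exists_cidx_ne (by omega : 1 < n)
  obtain ⟨b, hb, -, hDb, hbj⟩ := hDa.exists_add_sbL_DHmap_gen_eq_zero (by omega) hj
  refine ⟨-(a + b), Submodule.neg_mem _ (Submodule.add_mem _ (Hn_le_HtN_sup_span_CC ha.1) hb),
    fun x hx => ?_⟩
  have hzero := hDb.eq_zero_on_Hn hn (hDb.apply_DHmap_gen_eq_zero (by omega) hbj) hx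
  rw [LinearMap.add_apply, LinearMap.add_apply, add_assoc] at hzero
  rw [map_neg, map_add, LinearMap.neg_apply, LinearMap.add_apply]
  exact eq_neg_of_add_eq_zero_left hzero

lemma sbL_mem_algebra {t : CT} (ht : t.valid n) {a x : E n} (ha : a ∈ t.prime n)
    (hx : x ∈ t.algebra n) : sbL n a x ∈ t.algebra n := by
  cases t with
  | W => exact sbL_mem_Wn ha hx
  | S =>
    obtain ⟨b, hb, _, hc, rfl⟩ := Submodule.mem_sup.1 ha
    obtain ⟨r, rfl⟩ := Submodule.mem_span_singleton.1 hc
    have hS : IsGradedSubalgebra n (Sn n) := by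
      rw [Sn_eq_deformedSpecial]
      exact isGradedSubalgebra_deformedSpecial (Or.inl rfl)
    rw [map_add, map_smul, LinearMap.add_apply, LinearMap.smul_apply]
    exact Submodule.add_mem _ (hS.sbL_mem _ hb _ hx) (Submodule.smul_mem _ _ (sbL_CC_mem_Sn hx))
  | St =>
    have : Nonempty (Fin n) := ⟨⟨0, by have := ht.1; omega⟩⟩
    have hSt : IsGradedSubalgebra n (Stn n) := by
      rw [Stn_eq_deformedSpecial]
      exact isGradedSubalgebra_deformedSpecial (Or.inr ht.2)
    exact hSt.sbL_mem _ ha _ hx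
  | H => exact sbL_mem_Hn ha hx

lemma CT.valid.four_le {t : CT} (ht : t.valid n) : 4 ≤ n := by
  cases t with
  | W | S => exact ht
  | St => exact ht.1
  | H => exact le_of_lt ht

lemma IsSuperDer.exists_eq_sbL_prime {t : CT} (ht : t.valid n)
    (hD : IsSuperDer n (t.algebra n) p D) :
    ∃ a ∈ t.prime n, ∀ x ∈ t.algebra n, D x = sbL n a x := by
  have : Nontrivial (Fin n) := Fin.nontrivial_iff_two_le.2 (by have := ht.four_le; omega)
  cases t with
  | W => exact IsSuperDer.exists_eq_sbL_Wn hD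
  | S => exact IsSuperDer.exists_eq_sbL_Sn hD
  | St => exact IsSuperDer.exists_eq_sbL_Stn ht.2 hD
  | H => exact IsSuperDer.exists_eq_sbL_Hn ht hD

end

/-- For a Cartan type Lie superalgebra `L` over `ℂ`,
`Der L = ad L'`: every homogeneous superderivation of `L` is given by the adjoint action
of an element of the extended algebra `L'`, and conversely `ad a` for `a ∈ L'`
(homogeneous) is a superderivation of `L`. -/
theorem der_eq_ad_prime (n : ℕ) (t : CT) (ht : t.valid n) :
    (∀ (p : ZMod 2) (D : E n →ₗ[ℂ] E n), IsSuperDer n (t.algebra n) p D →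
      ∃ a ∈ t.prime n, ∀ x ∈ t.algebra n, D x = sbL n a x) ∧
    (∀ a ∈ t.prime n, ∀ p : ZMod 2, a ∈ epar n p →
      IsSuperDer n (t.algebra n) p (sbL n a)) :=
  ⟨fun _ _ hD => hD.exists_eq_sbL_prime ht,
    fun _ ha _ hp => isSuperDer_sbL hp fun _ hx => sbL_mem_algebra ht ha hx⟩

end CartanSuper
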